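/- For every integer d ≥ 1 there exists a constant C_d > 0, depending only on d, such that for every integer n ≥ 256, every degree-d polynomial threshold function f : {-1,1}^n → {-1,1}, and every integer m with 16 ≤ m ≤ n, one has P_x[s_f(x) ≥ m] ≤ C_d · (log(e·n))^{C_d} / √m, where x is uniform on {-1,1}^n. -/

import Mathlib

open Finset
open scoped Classical

/-- The embedding of `Bool` into `{-1, 1} ⊆ ℝ`. -/
noncomputable def chi (b : Bool) : ℝ := if b then 1 else -1

/-- Flip the `i`-th coordinate of a point of the Boolean cube. -/
def flipAt {n : ℕ} (x : Fin n → Bool) (i : Fin n) : Fin n → Bool :=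
  Function.update x i (!x i)

/-- The sensitivity of `f` at `x`: the number of coordinates whose flip changes `f`. -/
noncomputable def sens {n : ℕ} (f : (Fin n → Bool) → ℝ) (x : Fin n → Bool) : ℕ :=
  (Finset.univ.filter (fun i => f (flipAt x i) ≠ f x)).card

/-- The Boolean surface area `BSA[f] = E_x √(s_f(x))`, `x` uniform on the cube. -/
noncomputable def BSA {n : ℕ} (f : (Fin n → Bool) → ℝ) : ℝ :=
  (∑ x : Fin n → Bool, Real.sqrt (sens f x)) / 2 ^ n

/-- Evaluation of a polynomial at a point of the cube `{-1,1}^n`. -/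
noncomputable def pev {n : ℕ} (p : MvPolynomial (Fin n) ℝ) (x : Fin n → Bool) : ℝ :=
  MvPolynomial.eval (fun i => chi (x i)) p

/-- `f` is a degree-`d` polynomial threshold function: `f = sgn p` for some multilinear
polynomial `p` of total degree at most `d` that is nonvanishing on the cube. -/
def IsPTF (d : ℕ) {n : ℕ} (f : (Fin n → Bool) → ℝ) : Prop :=
  ∃ p : MvPolynomial (Fin n) ℝ,
    (∀ m ∈ p.support, ∀ i, m i ≤ 1) ∧ p.totalDegree ≤ d ∧
    ∀ x, pev p x ≠ 0 ∧ f x = Real.sign (pev p x)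

set_option linter.unusedSectionVars false
set_option linter.unusedVariables false

set_option linter.unusedSectionVars false
set_option linter.unusedVariables false

namespace STB

/-- Expectation of `F` on the `n`-fold product of the weighted finite space `(κ, w)`. -/
noncomputable def E {κ : Type*} [Fintype κ] {n : ℕ} (w : κ → ℝ) (F : (Fin n → κ) → ℝ) : ℝ :=
  ∑ ω, (∏ i, w (ω i)) * F ω

/-- `w` is a probability weight. -/
def PW {κ : Type*} [Fintype κ] (w : κ → ℝ) : Prop := (∀ k, 0 ≤ w k) ∧ ∑ k, w k = 1

section basic
variable {κ : Type*} [Fintype κ] {n : ℕ} {w : κ → ℝ}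

lemma E_add (F G : (Fin n → κ) → ℝ) : E w (fun ω => F ω + G ω) = E w F + E w G := by
  simp [E, mul_add, Finset.sum_add_distrib]

lemma E_sub (F G : (Fin n → κ) → ℝ) : E w (fun ω => F ω - G ω) = E w F - E w G := by
  simp [E, mul_sub, Finset.sum_sub_distrib]

lemma E_smul (a : ℝ) (F : (Fin n → κ) → ℝ) : E w (fun ω => a * F ω) = a * E w F := by
  simp only [E, Finset.mul_sum]
  exact Finset.sum_congr rfl fun _ _ => by ring

lemma E_sum {β : Type*} (s : Finset β) (F : β → (Fin n → κ) → ℝ) :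
    E w (fun ω => ∑ b ∈ s, F b ω) = ∑ b ∈ s, E w (F b) := by
  simp only [E, Finset.mul_sum]
  rw [Finset.sum_comm]

lemma E_one (hw : PW w) : E (n := n) w (fun _ => 1) = 1 := by
  have h := Finset.prod_univ_sum (fun _ : Fin n => (Finset.univ : Finset κ)) (fun _ k => w k)
  simp only [hw.2, Finset.prod_const_one, Fintype.piFinset_univ] at h
  simp [E, ← h]

lemma E_const (hw : PW w) (a : ℝ) : E (n := n) w (fun _ => a) = a := by
  have := E_smul (n := n) (w := w) a (fun _ => 1)
  simpa [E_one hw] using this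

lemma E_mono (hw : PW w) {F G : (Fin n → κ) → ℝ} (h : ∀ ω, F ω ≤ G ω) : E w F ≤ E w G :=
  Finset.sum_le_sum fun ω _ => mul_le_mul_of_nonneg_left (h ω) (Finset.prod_nonneg fun _ _ => hw.1 _)

lemma E_nonneg (hw : PW w) {F : (Fin n → κ) → ℝ} (h : ∀ ω, 0 ≤ F ω) : 0 ≤ E w F :=
  Finset.sum_nonneg fun ω _ => mul_nonneg (Finset.prod_nonneg fun _ _ => hw.1 _) (h ω)

lemma E_abs (hw : PW w) (F : (Fin n → κ) → ℝ) : |E w F| ≤ E w (fun ω => |F ω|) := by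
  refine (Finset.abs_sum_le_sum_abs _ _).trans (Finset.sum_le_sum fun ω _ => ?_)
  rw [abs_mul, abs_of_nonneg (Finset.prod_nonneg fun _ _ => hw.1 _)]

lemma E_CS (hw : PW w) (F G : (Fin n → κ) → ℝ) :
    (E w (fun ω => F ω * G ω)) ^ 2 ≤ E w (fun ω => F ω ^ 2) * E w (fun ω => G ω ^ 2) := by
  have hp : ∀ ω : Fin n → κ, 0 ≤ ∏ i, w (ω i) := fun ω => Finset.prod_nonneg fun _ _ => hw.1 _
  exact Finset.sum_sq_le_sum_mul_sum_of_sq_le_mul _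
    (fun ω _ => mul_nonneg (hp ω) (sq_nonneg _)) (fun ω _ => mul_nonneg (hp ω) (sq_nonneg _))
    (fun ω _ => le_of_eq (by ring))

lemma prod_update_mul (ω : Fin n → κ) (i : Fin n) (k : κ) :
    (∏ j, w (Function.update ω i k j)) * w (ω i) = (∏ j, w (ω j)) * w k := by
  rw [← Finset.mul_prod_erase Finset.univ _ (Finset.mem_univ i),
    ← Finset.mul_prod_erase Finset.univ (fun j => w (ω j)) (Finset.mem_univ i)]
  have : ∏ x ∈ Finset.univ.erase i, w (Function.update ω i k x) = ∏ x ∈ Finset.univ.erase i, w (ω x) := by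
    refine Finset.prod_congr rfl fun j hj => ?_
    rw [Function.update_of_ne (Finset.ne_of_mem_erase hj)]
  rw [this, Function.update_self]
  ring

/-- Integrate out one coordinate. -/
lemma E_fub (hw : PW w) (i : Fin n) (F : (Fin n → κ) → ℝ) :
    E w F = E w (fun ω => ∑ k, w k * F (Function.update ω i k)) := by
  let σ : (Fin n → κ) × κ → (Fin n → κ) × κ := fun p => (Function.update p.1 i p.2, p.1 i)
  have hσ : Function.Involutive σ := by
    intro p
    ext <;> simp [σ]
  have h1 : E w (fun ω => ∑ k, w k * F (Function.update ω i k)) =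
      ∑ p : (Fin n → κ) × κ, (∏ j, w (p.1 j)) * (w p.2 * F (σ p).1) := by
    simp only [E, Fintype.sum_prod_type, Finset.mul_sum, σ]
  let τ : Equiv.Perm ((Fin n → κ) × κ) := Function.Involutive.toPerm σ hσ
  rw [h1, ← Equiv.sum_comp τ]
  have h2 : ∀ p : (Fin n → κ) × κ, (∏ j, w ((τ p).1 j)) *
      (w (τ p).2 * F (σ (τ p)).1) = (∏ j, w (p.1 j)) * F p.1 * w p.2 := by
    intro p
    have : σ (τ p) = p := hσ p
    rw [this]
    have h3 := prod_update_mul (w := w) p.1 i p.2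
    have h4 : τ p = (Function.update p.1 i p.2, p.1 i) := rfl
    rw [h4]
    linear_combination F p.1 * h3
  rw [Finset.sum_congr rfl fun p _ => h2 p, Fintype.sum_prod_type]
  simp [← Finset.mul_sum, hw.2, E]

/-- Change of variables. -/
lemma E_map {κ' : Type*} [Fintype κ'] {w' : κ' → ℝ} (g : κ → κ')
    (hg : ∀ k', w' k' = ∑ k, if g k = k' then w k else 0) (F : (Fin n → κ') → ℝ) :
    E w (fun ω => F (fun i => g (ω i))) = E w' F := by
  simp only [E]
  have h : ∀ ω' : Fin n → κ', ∏ i, w' (ω' i) =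
      ∑ ω : Fin n → κ, if (fun i => g (ω i)) = ω' then ∏ i, w (ω i) else 0 := by
    intro ω'
    simp only [hg]
    rw [Finset.prod_univ_sum]
    simp only [Fintype.piFinset_univ]
    refine Finset.sum_congr rfl fun ω _ => ?_
    split_ifs with h
    · exact Finset.prod_congr rfl fun i _ => by rw [if_pos (congrFun h i)]
    · have : ∃ i, g (ω i) ≠ ω' i := by
        by_contra hc
        push Not at hc
        exact h (funext hc)
      obtain ⟨i, hi⟩ := this
      exact Finset.prod_eq_zero (Finset.mem_univ i) (by simp [hi])
  simp only [h, Finset.sum_mul]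
  rw [Finset.sum_comm]
  refine Finset.sum_congr rfl fun ω _ => ?_
  simp

lemma E_prod {κ' : Type*} [Fintype κ'] {w' : κ' → ℝ} (F : (Fin n → κ × κ') → ℝ) :
    E (fun k : κ × κ' => w k.1 * w' k.2) F =
      E w (fun a => E w' (fun b => F (fun i => (a i, b i)))) := by
  simp only [E, Finset.mul_sum]
  rw [← Fintype.sum_prod_type' (f := fun (a : Fin n → κ) (b : Fin n → κ') => (∏ i, w (a i)) * ((∏ i, w' (b i)) * F (fun i => (a i, b i))))]
  refine Fintype.sum_equiv (Equiv.arrowProdEquivProdArrow (Fin n) (fun _ => κ) (fun _ => κ')) _ _ fun ω => ?_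
  simp [Equiv.arrowProdEquivProdArrow, Finset.prod_mul_distrib, mul_assoc]

lemma PW_prod {κ' : Type*} [Fintype κ'] {w' : κ' → ℝ} (hw : PW w) (hw' : PW w') :
    PW (fun k : κ × κ' => w k.1 * w' k.2) := by
  refine ⟨fun k => mul_nonneg (hw.1 _) (hw'.1 _), ?_⟩
  rw [Fintype.sum_prod_type]
  simp [← Finset.mul_sum, hw.2, hw'.2]

lemma E_comm {κ' : Type*} [Fintype κ'] {w' : κ' → ℝ} {n' : ℕ} (F : (Fin n → κ) → (Fin n' → κ') → ℝ) :
    E w (fun a => E w' (fun b => F a b)) = E w' (fun b => E w (fun a => F a b)) := by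
  simp only [E, Finset.mul_sum]
  rw [Finset.sum_comm]
  exact Finset.sum_congr rfl fun _ _ => Finset.sum_congr rfl fun _ _ => by ring

/-- Indicator function. -/
noncomputable def ind (P : Prop) : ℝ := if P then 1 else 0

lemma ind_nonneg (P : Prop) : 0 ≤ ind P := by unfold ind; split_ifs <;> norm_num
lemma ind_le_one (P : Prop) : ind P ≤ 1 := by unfold ind; split_ifs <;> norm_num
lemma ind_mono {P Q : Prop} (h : P → Q) : ind P ≤ ind Q := by
  by_cases hP : P
  · simp [ind, hP, h hP]
  · simp only [ind, hP, if_false]; exact ind_nonneg Q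
lemma ind_pos {P : Prop} (h : P) : ind P = 1 := if_pos h
lemma ind_neg {P : Prop} (h : ¬P) : ind P = 0 := if_neg h

lemma markov (hw : PW w) {Z : (Fin n → κ) → ℝ} (hZ : ∀ ω, 0 ≤ Z ω) {B c : ℝ} (hB : E w Z ≤ B)
    (hB0 : 0 ≤ B) (hc : 0 < c) : E w (fun ω => ind (B / c < Z ω)) ≤ c := by
  rcases hB0.eq_or_lt with h0 | h0
  · have : E w (fun ω => ind (B / c < Z ω)) = 0 := by
      have hz : E w Z = 0 := le_antisymm (by linarith) (E_nonneg hw hZ)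
      unfold E at hz ⊢
      rw [Finset.sum_eq_zero_iff_of_nonneg (fun ω _ => mul_nonneg (Finset.prod_nonneg fun _ _ => hw.1 _) (hZ ω))] at hz
      refine Finset.sum_eq_zero fun ω hω => ?_
      rcases mul_eq_zero.1 (hz ω hω) with h | h
      · simp [h]
      · have hh : ¬ (B / c < Z ω) := by rw [h, ← h0]; simp
        simp [ind_neg hh]
    rw [this]; exact hc.le
  · have h1 : (B / c) * E w (fun ω => ind (B / c < Z ω)) ≤ B := by
      rw [← E_smul]
      refine (E_mono hw fun ω => ?_).trans hB
      by_cases h : B / c < Z ω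
      · rw [ind_pos h]; linarith
      · rw [ind_neg h]; simpa using hZ ω
    have : B * E w (fun ω => ind (B / c < Z ω)) ≤ B * c := by
      have := mul_le_mul_of_nonneg_right h1 hc.le
      calc _ = B / c * E w (fun ω => ind (B / c < Z ω)) * c := by field_simp
        _ ≤ _ := this
    exact le_of_mul_le_mul_left this h0

lemma paley (hw : PW w) {V : (Fin n → κ) → ℝ} (hV : ∀ ω, 0 ≤ V ω) {Q : ℝ} (hQ : 1 ≤ Q)
    (h2 : E w (fun ω => V ω ^ 2) ≤ Q * (E w V) ^ 2) :
    1 / (4 * Q) ≤ E w (fun ω => ind (E w V / 2 ≤ V ω)) := by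
  have hQ0 : 0 < Q := by linarith
  set T := E w V with hT
  have hT0 : 0 ≤ T := E_nonneg hw hV
  set I := E w (fun ω => ind (T / 2 ≤ V ω)) with hI
  rcases hT0.eq_or_lt with h0 | h0
  · have : I = 1 := by
      rw [hI]
      have : (fun ω : Fin n → κ => ind (T / 2 ≤ V ω)) = fun _ => 1 := by
        funext ω; rw [ind_pos]; rw [← h0]; simpa using hV ω
      rw [this, E_one hw]
    rw [this]
    rw [div_le_one (by positivity)]; linarith
  · have hs : T / 2 ≤ E w (fun ω => V ω * ind (T / 2 ≤ V ω)) := by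
      have : T ≤ E w (fun ω => T / 2 + V ω * ind (T / 2 ≤ V ω)) := by
        refine E_mono hw fun ω => ?_
        by_cases h : T / 2 ≤ V ω
        · rw [ind_pos h]; linarith
        · rw [ind_neg h]; push Not at h; linarith
      rw [E_add, E_const hw] at this
      linarith
    have hcs := E_CS hw V (fun ω => ind (T / 2 ≤ V ω))
    have hi : (fun ω : Fin n → κ => ind (T / 2 ≤ V ω) ^ 2) = fun ω => ind (T / 2 ≤ V ω) := by
      funext ω; unfold ind; split_ifs <;> norm_num
    rw [hi, ← hI] at hcs
    have hI0 : 0 ≤ I := E_nonneg hw fun _ => ind_nonneg _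
    have h4 : (T / 2) ^ 2 ≤ Q * T ^ 2 * I :=
      (pow_le_pow_left₀ (by linarith) hs 2).trans (hcs.trans (mul_le_mul_of_nonneg_right h2 hI0))
    rw [div_le_iff₀ (by positivity)]
    have : T ^ 2 * 1 ≤ T ^ 2 * (I * (4 * Q)) := by nlinarith
    exact le_of_mul_le_mul_left this (by positivity)

end basic
end STB


namespace STB

section polys
variable {n : ℕ}

/-- Multilinear polynomial with coefficients `c`, evaluated at a real vector. -/
noncomputable def ev (c : Finset (Fin n) → ℝ) (x : Fin n → ℝ) : ℝ :=
  ∑ S, c S * ∏ i ∈ S, x i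

/-- Part of `c` not involving the coordinate `i`. -/
noncomputable def cz (i : Fin n) (c : Finset (Fin n) → ℝ) : Finset (Fin n) → ℝ :=
  fun S => if i ∈ S then 0 else c S

/-- The derivative of `c` in the coordinate `i`. -/
noncomputable def cd (i : Fin n) (c : Finset (Fin n) → ℝ) : Finset (Fin n) → ℝ :=
  fun S => if i ∈ S then 0 else c (insert i S)

/-- Degree at most `d`. -/
def Deg (d : ℕ) (c : Finset (Fin n) → ℝ) : Prop := ∀ S, c S ≠ 0 → S.card ≤ d

/-- Sum of squares of the coefficients. -/
noncomputable def sq (c : Finset (Fin n) → ℝ) : ℝ := ∑ S, c S ^ 2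

lemma sum_split (i : Fin n) (f : Finset (Fin n) → ℝ) :
    ∑ S, f S = ∑ S, (if i ∈ S then 0 else f S) + ∑ S, (if i ∈ S then 0 else f (insert i S)) := by
  have hu : (Finset.univ : Finset (Finset (Fin n))) = (insert i (Finset.univ.erase i)).powerset := by
    rw [Finset.insert_erase (Finset.mem_univ i)]; simp
  have hf : (Finset.univ.erase i).powerset = (Finset.univ : Finset (Finset (Fin n))).filter (fun S => ¬ i ∈ S) := by
    ext S
    simp only [Finset.mem_powerset, Finset.mem_filter, Finset.mem_univ, true_and]
    constructor
    · intro h hi; simpa using h hi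
    · intro h j hj; simp only [Finset.mem_erase, Finset.mem_univ, and_true]; rintro rfl; exact h hj
  conv_lhs => rw [hu]
  rw [Finset.sum_powerset_insert (Finset.notMem_erase i _), hf, Finset.sum_filter, Finset.sum_filter]
  simp only [ite_not]

lemma ev_split (i : Fin n) (c : Finset (Fin n) → ℝ) (x : Fin n → ℝ) :
    ev c x = ev (cz i c) x + x i * ev (cd i c) x := by
  unfold ev
  rw [sum_split i, Finset.mul_sum]
  congr 1
  · exact Finset.sum_congr rfl fun S _ => by by_cases h : i ∈ S <;> simp [cz, h]
  · refine Finset.sum_congr rfl fun S _ => ?_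
    by_cases h : i ∈ S
    · simp [cd, h]
    · simp [cd, h, Finset.prod_insert h]; ring

lemma ev_congr {c : Finset (Fin n) → ℝ} {i : Fin n} (hc : ∀ S, i ∈ S → c S = 0) {x y : Fin n → ℝ}
    (h : ∀ j, j ≠ i → x j = y j) : ev c x = ev c y := by
  unfold ev
  refine Finset.sum_congr rfl fun S _ => ?_
  by_cases hi : i ∈ S
  · simp [hc S hi]
  · congr 1
    exact Finset.prod_congr rfl fun j hj => h j (by rintro rfl; exact hi hj)

lemma cz_zero (i : Fin n) (c : Finset (Fin n) → ℝ) (S : Finset (Fin n)) (h : i ∈ S) : cz i c S = 0 := by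
  simp [cz, h]
lemma cd_zero (i : Fin n) (c : Finset (Fin n) → ℝ) (S : Finset (Fin n)) (h : i ∈ S) : cd i c S = 0 := by
  simp [cd, h]

lemma sq_split (i : Fin n) (c : Finset (Fin n) → ℝ) : sq c = sq (cz i c) + sq (cd i c) := by
  unfold sq
  rw [sum_split i]
  congr 1 <;> exact Finset.sum_congr rfl fun S _ => by by_cases h : i ∈ S <;> simp [cz, cd, h]

lemma Deg.cz {d : ℕ} {c : Finset (Fin n) → ℝ} (h : Deg d c) (i : Fin n) : Deg d (cz i c) := by
  intro S hS
  by_cases hi : i ∈ S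
  · simp [STB.cz, hi] at hS
  · exact h S (by simpa [STB.cz, hi] using hS)

lemma Deg.cd {d : ℕ} {c : Finset (Fin n) → ℝ} (h : Deg (d + 1) c) (i : Fin n) : Deg d (cd i c) := by
  intro S hS
  by_cases hi : i ∈ S
  · simp [STB.cd, hi] at hS
  · have := h (insert i S) (by simpa [STB.cd, hi] using hS)
    rw [Finset.card_insert_of_notMem hi] at this
    omega

lemma Deg.cd_eq_zero {c : Finset (Fin n) → ℝ} (h : Deg 0 c) (i : Fin n) : STB.cd i c = 0 := by
  funext S
  by_contra hS
  by_cases hi : i ∈ S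
  · simp [STB.cd, hi] at hS
  · have := h (insert i S) (by simpa [STB.cd, hi] using hS)
    rw [Finset.card_insert_of_notMem hi] at this
    omega

lemma Deg.cd' {d : ℕ} {c : Finset (Fin n) → ℝ} (h : Deg d c) (i : Fin n) : Deg d (STB.cd i c) := by
  cases d with
  | zero => rw [h.cd_eq_zero]; intro S hS; simp at hS
  | succ d => intro S hS; exact (h.cd i S hS).trans (Nat.le_succ d)

lemma sq_nonneg' (c : Finset (Fin n) → ℝ) : 0 ≤ sq c := Finset.sum_nonneg fun _ _ => sq_nonneg _

lemma ev_zero (x : Fin n → ℝ) : ev 0 x = 0 := by simp [ev]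
lemma sq_zero : sq (0 : Finset (Fin n) → ℝ) = 0 := by simp [sq]

/-- Moment conditions for a family of random variables. -/
structure Mom {κ : Type*} [Fintype κ] (w : κ → ℝ) (ξ : Fin n → κ → ℝ) : Prop where
  pw : PW w
  m1 : ∀ i, ∑ k, w k * ξ i k = 0
  m2 : ∀ i, ∑ k, w k * ξ i k ^ 2 = 1
  m3 : ∀ i, ∑ k, w k * ξ i k ^ 3 = 0
  m4 : ∀ i, ∑ k, w k * ξ i k ^ 4 ≤ 9

variable {κ : Type*} [Fintype κ] {w : κ → ℝ} {ξ : Fin n → κ → ℝ}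

lemma ev_update {c : Finset (Fin n) → ℝ} {i : Fin n} (hc : ∀ S, i ∈ S → c S = 0) (ω : Fin n → κ) (k : κ) :
    ev c (fun j => ξ j (Function.update ω i k j)) = ev c (fun j => ξ j (ω j)) :=
  ev_congr hc fun j hj => by rw [Function.update_of_ne hj]

lemma supp_ind {P : (Finset (Fin n) → ℝ) → Prop}
    (h0 : ∀ c, (∀ S, c S ≠ 0 → S = ∅) → P c)
    (h1 : ∀ c i, P (cz i c) → P (cd i c) → P c) (c : Finset (Fin n) → ℝ) : P c := by
  have key : ∀ V : Finset (Fin n), ∀ c : Finset (Fin n) → ℝ, (∀ S, c S ≠ 0 → S ⊆ V) → P c := by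
    intro V
    induction V using Finset.induction with
    | empty => intro c hc; exact h0 c fun S hS => Finset.subset_empty.1 (hc S hS)
    | insert i V hi ih =>
      intro c hc
      refine h1 c i (ih _ fun S hS => ?_) (ih _ fun S hS => ?_)
      · by_cases h : i ∈ S
        · simp [cz, h] at hS
        · have := hc S (by simpa [cz, h] using hS)
          exact (Finset.subset_insert_iff_of_notMem h).1 this
      · by_cases h : i ∈ S
        · simp [cd, h] at hS
        · have := hc (insert i S) (by simpa [cd, h] using hS)
          exact (Finset.subset_insert_iff_of_notMem h).1 ((Finset.subset_insert i S).trans this)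
  exact key Finset.univ c fun S _ => Finset.subset_univ S

lemma ev_const {c : Finset (Fin n) → ℝ} (hc : ∀ S, c S ≠ 0 → S = ∅) (x : Fin n → ℝ) : ev c x = c ∅ := by
  unfold ev
  rw [Finset.sum_eq_single ∅]
  · simp
  · intro S _ hS
    have : c S = 0 := by by_contra h; exact hS (hc S h)
    simp [this]
  · simp

lemma sq_const {c : Finset (Fin n) → ℝ} (hc : ∀ S, c S ≠ 0 → S = ∅) : sq c = c ∅ ^ 2 := by
  unfold sq
  rw [Finset.sum_eq_single ∅]
  · intro S _ hS
    have : c S = 0 := by by_contra h; exact hS (hc S h)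
    simp [this]
  · simp

/-- Second moment. -/
lemma parseval (hm : Mom w ξ) (c : Finset (Fin n) → ℝ) :
    E w (fun ω => ev c (fun i => ξ i (ω i)) ^ 2) = sq c := by
  revert c
  refine supp_ind ?_ ?_
  · intro c hc
    simp [ev_const hc, sq_const hc, E_const hm.pw]
  · intro c i h0 h1
    rw [E_fub hm.pw i, sq_split i c, ← h0, ← h1, ← E_add]
    congr 1
    funext ω
    set a := ev (cz i c) (fun j => ξ j (ω j)) with ha
    set b := ev (cd i c) (fun j => ξ j (ω j)) with hb
    have : ∀ k, w k * ev c (fun j => ξ j (Function.update ω i k j)) ^ 2 =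
        a ^ 2 * w k + 2 * a * b * (w k * ξ i k) + b ^ 2 * (w k * ξ i k ^ 2) := by
      intro k
      rw [ev_split i, ev_update (cz_zero i c), ev_update (cd_zero i c), Function.update_self, ← ha, ← hb]
      ring
    simp only [this, Finset.sum_add_distrib, ← Finset.mul_sum, hm.m1, hm.m2, hm.pw.2]
    ring

lemma E_sq_fourth_le (hw : PW w) {F G : (Fin n → κ) → ℝ} {A B : ℝ} (hA : 0 ≤ A) (hB : 0 ≤ B)
    (hF : E w (fun ω => F ω ^ 4) ≤ A ^ 2) (hG : E w (fun ω => G ω ^ 4) ≤ B ^ 2) :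
    E w (fun ω => F ω ^ 2 * G ω ^ 2) ≤ A * B := by
  have h := E_CS hw (fun ω => F ω ^ 2) (fun ω => G ω ^ 2)
  simp only [← pow_mul, Nat.reduceMul] at h
  refine le_of_sq_le_sq ?_ (mul_nonneg hA hB)
  refine h.trans ?_
  rw [mul_pow]
  exact mul_le_mul hF hG (E_nonneg hw fun _ => by positivity) (by positivity)

/-- Bonami lemma. -/
lemma hyper4 (hm : Mom w ξ) (c : Finset (Fin n) → ℝ) :
    ∀ d, Deg d c → E w (fun ω => ev c (fun i => ξ i (ω i)) ^ 4) ≤ 9 ^ d * sq c ^ 2 := by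
  revert c
  refine supp_ind ?_ ?_
  · intro c hc d _
    simp only [ev_const hc, sq_const hc, E_const hm.pw]
    have : (1 : ℝ) ≤ 9 ^ d := one_le_pow₀ (by norm_num)
    nlinarith [sq_nonneg (c ∅ ^ 2)]
  · intro c i h0 h1 d hd
    have hA := h0 d (hd.cz i)
    set A := sq (cz i c)
    set B := sq (cd i c)
    have hA0 : 0 ≤ A := sq_nonneg' _
    have hB0 : 0 ≤ B := sq_nonneg' _
    have hB : 9 * E w (fun ω => ev (cd i c) (fun i => ξ i (ω i)) ^ 4) ≤ 9 ^ d * B ^ 2 := by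
      cases d with
      | zero =>
        have : cd i c = 0 := hd.cd_eq_zero i
        simp [this, ev_zero, E_const hm.pw]
        positivity
      | succ d =>
        have := h1 d (hd.cd i)
        rw [pow_succ]; linarith
    have h3 : (0 : ℝ) < 3 ^ d := by positivity
    have h9 : ((9 : ℝ) ^ d) = (3 ^ d) ^ 2 := by rw [← pow_mul, mul_comm, pow_mul]; norm_num
    have hAB := E_sq_fourth_le hm.pw (F := fun ω => ev (cz i c) (fun i => ξ i (ω i)))
      (G := fun ω => ev (cd i c) (fun i => ξ i (ω i))) (A := 3 ^ d * A) (B := 3 ^ d * B / 3)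
      (by positivity) (by positivity) (by rw [mul_pow, ← h9]; exact hA)
      (by rw [div_pow, mul_pow, ← h9]; linarith)
    rw [sq_split i c, E_fub hm.pw i]
    have key : ∀ ω : Fin n → κ, ∑ k, w k * ev c (fun j => ξ j (Function.update ω i k j)) ^ 4 ≤
        ev (cz i c) (fun i => ξ i (ω i)) ^ 4 + (6 * (ev (cz i c) (fun i => ξ i (ω i)) ^ 2 *
          ev (cd i c) (fun i => ξ i (ω i)) ^ 2) + 9 * ev (cd i c) (fun i => ξ i (ω i)) ^ 4) := by
      intro ω
      set a := ev (cz i c) (fun j => ξ j (ω j)) with ha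
      set b := ev (cd i c) (fun j => ξ j (ω j)) with hb
      have : ∀ k, w k * ev c (fun j => ξ j (Function.update ω i k j)) ^ 4 =
          a ^ 4 * w k + 4 * a ^ 3 * b * (w k * ξ i k) + 6 * a ^ 2 * b ^ 2 * (w k * ξ i k ^ 2)
           + 4 * a * b ^ 3 * (w k * ξ i k ^ 3) + b ^ 4 * (w k * ξ i k ^ 4) := by
        intro k
        rw [ev_split i, ev_update (cz_zero i c), ev_update (cd_zero i c), Function.update_self, ← ha, ← hb]
        ring
      simp only [this, Finset.sum_add_distrib, ← Finset.mul_sum, hm.m1, hm.m2, hm.m3, hm.pw.2]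
      have := mul_le_mul_of_nonneg_left (hm.m4 i) (show 0 ≤ b ^ 4 by positivity)
      linarith
    refine (E_mono hm.pw key).trans ?_
    rw [E_add, E_add, E_smul, E_smul]
    have : 9 ^ d * (A + B) ^ 2 = 9 ^ d * A ^ 2 + 6 * (3 ^ d * A * (3 ^ d * B / 3)) + 9 ^ d * B ^ 2 := by
      rw [h9]; ring
    rw [this]
    linarith

/-- Vector-valued version. -/
lemma hyper4_vec (hm : Mom w ξ) {β : Type*} (s : Finset β) (h : β → ℝ) (hh : ∀ b, 0 ≤ h b)
    (c : β → Finset (Fin n) → ℝ) (d : ℕ) (hd : ∀ b, Deg d (c b)) :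
    E w (fun ω => (∑ b ∈ s, h b * ev (c b) (fun i => ξ i (ω i)) ^ 2) ^ 2) ≤
      9 ^ d * (∑ b ∈ s, h b * sq (c b)) ^ 2 := by
  have e1 : ∀ ω : Fin n → κ, (∑ b ∈ s, h b * ev (c b) (fun i => ξ i (ω i)) ^ 2) ^ 2 =
      ∑ b ∈ s, ∑ b' ∈ s, h b * h b' * (ev (c b) (fun i => ξ i (ω i)) ^ 2 * ev (c b') (fun i => ξ i (ω i)) ^ 2) := by
    intro ω
    rw [_root_.sq, Finset.sum_mul_sum]
    exact Finset.sum_congr rfl fun _ _ => Finset.sum_congr rfl fun _ _ => by ring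
  have h3 : (0 : ℝ) < 3 ^ d := by positivity
  have h9 : ((9 : ℝ) ^ d) = (3 ^ d) ^ 2 := by rw [← pow_mul, mul_comm, pow_mul]; norm_num
  simp only [e1, E_sum, E_smul]
  rw [_root_.sq, Finset.sum_mul_sum, Finset.mul_sum]
  refine Finset.sum_le_sum fun b _ => ?_
  rw [Finset.mul_sum]
  refine Finset.sum_le_sum fun b' _ => ?_
  have := E_sq_fourth_le hm.pw (F := fun ω => ev (c b) (fun i => ξ i (ω i)))
      (G := fun ω => ev (c b') (fun i => ξ i (ω i))) (A := 3 ^ d * sq (c b)) (B := 3 ^ d * sq (c b'))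
      (by have := sq_nonneg' (c b); positivity) (by have := sq_nonneg' (c b'); positivity)
      (by rw [mul_pow, ← h9]; exact hyper4 hm _ d (hd b)) (by rw [mul_pow, ← h9]; exact hyper4 hm _ d (hd b'))
  have h2 := mul_le_mul_of_nonneg_left this (mul_nonneg (hh b) (hh b'))
  rw [h9]
  linarith

end polys
end STB


namespace STB

section cube
variable {n : ℕ}

/-- Uniform weight on `Bool`. -/
noncomputable def u2 : Bool → ℝ := fun _ => 1 / 2

lemma u2_pw : PW u2 := ⟨fun _ => by norm_num [u2], by norm_num [u2]⟩

lemma chi_sq (b : Bool) : chi b * chi b = 1 := by cases b <;> norm_num [chi]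
lemma chi_not (b : Bool) : chi (!b) = - chi b := by cases b <;> norm_num [chi]

lemma mom_chi : Mom (n := n) u2 (fun _ => chi) where
  pw := u2_pw
  m1 := fun _ => by norm_num [u2, chi]
  m2 := fun _ => by norm_num [u2, chi]
  m3 := fun _ => by norm_num [u2, chi]
  m4 := fun _ => by norm_num [u2, chi]

/-- Value of the polynomial `c` on the cube. -/
noncomputable def cv (c : Finset (Fin n) → ℝ) (x : Fin n → Bool) : ℝ := ev c (fun i => chi (x i))

/-- The number of sign changes of `F` around `x`. -/
noncomputable def sn (F : (Fin n → Bool) → ℝ) (x : Fin n → Bool) : ℕ :=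
  (Finset.univ.filter (fun i => F x * F (flipAt x i) < 0)).card

/-- Tail probability of the sensitivity. -/
noncomputable def tail (c : Finset (Fin n) → ℝ) (m : ℝ) : ℝ :=
  E u2 (fun x => ind (m ≤ sn (cv c) x))

lemma tail_nonneg (c : Finset (Fin n) → ℝ) (m : ℝ) : 0 ≤ tail c m :=
  E_nonneg u2_pw fun _ => ind_nonneg _

lemma tail_le_one (c : Finset (Fin n) → ℝ) (m : ℝ) : tail c m ≤ 1 := by
  refine (E_mono u2_pw fun _ => ind_le_one _).trans ?_
  rw [E_one u2_pw]

lemma tail_anti (c : Finset (Fin n) → ℝ) {m m' : ℝ} (h : m' ≤ m) : tail c m ≤ tail c m' :=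
  E_mono u2_pw fun _ => ind_mono fun hle => h.trans hle

/-- Weighted sums of squares. -/
noncomputable def wsq (h : Finset (Fin n) → ℝ) (c : Finset (Fin n) → ℝ) : ℝ := ∑ S, h S * c S ^ 2

/-- Centering. -/
noncomputable def cen (c : Finset (Fin n) → ℝ) : Finset (Fin n) → ℝ := fun S => if S = ∅ then 0 else c S

/-- Variance. -/
noncomputable def var (c : Finset (Fin n) → ℝ) : ℝ := wsq (fun S => if S = ∅ then 0 else 1) c

/-- Total influence. -/
noncomputable def TI (c : Finset (Fin n) → ℝ) : ℝ := wsq (fun S => S.card) c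

/-- Influence. -/
noncomputable def inf (i : Fin n) (c : Finset (Fin n) → ℝ) : ℝ := wsq (fun S => if i ∈ S then 1 else 0) c

lemma wsq_mono {h h' : Finset (Fin n) → ℝ} (c : Finset (Fin n) → ℝ) (H : ∀ S, c S ≠ 0 → h S ≤ h' S) :
    wsq h c ≤ wsq h' c := by
  refine Finset.sum_le_sum fun S _ => ?_
  by_cases hc : c S = 0
  · simp [hc]
  · exact mul_le_mul_of_nonneg_right (H S hc) (sq_nonneg _)

lemma wsq_nonneg {h : Finset (Fin n) → ℝ} (c : Finset (Fin n) → ℝ) (H : ∀ S, 0 ≤ h S) : 0 ≤ wsq h c :=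
  Finset.sum_nonneg fun S _ => mul_nonneg (H S) (sq_nonneg _)

lemma wsq_smul (a : ℝ) (h : Finset (Fin n) → ℝ) (c : Finset (Fin n) → ℝ) :
    wsq (fun S => a * h S) c = a * wsq h c := by
  simp only [wsq, Finset.mul_sum, mul_assoc]

lemma var_eq (c : Finset (Fin n) → ℝ) : var c = sq (cen c) := by
  unfold var wsq sq cen
  refine Finset.sum_congr rfl fun S _ => ?_
  by_cases h : S = ∅ <;> simp [h]

lemma var_nonneg (c : Finset (Fin n) → ℝ) : 0 ≤ var c := by rw [var_eq]; exact sq_nonneg' _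

lemma sq_eq (c : Finset (Fin n) → ℝ) : sq c = c ∅ ^ 2 + var c := by
  unfold sq var wsq
  rw [← Finset.add_sum_erase _ _ (Finset.mem_univ ∅), ← Finset.add_sum_erase (a := ∅) Finset.univ _ (Finset.mem_univ ∅)]
  simp only [if_true, zero_mul, zero_add]
  congr 1
  exact Finset.sum_congr rfl fun S hS => by rw [if_neg (Finset.ne_of_mem_erase hS), one_mul]

lemma inf_eq (i : Fin n) (c : Finset (Fin n) → ℝ) : inf i c = sq (cd i c) := by
  unfold inf wsq sq
  rw [sum_split i]
  have : ∀ S : Finset (Fin n), (if i ∈ S then (0:ℝ) else (if i ∈ S then 1 else 0) * c S ^ 2) = 0 := by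
    intro S; split_ifs <;> simp
  simp only [this, Finset.sum_const_zero, zero_add]
  refine Finset.sum_congr rfl fun S _ => ?_
  by_cases h : i ∈ S <;> simp [cd, h]

lemma inf_nonneg (i : Fin n) (c : Finset (Fin n) → ℝ) : 0 ≤ inf i c := by
  rw [inf_eq]; exact sq_nonneg' _

lemma sum_inf (c : Finset (Fin n) → ℝ) : ∑ i, inf i c = TI c := by
  unfold inf TI wsq
  rw [Finset.sum_comm]
  refine Finset.sum_congr rfl fun S _ => ?_
  rw [← Finset.sum_mul]
  simp

lemma TI_le {d : ℕ} {c : Finset (Fin n) → ℝ} (hd : Deg d c) : TI c ≤ d * var c := by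
  unfold var; rw [← wsq_smul]
  refine wsq_mono c fun S hS => ?_
  have := hd S hS
  split_ifs with h
  · simp [h]
  · simpa using this

lemma var_le_TI (c : Finset (Fin n) → ℝ) : var c ≤ TI c := by
  refine wsq_mono c fun S hS => ?_
  split_ifs with h
  · simp
  · have := Finset.card_pos.2 (Finset.nonempty_iff_ne_empty.2 h)
    exact_mod_cast this

lemma cv_cen (c : Finset (Fin n) → ℝ) (x : Fin n → Bool) : cv c x = c ∅ + cv (cen c) x := by
  unfold cv ev cen
  rw [← Finset.add_sum_erase _ _ (Finset.mem_univ ∅), ← Finset.add_sum_erase (a := ∅) Finset.univ _ (Finset.mem_univ ∅)]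
  simp only [if_true, zero_add, Finset.prod_empty, mul_one]
  congr 1
  exact Finset.sum_congr rfl fun S hS => by rw [if_neg (Finset.ne_of_mem_erase hS)]

lemma Deg.cen {d : ℕ} {c : Finset (Fin n) → ℝ} (h : Deg d c) : Deg d (cen c) := by
  intro S hS
  unfold STB.cen at hS
  split_ifs at hS with h1
  · simp at hS
  · exact h S hS

/-- Polynomial functions on the cube. -/
def PD (D : ℕ) (F : (Fin n → Bool) → ℝ) : Prop := ∃ c, Deg D c ∧ ∀ x, F x = cv c x

lemma PD.of {d : ℕ} {c : Finset (Fin n) → ℝ} (h : Deg d c) : PD d (cv c) := ⟨c, h, fun _ => rfl⟩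

lemma PD.add {D : ℕ} {F G : (Fin n → Bool) → ℝ} (hF : PD D F) (hG : PD D G) : PD D (fun x => F x + G x) := by
  obtain ⟨a, ha, hF⟩ := hF
  obtain ⟨b, hb, hG⟩ := hG
  refine ⟨fun S => a S + b S, fun S hS => ?_, fun x => ?_⟩
  · by_cases h : a S = 0
    · exact hb S (by simpa [h] using hS)
    · exact ha S h
  · simp [hF, hG, cv, ev, add_mul, Finset.sum_add_distrib]

lemma PD.smul {D : ℕ} {F : (Fin n → Bool) → ℝ} (a : ℝ) (hF : PD D F) : PD D (fun x => a * F x) := by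
  obtain ⟨c, hc, hF⟩ := hF
  refine ⟨fun S => a * c S, fun S hS => hc S (by rintro h; simp [h] at hS), fun x => ?_⟩
  simp [hF, cv, ev, Finset.mul_sum, mul_assoc]

lemma PD.zero {D : ℕ} : PD D (fun _ : Fin n → Bool => 0) :=
  ⟨0, fun S hS => by simp at hS, fun x => by simp [cv, ev_zero]⟩

lemma PD.sum {D : ℕ} {β : Type*} (s : Finset β) {F : β → (Fin n → Bool) → ℝ} (hF : ∀ b ∈ s, PD D (F b)) :
    PD D (fun x => ∑ b ∈ s, F b x) := by
  induction s using Finset.induction with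
  | empty => simpa using PD.zero
  | insert b s hb ih =>
    simp only [Finset.sum_insert hb]
    exact (hF b (by simp)).add (ih fun b' hb' => hF b' (by simp [hb']))

lemma prod_chi_mul (S T : Finset (Fin n)) (x : Fin n → Bool) :
    (∏ i ∈ S, chi (x i)) * (∏ i ∈ T, chi (x i)) = ∏ i ∈ symmDiff S T, chi (x i) := by
  have key : ∀ S : Finset (Fin n), ∏ i ∈ S, chi (x i) = ∏ i, if i ∈ S then chi (x i) else 1 := by
    intro S; simp [Finset.prod_ite_mem]
  rw [key S, key T, key (symmDiff S T), ← Finset.prod_mul_distrib]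
  refine Finset.prod_congr rfl fun i _ => ?_
  by_cases h1 : i ∈ S <;> by_cases h2 : i ∈ T <;> simp [Finset.mem_symmDiff, h1, h2, chi_sq]

lemma PD.mono1 {D : ℕ} (a : ℝ) (S : Finset (Fin n)) (h : a ≠ 0 → S.card ≤ D) :
    PD D (fun x : Fin n → Bool => a * ∏ i ∈ S, chi (x i)) := by
  refine ⟨fun T => if T = S then a else 0, fun T hT => ?_, fun x => ?_⟩
  · by_cases h1 : T = S
    · rw [h1]; exact h (by simpa [h1] using hT)
    · simp [h1] at hT
  · simp [cv, ev]

lemma PD.mul {D D' : ℕ} {F G : (Fin n → Bool) → ℝ} (hF : PD D F) (hG : PD D' G) :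
    PD (D + D') (fun x => F x * G x) := by
  obtain ⟨a, ha, hF⟩ := hF
  obtain ⟨b, hb, hG⟩ := hG
  have : (fun x => F x * G x) = fun x => ∑ S, ∑ T, (a S * b T) * ∏ i ∈ symmDiff S T, chi (x i) := by
    funext x
    simp only [hF, hG, cv, ev, Finset.sum_mul_sum, ← prod_chi_mul]
    exact Finset.sum_congr rfl fun _ _ => Finset.sum_congr rfl fun _ _ => by ring
  rw [this]
  refine PD.sum _ fun S _ => PD.sum _ fun T _ => PD.mono1 _ _ fun h => ?_
  have h1 := ha S (left_ne_zero_of_mul h)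
  have h2 := hb T (right_ne_zero_of_mul h)
  have : symmDiff S T ⊆ S ∪ T := by
    intro i; simp only [Finset.mem_symmDiff, Finset.mem_union]; tauto
  have := (Finset.card_le_card this).trans (Finset.card_union_le S T)
  omega

lemma PD.four {D : ℕ} {F : (Fin n → Bool) → ℝ} (hF : PD D F) :
    E u2 (fun x => F x ^ 4) ≤ 9 ^ D * (E u2 (fun x => F x ^ 2)) ^ 2 := by
  obtain ⟨c, hc, hF⟩ := hF
  have h1 := hyper4 mom_chi c D hc
  rw [← parseval mom_chi c] at h1
  simpa [hF, cv] using h1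

/-- High moments. -/
lemma moments (k : ℕ) : ∀ D : ℕ, ∃ B : ℝ, 1 ≤ B ∧ ∀ (n : ℕ) (F : (Fin n → Bool) → ℝ), PD D F →
    E u2 (fun x => F x ^ (2 ^ (k + 1))) ≤ B * (E u2 (fun x => F x ^ 2)) ^ (2 ^ k) := by
  induction k with
  | zero => intro D; exact ⟨1, le_refl _, fun n F hF => by simp⟩
  | succ k ih =>
    intro D
    obtain ⟨B, hB, h⟩ := ih (D + D)
    refine ⟨B * (9 ^ D) ^ (2 ^ k), ?_, fun n F hF => ?_⟩
    · exact one_le_mul_of_one_le_of_one_le hB (one_le_pow₀ (one_le_pow₀ (by norm_num)))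
    · have h1 := h n _ (hF.mul hF)
      have e1 : ∀ x : Fin n → Bool, (F x * F x) ^ (2 ^ (k + 1)) = F x ^ (2 ^ (k + 1 + 1)) := by
        intro x; rw [← _root_.sq, ← pow_mul, ← pow_succ']
      have e2 : ∀ x : Fin n → Bool, (F x * F x) ^ 2 = F x ^ 4 := by intro x; ring
      simp only [e1, e2] at h1
      refine h1.trans ?_
      rw [mul_assoc]
      refine mul_le_mul_of_nonneg_left ?_ (by linarith)
      calc _ ≤ (9 ^ D * (E u2 (fun x => F x ^ 2)) ^ 2) ^ (2 ^ k) :=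
            pow_le_pow_left₀ (E_nonneg u2_pw fun x => by positivity) hF.four _
        _ = _ := by rw [mul_pow, ← pow_mul (E u2 fun x => F x ^ 2), ← pow_succ']

noncomputable def grd (c : Finset (Fin n) → ℝ) (x : Fin n → Bool) : ℝ := ∑ i, cv (cd i c) x ^ 2

lemma cv_flip (c : Finset (Fin n) → ℝ) (x : Fin n → Bool) (i : Fin n) :
    cv c (flipAt x i) = cv c x - 2 * chi (x i) * cv (cd i c) x := by
  unfold cv
  have h : ∀ j, j ≠ i → chi (flipAt x i j) = chi (x j) := by
    intro j hj; rw [flipAt, Function.update_of_ne hj]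
  rw [ev_split i c, ev_split i c (fun i => chi (x i)), ev_congr (cz_zero i c) h, ev_congr (cd_zero i c) h]
  simp only [flipAt, Function.update_self, chi_not]
  ring

lemma le_grd (c : Finset (Fin n) → ℝ) (x : Fin n → Bool) (h : 0 < sn (cv c) x) : cv c x ^ 2 ≤ 4 * grd c x := by
  obtain ⟨i, hi⟩ := Finset.card_pos.1 h
  simp only [Finset.mem_filter, Finset.mem_univ, true_and, cv_flip] at hi
  have h1 : cv (cd i c) x ^ 2 ≤ grd c x :=
    Finset.single_le_sum (f := fun i => cv (cd i c) x ^ 2) (fun _ _ => sq_nonneg _) (Finset.mem_univ i)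
  have h2 := chi_sq (x i)
  nlinarith [sq_nonneg (cv c x - 2 * chi (x i) * cv (cd i c) x), sq_nonneg (cv c x - chi (x i) * cv (cd i c) x)]

lemma grd_four {d : ℕ} {c : Finset (Fin n) → ℝ} (hd : Deg d c) :
    E u2 (fun x => grd c x ^ 2) ≤ 9 ^ d * (d * var c) ^ 2 := by
  have h := hyper4_vec mom_chi (Finset.univ : Finset (Fin n)) (fun _ => 1) (fun _ => zero_le_one)
    (fun i => cd i c) d (fun i => hd.cd' i)
  simp only [one_mul, ← inf_eq, sum_inf] at h
  refine h.trans ?_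
  refine mul_le_mul_of_nonneg_left (pow_le_pow_left₀ ((var_nonneg c).trans (var_le_TI c)) (TI_le hd) 2) (by positivity)

lemma sn_zero {c : Finset (Fin n) → ℝ} (h : var c = 0) (x : Fin n → Bool) : sn (cv c) x = 0 := by
  rw [var_eq] at h
  have hc : cen c = 0 := by
    funext S
    have := (Finset.sum_eq_zero_iff_of_nonneg (fun S _ => sq_nonneg (cen c S))).1 h S (Finset.mem_univ S)
    simpa using this
  have : ∀ x, cv c x = c ∅ := by intro x; rw [cv_cen, hc]; simp [cv, ev_zero]
  unfold sn
  simp only [this]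
  rw [Finset.card_eq_zero, Finset.filter_eq_empty_iff]
  intro i _
  have := mul_self_nonneg (c ∅)
  linarith

/-- Terminal lemma. -/
lemma terminal (d : ℕ) : ∃ C : ℝ, 1 ≤ C ∧ ∀ (n : ℕ) (c : Finset (Fin n) → ℝ), Deg d c → ∀ R m : ℝ, 0 < R →
    R ^ 2 * var c ≤ c ∅ ^ 2 → 0 < m → tail c m ≤ C / R ^ 64 := by
  obtain ⟨B, hB, h⟩ := moments 4 (d + d)
  set K : ℝ := 9 ^ d * (128 * d ^ 2 + 8) with hK
  have hK1 : 1 ≤ K := by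
    have : (1:ℝ) ≤ 9 ^ d := one_le_pow₀ (by norm_num)
    have : (0:ℝ) ≤ d ^ 2 := by positivity
    rw [hK]; nlinarith
  refine ⟨B * K ^ 16, one_le_mul_of_one_le_of_one_le hB (one_le_pow₀ hK1), fun n c hc R m hR hv hm => ?_⟩
  rcases (var_nonneg c).eq_or_lt with h0 | h0
  · have : tail c m = 0 := by
      unfold tail
      have : (fun x : Fin n → Bool => ind (m ≤ sn (cv c) x)) = fun _ => 0 := by
        funext x; rw [sn_zero h0.symm, ind_neg]; push_cast; linarith
      rw [this, E_const u2_pw]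
    rw [this]; positivity
  have hmu : 0 < c ∅ ^ 2 := lt_of_lt_of_le (by positivity) hv
  set F : (Fin n → Bool) → ℝ := fun x => 8 * grd c x + 2 * (cv (cen c) x * cv (cen c) x) with hF
  have hPD : PD (d + d) F := by
    refine PD.add (PD.smul _ (PD.sum _ fun i _ => ?_)) (PD.smul _ ((PD.of hc.cen).mul (PD.of hc.cen)))
    have := (PD.of (hc.cd' i)).mul (PD.of (hc.cd' i))
    simpa [_root_.sq] using this
  have hg0 : ∀ x, 0 ≤ grd c x := fun x => Finset.sum_nonneg fun _ _ => sq_nonneg _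
  have hF0 : ∀ x, 0 ≤ F x := fun x => by have := hg0 x; have := mul_self_nonneg (cv (cen c) x); simp only [hF]; linarith
  have hF2 : E u2 (fun x => F x ^ 2) ≤ K * var c ^ 2 := by
    have h1 : ∀ x, F x ^ 2 ≤ 128 * grd c x ^ 2 + 8 * cv (cen c) x ^ 4 := by
      intro x; simp only [hF]; nlinarith [sq_nonneg (8 * grd c x - 2 * (cv (cen c) x * cv (cen c) x))]
    refine (E_mono u2_pw h1).trans ?_
    rw [E_add, E_smul, E_smul]
    have h2 := grd_four hc
    have h3 := hyper4 mom_chi (cen c) d hc.cen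
    rw [← var_eq] at h3
    have h4 : E u2 (fun x : Fin n → Bool => cv (cen c) x ^ 4) ≤ 9 ^ d * var c ^ 2 := h3
    rw [hK]; nlinarith
  have hs : tail c m * (c ∅ ^ 2) ^ 32 ≤ E u2 (fun x => F x ^ 32) := by
    rw [mul_comm]; unfold tail; rw [← E_smul]
    refine E_mono u2_pw fun x => ?_
    by_cases hx : m ≤ sn (cv c) x
    · rw [ind_pos hx, mul_one]
      have hx' : 0 < sn (cv c) x := by
        have : (0:ℝ) < sn (cv c) x := by linarith
        exact_mod_cast this
      refine pow_le_pow_left₀ hmu.le ?_ 32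
      have h1 := le_grd c x hx'
      have h2 := cv_cen c x
      simp only [hF]
      have h3 : c ∅ = cv c x - cv (cen c) x := by linarith
      rw [h3]
      nlinarith [sq_nonneg (cv c x + cv (cen c) x)]
    · rw [ind_neg hx]; have := pow_nonneg (hF0 x) 32; linarith
  have hM := h n F hPD
  norm_num at hM
  have h5 : E u2 (fun x => F x ^ 32) ≤ B * (K * var c ^ 2) ^ 16 := by
    refine hM.trans (mul_le_mul_of_nonneg_left (pow_le_pow_left₀ (E_nonneg u2_pw fun x => by positivity) hF2 16) (by linarith))
  rw [le_div_iff₀ (by positivity)]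
  have h6 : (R ^ 2 * var c) ^ 32 ≤ (c ∅ ^ 2) ^ 32 := pow_le_pow_left₀ (by positivity) hv 32
  have h7 : tail c m * (R ^ 2 * var c) ^ 32 ≤ B * (K * var c ^ 2) ^ 16 :=
    (mul_le_mul_of_nonneg_left h6 (tail_nonneg c m)).trans (hs.trans h5)
  have h8 : var c ^ 32 * (tail c m * R ^ 64) ≤ var c ^ 32 * (B * K ^ 16) := by
    calc _ = tail c m * (R ^ 2 * var c) ^ 32 := by ring
      _ ≤ _ := h7
      _ = _ := by ring
  exact le_of_mul_le_mul_left h8 (by positivity)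

end cube
end STB


namespace STB

section restriction
variable {n : ℕ}

/-- Keep the coordinates with `L i = true` alive, fix the others to `A`. -/
def mix (L A Y : Fin n → Bool) : Fin n → Bool := fun i => if L i then Y i else A i

/-- Coefficients (in `A`) of the `T`-coefficient of the restricted polynomial. -/
noncomputable def rc (c : Finset (Fin n) → ℝ) (L : Fin n → Bool) (T : Finset (Fin n)) :
    Finset (Fin n) → ℝ :=
  fun U => if (∀ i ∈ T, L i = true) ∧ (∀ i ∈ U, L i = false) then c (T ∪ U) else 0

/-- The restricted polynomial. -/
noncomputable def restr (c : Finset (Fin n) → ℝ) (L A : Fin n → Bool) : Finset (Fin n) → ℝ :=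
  fun T => cv (rc c L T) A

lemma sum_split_L (L : Fin n → Bool) (f : Finset (Fin n) → Finset (Fin n) → ℝ) :
    ∑ S : Finset (Fin n), f (S.filter (fun i => L i = true)) (S.filter (fun i => L i = false)) =
      ∑ T, ∑ U, if (∀ i ∈ T, L i = true) ∧ (∀ i ∈ U, L i = false) then f T U else 0 := by
  rw [← Fintype.sum_prod_type' (f := fun T U : Finset (Fin n) =>
    if (∀ i ∈ T, L i = true) ∧ (∀ i ∈ U, L i = false) then f T U else 0), ← Finset.sum_filter]
  refine Finset.sum_nbij' (fun S => (S.filter (fun i => L i = true), S.filter (fun i => L i = false)))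
    (fun p => p.1 ∪ p.2) ?_ ?_ ?_ ?_ ?_
  · intro S _; simp
  · intro p _; simp
  · intro S _
    ext i; simp only [Finset.mem_union, Finset.mem_filter]
    cases L i <;> simp
  · rintro ⟨T, U⟩ h
    simp only [Finset.mem_filter, Finset.mem_univ, true_and] at h
    ext i
    · simp only [Finset.mem_filter, Finset.mem_union]
      constructor
      · rintro ⟨h1 | h1, h2⟩
        · exact h1
        · rw [h.2 i h1] at h2; simp at h2
      · intro h1; exact ⟨Or.inl h1, h.1 i h1⟩
    · simp only [Finset.mem_filter, Finset.mem_union]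
      constructor
      · rintro ⟨h1 | h1, h2⟩
        · rw [h.1 i h1] at h2; simp at h2
        · exact h1
      · intro h1; exact ⟨Or.inr h1, h.2 i h1⟩
  · intro S _; rfl

lemma filter_union_L (L : Fin n → Bool) (S : Finset (Fin n)) :
    S.filter (fun i => L i = true) ∪ S.filter (fun i => L i = false) = S := by
  ext i; simp only [Finset.mem_union, Finset.mem_filter]
  cases L i <;> simp

lemma filter_disj_L (L : Fin n → Bool) (S : Finset (Fin n)) :
    Disjoint (S.filter (fun i => L i = true)) (S.filter (fun i => L i = false)) := by
  rw [Finset.disjoint_filter]; intro i _ h; simp [h]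

lemma cv_mix (c : Finset (Fin n) → ℝ) (L A Y : Fin n → Bool) :
    cv c (mix L A Y) = cv (restr c L A) Y := by
  have h1 : cv c (mix L A Y) = ∑ S : Finset (Fin n), (fun T U => c (T ∪ U) * ((∏ i ∈ T, chi (Y i)) * ∏ i ∈ U, chi (A i)))
      (S.filter (fun i => L i = true)) (S.filter (fun i => L i = false)) := by
    unfold cv ev
    refine Finset.sum_congr rfl fun S _ => ?_
    simp only [filter_union_L]
    congr 1
    conv_lhs => rw [← filter_union_L L S, Finset.prod_union (filter_disj_L L S)]
    congr 1
    · refine Finset.prod_congr rfl fun i hi => ?_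
      simp [mix, (Finset.mem_filter.1 hi).2]
    · refine Finset.prod_congr rfl fun i hi => ?_
      simp [mix, (Finset.mem_filter.1 hi).2]
  rw [h1]
  refine (sum_split_L L (fun T U => c (T ∪ U) * ((∏ i ∈ T, chi (Y i)) * ∏ i ∈ U, chi (A i)))).trans ?_
  unfold restr cv ev
  refine Finset.sum_congr rfl fun T _ => ?_
  rw [Finset.sum_mul]
  refine Finset.sum_congr rfl fun U _ => ?_
  unfold rc
  split_ifs
  · ring
  · ring

lemma Deg.rc {d : ℕ} {c : Finset (Fin n) → ℝ} (hd : Deg d c) (L : Fin n → Bool) (T : Finset (Fin n)) :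
    Deg d (rc c L T) := by
  intro U hU
  unfold STB.rc at hU
  split_ifs at hU with h
  · exact (Finset.card_le_card Finset.subset_union_right).trans (hd _ hU)
  · simp at hU

lemma Deg.restr {d : ℕ} {c : Finset (Fin n) → ℝ} (hd : Deg d c) (L A : Fin n → Bool) :
    Deg d (restr c L A) := by
  intro T hT
  unfold STB.restr cv ev at hT
  obtain ⟨U, _, hU⟩ := Finset.exists_ne_zero_of_sum_ne_zero hT
  have hU := left_ne_zero_of_mul hU
  unfold STB.rc at hU
  split_ifs at hU with h
  · exact (Finset.card_le_card Finset.subset_union_left).trans (hd _ hU)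
  · simp at hU

lemma sum_sq_rc (c : Finset (Fin n) → ℝ) (L : Fin n → Bool) (h : Finset (Fin n) → ℝ) :
    ∑ T, h T * sq (rc c L T) = wsq (fun S => h (S.filter (fun i => L i = true))) c := by
  have h1 : wsq (fun S => h (S.filter (fun i => L i = true))) c =
      ∑ S : Finset (Fin n), (fun T U => h T * c (T ∪ U) ^ 2)
      (S.filter (fun i => L i = true)) (S.filter (fun i => L i = false)) := by
    unfold wsq
    refine Finset.sum_congr rfl fun S _ => ?_
    simp only [filter_union_L]
  rw [h1]
  refine Eq.trans ?_ (sum_split_L L (fun T U => h T * c (T ∪ U) ^ 2)).symm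
  refine Finset.sum_congr rfl fun T _ => ?_
  unfold sq
  rw [Finset.mul_sum]
  refine Finset.sum_congr rfl fun U _ => ?_
  unfold rc
  split_ifs <;> simp

lemma E_wsq_restr (c : Finset (Fin n) → ℝ) (L : Fin n → Bool) (h : Finset (Fin n) → ℝ) :
    E u2 (fun A => wsq h (restr c L A)) = wsq (fun S => h (S.filter (fun i => L i = true))) c := by
  rw [← sum_sq_rc]
  unfold wsq
  rw [E_sum]
  refine Finset.sum_congr rfl fun T _ => ?_
  rw [E_smul]
  congr 1
  exact parseval mom_chi (rc c L T)

lemma E_wsq_restr_sq {d : ℕ} {c : Finset (Fin n) → ℝ} (hd : Deg d c) (L : Fin n → Bool) (h : Finset (Fin n) → ℝ)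
    (hh : ∀ S, 0 ≤ h S) :
    E u2 (fun A => wsq h (restr c L A) ^ 2) ≤ 9 ^ d * wsq (fun S => h (S.filter (fun i => L i = true))) c ^ 2 := by
  rw [← sum_sq_rc]
  exact hyper4_vec mom_chi Finset.univ h hh (fun T => rc c L T) d (fun T => hd.rc L T)

lemma mix_mix (L A Y : Fin n → Bool) : mix L (mix L Y A) (mix L A Y) = Y := by
  funext i; unfold mix; cases L i <;> simp

/-- For a fixed `L`, the mixture of two uniform points is uniform. -/
lemma mix_unif (L : Fin n → Bool) (F : (Fin n → Bool) → ℝ) :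
    E u2 (fun A => E u2 (fun Y => F (mix L A Y))) = E u2 F := by
  have h0 : E u2 F = E u2 (fun _ : Fin n → Bool => E u2 F) := (E_const u2_pw _).symm
  rw [h0]
  simp only [E, u2, Finset.prod_const, Finset.mul_sum]
  rw [← Fintype.sum_prod_type' (f := fun A Y : Fin n → Bool =>
     (1 / 2 : ℝ) ^ (Finset.univ : Finset (Fin n)).card * ((1 / 2 : ℝ) ^ (Finset.univ : Finset (Fin n)).card * F (mix L A Y))),
    ← Fintype.sum_prod_type' (f := fun A Y : Fin n → Bool =>
     (1 / 2 : ℝ) ^ (Finset.univ : Finset (Fin n)).card * ((1 / 2 : ℝ) ^ (Finset.univ : Finset (Fin n)).card * F Y))]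
  let σ : (Fin n → Bool) × (Fin n → Bool) → (Fin n → Bool) × (Fin n → Bool) :=
    fun p => (mix L p.2 p.1, mix L p.1 p.2)
  have hσ : Function.Involutive σ := by
    intro p; ext1
    · exact mix_mix L p.2 p.1
    · exact mix_mix L p.1 p.2
  exact Fintype.sum_equiv (Function.Involutive.toPerm σ hσ) _ _ fun p => rfl

lemma mix_flip (L A Y : Fin n → Bool) (i : Fin n) :
    mix L A (flipAt Y i) = if L i then flipAt (mix L A Y) i else mix L A Y := by
  funext j
  by_cases hj : j = i
  · subst hj
    cases h : L j <;> simp [mix, flipAt, h]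
  · cases h : L i <;> simp [mix, flipAt, Function.update_of_ne hj]

lemma sn_restr (c : Finset (Fin n) → ℝ) (L A Y : Fin n → Bool) :
    sn (cv (restr c L A)) Y = ((Finset.univ.filter (fun i => cv c (mix L A Y) * cv c (flipAt (mix L A Y) i) < 0)).filter
      (fun i => L i = true)).card := by
  unfold sn
  congr 1
  ext i
  simp only [Finset.mem_filter, Finset.mem_univ, true_and, ← cv_mix, mix_flip]
  cases h : L i
  · have := mul_self_nonneg (cv c (mix L A Y))
    simpa using this
  · simp

/-- Deterministic restriction: `L` is alive. -/
lemma tail_restr (c : Finset (Fin n) → ℝ) (L : Fin n → Bool) (m k : ℝ)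
    (hk : ((Finset.univ.filter (fun i => L i = false)).card : ℝ) ≤ k) :
    tail c m ≤ E u2 (fun A => tail (restr c L A) (m - k)) := by
  unfold tail
  rw [← mix_unif L]
  refine E_mono u2_pw fun A => E_mono u2_pw fun Y => ind_mono fun h => ?_
  rw [sn_restr]
  set S := Finset.univ.filter (fun i => cv c (mix L A Y) * cv c (flipAt (mix L A Y) i) < 0) with hS
  have h1 : m ≤ (S.card : ℝ) := h
  have h2 : S.card ≤ (S.filter (fun i => L i = true)).card + (Finset.univ.filter (fun i => L i = false)).card := by
    conv_lhs => rw [← filter_union_L L S]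
    refine (Finset.card_union_le _ _).trans ?_
    gcongr
    exact Finset.subset_univ S
  have h3 : (S.card : ℝ) ≤ ((S.filter (fun i => L i = true)).card : ℝ) + ((Finset.univ.filter (fun i => L i = false)).card : ℝ) := by
    exact_mod_cast h2
  linarith

/-- Biased weight. -/
noncomputable def bw (η : ℝ) : Bool → ℝ := fun b => if b then η else 1 - η

lemma bw_pw {η : ℝ} (h0 : 0 ≤ η) (h1 : η ≤ 1) : PW (bw η) :=
  ⟨fun b => by cases b <;> simp [bw, h0, h1], by simp [bw]⟩

/-- Mean and variance of a binomial sum, via the polynomial calculus. -/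
lemma binom_var {η : ℝ} (h0 : 0 ≤ η) (h1 : η ≤ 1) (S : Finset (Fin n)) :
    E (bw η) (fun L : Fin n → Bool => (((S.filter (fun i => L i = true)).card : ℝ) - η * S.card) ^ 2) ≤ η * S.card := by
  have hw := bw_pw h0 h1
  induction S using Finset.induction with
  | empty => simp [E_const hw]
  | insert i S hi ih =>
    rw [E_fub hw i]
    have : ∀ L : Fin n → Bool, ∑ k, bw η k * ((((insert i S).filter (fun j => Function.update L i k j = true)).card : ℝ) - η * (insert i S).card) ^ 2
        = (((S.filter (fun i => L i = true)).card : ℝ) - η * S.card) ^ 2 + η * (1 - η) := by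
      intro L
      have e : ∀ k, S.filter (fun j => Function.update L i k j = true) = S.filter (fun j => L j = true) := by
        intro k
        refine Finset.filter_congr fun j hj => ?_
        rw [Function.update_of_ne (by rintro rfl; exact hi hj)]
      have hni : i ∉ S.filter (fun j => L j = true) := by simp [hi]
      simp only [Fintype.sum_bool, Finset.filter_insert, Function.update_self, e, Finset.card_insert_of_notMem hi,
        if_true, Finset.card_insert_of_notMem hni]
      simp [bw]
      ring
    simp only [this]
    rw [E_add, E_const hw, Finset.card_insert_of_notMem hi]
    push_cast
    nlinarith

lemma binom_half {η : ℝ} (h0 : 0 ≤ η) (h1 : η ≤ 1) (S : Finset (Fin n)) (m : ℝ) (hm : 8 ≤ η * m) (hS : m ≤ S.card) :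
    1 / 2 ≤ E (bw η) (fun L : Fin n → Bool => ind (η * m / 2 ≤ ((S.filter (fun i => L i = true)).card : ℝ))) := by
  have hw := bw_pw h0 h1
  have hv := binom_var h0 h1 S
  set s : ℝ := η * S.card with hs
  have hs8 : 8 ≤ s := hm.trans (mul_le_mul_of_nonneg_left hS h0)
  have hms : η * m ≤ s := mul_le_mul_of_nonneg_left hS h0
  have key : ∀ L : Fin n → Bool, 1 - ind (η * m / 2 ≤ ((S.filter (fun i => L i = true)).card : ℝ)) ≤
      (4 / s ^ 2) * (((S.filter (fun i => L i = true)).card : ℝ) - s) ^ 2 := by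
    intro L
    by_cases h : η * m / 2 ≤ ((S.filter (fun i => L i = true)).card : ℝ)
    · rw [ind_pos h]; simp; positivity
    · rw [ind_neg h]
      push Not at h
      rw [div_mul_eq_mul_div, le_div_iff₀ (by positivity)]
      nlinarith
  have h2 := E_mono hw key
  rw [E_sub, E_one hw, E_smul] at h2
  have h3 : 4 / s ^ 2 * E (bw η) (fun L : Fin n → Bool => (((S.filter (fun i => L i = true)).card : ℝ) - s) ^ 2) ≤ 4 / s ^ 2 * s :=
    mul_le_mul_of_nonneg_left hv (by positivity)
  have h4 : 4 / s ^ 2 * s ≤ 1 / 2 := by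
    have : 4 / s ^ 2 * s = 4 / s := by field_simp
    rw [this, div_le_iff₀ (by linarith)]; linarith
  linarith

/-- Sampling lemma. -/
lemma sampling {η : ℝ} (h0 : 0 ≤ η) (h1 : η ≤ 1) (c : Finset (Fin n) → ℝ) (m : ℝ) (hm : 8 ≤ η * m) :
    tail c m ≤ 2 * E (bw η) (fun L => E u2 (fun A => tail (restr c L A) (η * m / 2))) := by
  have hw := bw_pw h0 h1
  set Sx : (Fin n → Bool) → Finset (Fin n) := fun x => Finset.univ.filter (fun i => cv c x * cv c (flipAt x i) < 0) with hSx
  have e1 : ∀ L : Fin n → Bool, E u2 (fun A => tail (restr c L A) (η * m / 2)) =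
      E u2 (fun x => ind (η * m / 2 ≤ (((Sx x).filter (fun i => L i = true)).card : ℝ))) := by
    intro L
    conv_rhs => rw [← mix_unif L]
    unfold tail
    simp only [sn_restr, hSx]
  simp only [e1]
  rw [E_comm, ← E_smul]
  refine E_mono u2_pw fun x => ?_
  by_cases h : m ≤ sn (cv c) x
  · rw [ind_pos h]
    have := binom_half h0 h1 (Sx x) m hm h
    linarith
  · rw [ind_neg h]
    exact mul_nonneg (by norm_num) (E_nonneg hw fun _ => ind_nonneg _)

end restriction
end STB


namespace STB

section glem
variable {n : ℕ}

lemma tail_var_zero {c : Finset (Fin n) → ℝ} (h : var c = 0) {m : ℝ} (hm : 0 < m) : tail c m = 0 := by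
  unfold tail
  have : (fun x : Fin n → Bool => ind (m ≤ sn (cv c) x)) = fun _ => 0 := by
    funext x; rw [sn_zero h, ind_neg]; push_cast; linarith
  rw [this, E_const u2_pw]

lemma binom_mean {η : ℝ} (h0 : 0 ≤ η) (h1 : η ≤ 1) (S : Finset (Fin n)) :
    E (bw η) (fun L : Fin n → Bool => ((S.filter (fun i => L i = true)).card : ℝ)) = η * S.card := by
  have hw := bw_pw h0 h1
  have e : ∀ L : Fin n → Bool, ((S.filter (fun i => L i = true)).card : ℝ) = ∑ i ∈ S, (if L i = true then (1:ℝ) else 0) := by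
    intro L; simp
  simp only [e, E_sum]
  have : ∀ i : Fin n, E (bw η) (fun L : Fin n → Bool => if L i = true then (1:ℝ) else 0) = η := by
    intro i
    rw [E_fub hw i]
    simp [bw, E_const hw]
  simp [this, mul_comm]

lemma E_TI_restr {η : ℝ} (h0 : 0 ≤ η) (h1 : η ≤ 1) (c : Finset (Fin n) → ℝ) :
    E (bw η) (fun L => E u2 (fun A => TI (restr c L A))) = η * TI c := by
  unfold TI
  simp only [E_wsq_restr]
  unfold wsq
  rw [E_sum, Finset.mul_sum]
  refine Finset.sum_congr rfl fun S _ => ?_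
  have : ∀ L : Fin n → Bool, ((S.filter (fun i => L i = true)).card : ℝ) * c S ^ 2 =
    c S ^ 2 * ((S.filter (fun i => L i = true)).card : ℝ) := fun L => mul_comm _ _
  simp only [this, E_smul, binom_mean h0 h1]
  ring

/-- The inductive hypothesis. -/
def IH (d : ℕ) (Φ : ℝ → ℝ) (M : ℝ) : Prop :=
  ∀ m : ℝ, 1 ≤ m → m ≤ M → ∀ (n : ℕ) (c : Finset (Fin n) → ℝ), Deg d c → tail c m ≤ Φ m / Real.sqrt m

lemma restr_mean (c : Finset (Fin n) → ℝ) (L A : Fin n → Bool) :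
    restr c L A ∅ - c ∅ = cv (cen (rc c L ∅)) A := by
  unfold restr
  rw [cv_cen]
  have : rc c L ∅ ∅ = c ∅ := by simp [rc]
  rw [this]; ring

lemma var_rc_le (c : Finset (Fin n) → ℝ) (L : Fin n → Bool) : var (rc c L ∅) ≤ var c := by
  unfold var wsq
  refine Finset.sum_le_sum fun S _ => ?_
  refine mul_le_mul_of_nonneg_left ?_ (by by_cases h : S = ∅ <;> simp [h])
  unfold rc
  split_ifs
  · simp
  · simpa using sq_nonneg (c S)

lemma Glem (d : ℕ) : ∃ K : ℝ, 1 ≤ K ∧ ∀ (Φ : ℝ → ℝ), (∀ m, 1 ≤ m → 1 ≤ Φ m) →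
    (∀ m m', 1 ≤ m → m ≤ m' → Φ m ≤ Φ m') → ∀ M, IH d Φ M → ∀ m, 1 ≤ m → m ≤ M → ∀ R, 8 ≤ R →
    ∀ (n : ℕ) (c : Finset (Fin n) → ℝ), Deg d c → R ^ 2 * var c ≤ c ∅ ^ 2 →
      tail c m ≤ K / R ^ 4 * (Φ m / Real.sqrt m) := by
  obtain ⟨CT, hCT, hterm⟩ := terminal d
  obtain ⟨B, hB, hmom⟩ := moments 3 d
  set K : ℝ := CT + B * 4 ^ 8 + 4 * d with hK
  have hd0 : (0:ℝ) ≤ d := Nat.cast_nonneg d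
  have hK1 : 1 ≤ K := by rw [hK]; nlinarith
  refine ⟨K, hK1, fun Φ hΦ1 hΦm M hIH => ?_⟩
  have key : ∀ k : ℕ, ∀ m : ℝ, 1 ≤ m → m ≤ M → m ≤ 2 ^ k → ∀ R, 8 ≤ R →
    ∀ (n : ℕ) (c : Finset (Fin n) → ℝ), Deg d c → R ^ 2 * var c ≤ c ∅ ^ 2 →
      tail c m ≤ K / R ^ 4 * (Φ m / Real.sqrt m) := by
    intro k
    induction k with
    | zero =>
      intro m hm hM hk R hR n c hc hv
      have hR0 : 0 < R := by linarith
      have hm1 : m = 1 := le_antisymm (by simpa using hk) hm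
      subst hm1
      have h1 := hterm n c hc R 1 hR0 hv one_pos
      rw [Real.sqrt_one, div_one]
      have h2 : CT / R ^ 64 ≤ K / R ^ 4 := by
        refine div_le_div₀ (by linarith) (by rw [hK]; nlinarith) (by positivity) ?_
        exact pow_le_pow_right₀ (by linarith) (by norm_num)
      have h3 : K / R ^ 4 * 1 ≤ K / R ^ 4 * Φ 1 := mul_le_mul_of_nonneg_left (hΦ1 1 le_rfl) (by positivity)
      linarith
    | succ k ih =>
      intro m hm hM hk R hR n c hc hv
      have hR0 : 0 < R := by linarith
      have hR1 : 1 ≤ R := by linarith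
      have hm0 : 0 < m := by linarith
      have hsm : 0 < Real.sqrt m := Real.sqrt_pos.2 hm0
      by_cases hbig : m ≤ R ^ 100
      · have h1 := hterm n c hc R m hR0 hv hm0
        have h2 : Real.sqrt m ≤ R ^ 50 := by
          rw [Real.sqrt_le_left (by positivity), ← pow_mul]; exact hbig
        have h3 : CT / R ^ 64 ≤ K / R ^ 4 * (1 / Real.sqrt m) := by
          rw [div_mul_div_comm, mul_one]
          refine div_le_div₀ (by linarith) (by rw [hK]; nlinarith) (by positivity) ?_
          calc R ^ 4 * Real.sqrt m ≤ R ^ 4 * R ^ 50 := by gcongr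
            _ = R ^ 54 := by ring
            _ ≤ R ^ 64 := pow_le_pow_right₀ hR1 (by norm_num)
        refine h1.trans (h3.trans ?_)
        gcongr
        exact hΦ1 m hm
      push Not at hbig
      rcases (var_nonneg c).eq_or_lt with hv0 | hv0
      · rw [tail_var_zero hv0.symm hm0]
        have := hΦ1 m hm
        positivity
      set η : ℝ := 1 / R ^ 22 with hη
      have hη0 : 0 < η := by positivity
      have hη1 : η ≤ 1 := by
        rw [hη, div_le_one (by positivity)]; exact one_le_pow₀ hR1
      have hηm : R ^ 78 ≤ η * m := by
        rw [hη, one_div, inv_mul_eq_div, le_div_iff₀ (by positivity)]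
        calc R ^ 78 * R ^ 22 = R ^ 100 := by ring
          _ ≤ m := hbig.le
      have hR78 : 8 ≤ R ^ 78 := hR.trans (by simpa using pow_le_pow_right₀ hR1 (show 1 ≤ 78 by norm_num))
      set m' : ℝ := η * m / 2 with hm'
      have hm'1 : 1 ≤ m' := by rw [hm']; linarith
      have hm'm : m' ≤ m / 2 := by rw [hm']; nlinarith
      have hw := bw_pw hη0.le hη1
      set X : ℝ := Φ m' / Real.sqrt m' with hX
      have hm'0 : 0 < m' := by linarith
      have hX0 : 0 ≤ X := by have := hΦ1 m' hm'1; positivity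
      have h1 := sampling hη0.le hη1 c m (by linarith)
      have hpt : ∀ L A : Fin n → Bool, tail (restr c L A) m' ≤
          X * (K / R ^ 16 + ((4 / (R ^ 2 * var c)) ^ 8 * (cv (cen (rc c L ∅)) A) ^ 16 + (4 * R ^ 6 / var c) * TI (restr c L A))) := by
        intro L A
        have hIH' := hIH m' hm'1 (by linarith) n (restr c L A) (hc.restr L A)
        have hTI0 : 0 ≤ TI (restr c L A) := (var_nonneg _).trans (var_le_TI _)
        have hp1 : 0 ≤ K / R ^ 16 := by positivity
        have hp2 : 0 ≤ (4 / (R ^ 2 * var c)) ^ 8 * (cv (cen (rc c L ∅)) A) ^ 16 := by positivity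
        have hp3 : 0 ≤ (4 * R ^ 6 / var c) * TI (restr c L A) := by positivity
        by_cases hb1 : R ^ 2 * var c / 4 ≤ (cv (cen (rc c L ∅)) A) ^ 2
        · refine hIH'.trans (le_mul_of_one_le_right hX0 ?_)
          have : 1 ≤ (4 / (R ^ 2 * var c)) ^ 8 * (cv (cen (rc c L ∅)) A) ^ 16 := by
            have e : (4 / (R ^ 2 * var c)) ^ 8 * (cv (cen (rc c L ∅)) A) ^ 16 =
              (4 / (R ^ 2 * var c) * (cv (cen (rc c L ∅)) A) ^ 2) ^ 8 := by ring
            rw [e]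
            refine one_le_pow₀ ?_
            rw [div_mul_eq_mul_div, le_div_iff₀ (by positivity)]; linarith
          linarith
        by_cases hb2 : var c ≤ 4 * R ^ 6 * TI (restr c L A)
        · refine hIH'.trans (le_mul_of_one_le_right hX0 ?_)
          have : 1 ≤ (4 * R ^ 6 / var c) * TI (restr c L A) := by
            rw [div_mul_eq_mul_div, le_div_iff₀ hv0]; linarith
          linarith
        push Not at hb1 hb2
        have hmu : R ^ 2 * var c / 4 ≤ restr c L A ∅ ^ 2 := by
          rw [← restr_mean] at hb1
          set a := restr c L A ∅
          have h5 : (a - c ∅) ^ 2 < (c ∅ / 2) ^ 2 := by rw [div_pow]; linarith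
          have h6 : |a - c ∅| < |c ∅ / 2| := sq_lt_sq.1 h5
          have h7 : |c ∅ / 2| ≤ |a| := by
            have := abs_sub_abs_le_abs_sub (c ∅) a
            rw [abs_sub_comm] at this
            rw [abs_div, abs_of_pos (show (0:ℝ) < 2 by norm_num)] at h6 ⊢
            linarith
          have h8 := sq_le_sq.2 h7
          rw [div_pow] at h8
          linarith
        have hgood := ih m' hm'1 (by linarith) (by rw [pow_succ] at hk; linarith) (R ^ 4)
          (hR.trans (by simpa using pow_le_pow_right₀ hR1 (show 1 ≤ 4 by norm_num))) n (restr c L A) (hc.restr L A) (by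
            refine le_trans ?_ hmu
            have := var_le_TI (restr c L A)
            calc (R ^ 4) ^ 2 * var (restr c L A) ≤ (R ^ 4) ^ 2 * TI (restr c L A) := by gcongr
              _ = R ^ 2 * (4 * R ^ 6 * TI (restr c L A)) / 4 := by ring
              _ ≤ _ := by gcongr)
        refine hgood.trans ?_
        rw [← pow_mul, mul_comm]
        exact mul_le_mul_of_nonneg_left (by linarith) hX0
      have h2 : E (bw η) (fun L => E u2 (fun A => tail (restr c L A) m')) ≤
          X * (K / R ^ 16 + (B * 4 ^ 8 / R ^ 16 + 4 * d / R ^ 16)) := by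
        refine (E_mono hw fun L => E_mono u2_pw fun A => hpt L A).trans ?_
        simp only [E_smul, E_add, E_const hw, E_const u2_pw]
        refine mul_le_mul_of_nonneg_left (add_le_add le_rfl (add_le_add ?_ ?_)) hX0
        · have : ∀ L : Fin n → Bool, E u2 (fun A => cv (cen (rc c L ∅)) A ^ 16) ≤ B * var c ^ 8 := by
            intro L
            have h3 := hmom n _ (PD.of (hc.rc L ∅).cen)
            norm_num at h3
            have h4 : E u2 (fun A => cv (cen (rc c L ∅)) A ^ 2) = var (rc c L ∅) := by
              rw [var_eq]; exact parseval mom_chi _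
            rw [h4] at h3
            exact h3.trans (mul_le_mul_of_nonneg_left (pow_le_pow_left₀ (var_nonneg _) (var_rc_le c L) 8) (by linarith))
          have h5 := E_mono hw this
          rw [E_const hw] at h5
          calc _ ≤ (4 / (R ^ 2 * var c)) ^ 8 * (B * var c ^ 8) := by gcongr
            _ = _ := by field_simp
        · rw [E_TI_restr hη0.le hη1]
          have := TI_le hc
          calc _ ≤ 4 * R ^ 6 / var c * (η * (d * var c)) := by gcongr
            _ = _ := by rw [hη]; field_simp
      have hXm : X ≤ 2 * R ^ 11 * (Φ m / Real.sqrt m) := by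
        have e : Real.sqrt m ≤ 2 * R ^ 11 * Real.sqrt m' := by
          rw [Real.sqrt_le_left (by positivity), mul_pow, Real.sq_sqrt hm'0.le, hm', hη]
          have : (2 * R ^ 11) ^ 2 * (1 / R ^ 22 * m / 2) = 2 * m := by field_simp
          rw [this]; linarith
        rw [hX, ← mul_div_assoc, div_le_div_iff₀ (Real.sqrt_pos.2 hm'0) hsm]
        have h4 := hΦm m' m hm'1 (by linarith)
        have h5 := hΦ1 m' hm'1
        calc Φ m' * Real.sqrt m ≤ Φ m * (2 * R ^ 11 * Real.sqrt m') := by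
              apply mul_le_mul h4 e hsm.le; linarith
          _ = _ := by ring
      have hfin : 2 * (2 * R ^ 11 * (K / R ^ 16 + (B * 4 ^ 8 / R ^ 16 + 4 * d / R ^ 16))) ≤ K / R ^ 4 := by
        have e : 2 * (2 * R ^ 11 * (K / R ^ 16 + (B * 4 ^ 8 / R ^ 16 + 4 * d / R ^ 16))) =
          (4 * (K + B * 4 ^ 8 + 4 * d)) / R ^ 5 := by field_simp; ring
        rw [e, div_le_div_iff₀ (by positivity) (by positivity)]
        have : 4 * (K + B * 4 ^ 8 + 4 * d) ≤ K * R := by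
          have h9 : K * 8 ≤ K * R := by gcongr
          have : K + B * 4 ^ 8 + 4 * d ≤ 2 * K := by rw [hK]; linarith
          linarith
        calc _ ≤ K * R * R ^ 4 := by gcongr
          _ = _ := by ring
      have hY0 : 0 ≤ K / R ^ 16 + (B * 4 ^ 8 / R ^ 16 + 4 * d / R ^ 16) := by positivity
      have hZ0 : 0 ≤ Φ m / Real.sqrt m := by have := hΦ1 m hm; positivity
      calc tail c m ≤ 2 * (X * (K / R ^ 16 + (B * 4 ^ 8 / R ^ 16 + 4 * d / R ^ 16))) := by linarith
        _ ≤ 2 * (2 * R ^ 11 * (Φ m / Real.sqrt m) * (K / R ^ 16 + (B * 4 ^ 8 / R ^ 16 + 4 * d / R ^ 16))) := by gcongr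
        _ = (2 * (2 * R ^ 11 * (K / R ^ 16 + (B * 4 ^ 8 / R ^ 16 + 4 * d / R ^ 16)))) * (Φ m / Real.sqrt m) := by ring
        _ ≤ _ := by gcongr
  intro m hm hM R hR n c hc hv
  obtain ⟨k, hk⟩ := pow_unbounded_of_one_lt m (show (1:ℝ) < 2 by norm_num)
  exact key k m hm hM hk.le R hR n c hc hv

/-- Consequence: the tail is controlled by the ratio variance / second moment. -/
lemma Gcor (d : ℕ) : ∃ K : ℝ, 1 ≤ K ∧ ∀ (Φ : ℝ → ℝ), (∀ m, 1 ≤ m → 1 ≤ Φ m) →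
    (∀ m m', 1 ≤ m → m ≤ m' → Φ m ≤ Φ m') → ∀ M, IH d Φ M → ∀ m, 1 ≤ m → m ≤ M →
    ∀ (n : ℕ) (c : Finset (Fin n) → ℝ), Deg d c →
      tail c m ≤ K * (var c / (c ∅ ^ 2 + var c)) * (Φ m / Real.sqrt m) := by
  obtain ⟨K, hK, h⟩ := Glem d
  refine ⟨65 * K, by linarith, fun Φ hΦ1 hΦm M hIH m hm hM n c hc => ?_⟩
  have hZ0 : 0 ≤ Φ m / Real.sqrt m := by have := hΦ1 m hm; positivity
  rcases (var_nonneg c).eq_or_lt with hv0 | hv0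
  · rw [tail_var_zero hv0.symm (by linarith), ← hv0]; simp
  have hs : 0 < c ∅ ^ 2 + var c := by positivity
  by_cases hb : 8 ^ 2 * var c ≤ c ∅ ^ 2
  · set R := Real.sqrt (c ∅ ^ 2 / var c) with hR
    have hR2 : R ^ 2 = c ∅ ^ 2 / var c := Real.sq_sqrt (by positivity)
    have hR8 : 8 ≤ R := by
      rw [hR]; apply Real.le_sqrt_of_sq_le; rw [le_div_iff₀ hv0]; exact hb
    have h1 := h Φ hΦ1 hΦm M hIH m hm hM R hR8 n c hc (by rw [hR2]; field_simp; exact le_rfl)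
    refine h1.trans (mul_le_mul_of_nonneg_right ?_ hZ0)
    have h2 : K / R ^ 4 ≤ K / R ^ 2 := by
      refine div_le_div_of_nonneg_left (by linarith) (by positivity) (pow_le_pow_right₀ (by linarith) (by norm_num))
    refine h2.trans ?_
    rw [hR2, div_div_eq_mul_div, ← mul_div_assoc, div_le_div_iff₀ (by nlinarith) hs]
    have : 0 < K * var c := by positivity
    nlinarith
  · push Not at hb
    have h1 := hIH m hm hM n c hc
    refine h1.trans (le_mul_of_one_le_left hZ0 ?_)
    rw [← mul_div_assoc, le_div_iff₀ hs]
    nlinarith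

end glem
end STB


namespace STB

section stage
variable {n : ℕ}

/-- Regularity. -/
def Reg (τ : ℝ) (c : Finset (Fin n) → ℝ) : Prop := ∑ i, inf i c ^ 2 ≤ τ * var c ^ 2

/-- Skewness. -/
def Skew (κ : ℝ) (c : Finset (Fin n) → ℝ) : Prop := var c ≤ κ * c ∅ ^ 2

/-- Remaining total influence. -/
noncomputable def TH (c : Finset (Fin n) → ℝ) (L : Fin n → Bool) : ℝ :=
  wsq (fun S => ((S.filter (fun i => L i = true)).card : ℝ)) c

lemma TH_nonneg (c : Finset (Fin n) → ℝ) (L : Fin n → Bool) : 0 ≤ TH c L := wsq_nonneg c fun _ => Nat.cast_nonneg _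

lemma TH_eq_sum (c : Finset (Fin n) → ℝ) (L : Fin n → Bool) :
    TH c L = ∑ i, if L i = true then inf i c else 0 := by
  unfold TH inf wsq
  have : ∀ i : Fin n, (if L i = true then ∑ S : Finset (Fin n), (if i ∈ S then (1:ℝ) else 0) * c S ^ 2 else 0) =
      ∑ S : Finset (Fin n), (if i ∈ S.filter (fun i => L i = true) then (1:ℝ) else 0) * c S ^ 2 := by
    intro i
    by_cases h : L i = true <;> simp [h]
  simp only [this]
  rw [Finset.sum_comm]
  refine Finset.sum_congr rfl fun S _ => ?_
  rw [← Finset.sum_mul]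
  congr 1
  rw [Finset.sum_boole]
  congr 2
  ext i
  simp

lemma greedy (c : Finset (Fin n) → ℝ) {τ : ℝ} (h0 : 0 ≤ τ) (h1 : τ ≤ 1) (k : ℕ) :
    ∃ L : Fin n → Bool, (Finset.univ.filter (fun i => L i = false)).card ≤ k ∧
      ((∀ i, L i = true → inf i c ≤ τ * TH c L) ∨ TH c L ≤ (1 - τ) ^ k * TI c) := by
  induction k with
  | zero => exact ⟨fun _ => true, by simp, Or.inr (by simp [TH, TI])⟩
  | succ k ih =>
    obtain ⟨L, hL, h⟩ := ih
    rcases h with h | h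
    · exact ⟨L, hL.trans (Nat.le_succ k), Or.inl h⟩
    · by_cases hc : ∀ i, L i = true → inf i c ≤ τ * TH c L
      · exact ⟨L, hL.trans (Nat.le_succ k), Or.inl hc⟩
      · push Not at hc
        obtain ⟨i, hi, hic⟩ := hc
        refine ⟨Function.update L i false, ?_, Or.inr ?_⟩
        · have : Finset.univ.filter (fun j => Function.update L i false j = false) ⊆
              insert i (Finset.univ.filter (fun i => L i = false)) := by
            intro j hj
            simp only [Finset.mem_filter, Finset.mem_univ, true_and, Finset.mem_insert] at hj ⊢
            by_cases hji : j = i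
            · exact Or.inl hji
            · rw [Function.update_of_ne hji] at hj; exact Or.inr hj
          exact (Finset.card_le_card this).trans ((Finset.card_insert_le _ _).trans (by omega))
        · have e : TH c (Function.update L i false) = TH c L - inf i c := by
            rw [TH_eq_sum, TH_eq_sum, ← Finset.add_sum_erase _ _ (Finset.mem_univ i),
              ← Finset.add_sum_erase (a := i) Finset.univ (fun i => if L i = true then inf i c else 0) (Finset.mem_univ i)]
            simp only [Function.update_self, hi]
            have : ∑ x ∈ Finset.univ.erase i, (if Function.update L i false x = true then inf x c else 0) =
                ∑ x ∈ Finset.univ.erase i, (if L x = true then inf x c else 0) := by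
              refine Finset.sum_congr rfl fun j hj => ?_
              rw [Function.update_of_ne (Finset.ne_of_mem_erase hj)]
            rw [this]; simp
          rw [e, pow_succ]
          have : (1 - τ) * TH c L ≤ (1 - τ) * ((1 - τ) ^ k * TI c) := mul_le_mul_of_nonneg_left h (by linarith)
          nlinarith

lemma ind_and {P Q : Prop} : ind P - ind (¬ Q) ≤ ind (P ∧ Q) := by
  by_cases hP : P <;> by_cases hQ : Q <;> simp [ind, hP, hQ]

lemma stage {d : ℕ} (hd : 1 ≤ d) (c : Finset (Fin n) → ℝ) (hc : Deg d c) {τ : ℝ} (h0 : 0 ≤ τ) (h1 : τ ≤ 1) (k : ℕ)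
    (hk : d * (1 - τ) ^ k ≤ 1 / 2) :
    ∃ L : Fin n → Bool, (Finset.univ.filter (fun i => L i = false)).card ≤ k ∧
      1 / (8 * 9 ^ d) ≤ E u2 (fun A => ind (Reg (32 * d ^ 2 * 81 ^ d * τ) (restr c L A) ∨
        Skew (32 * d * 9 ^ d * (1 - τ) ^ k) (restr c L A))) := by
  obtain ⟨L, hL, h⟩ := greedy c h0 h1 k
  refine ⟨L, hL, ?_⟩
  have h9 : (1:ℝ) ≤ 9 ^ d := one_le_pow₀ (by norm_num)
  have h81 : (81:ℝ) ^ d = 9 ^ d * 9 ^ d := by rw [← mul_pow]; norm_num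
  have hT0 := TH_nonneg c L
  have hfin : ∀ (P Q : (Fin n → Bool) → Prop), 1 / (4 * 9 ^ d) ≤ E u2 (fun A => ind (P A)) →
      E u2 (fun A => ind (¬ Q A)) ≤ 1 / (8 * 9 ^ d) → 1 / (8 * 9 ^ d) ≤ E u2 (fun A => ind (P A ∧ Q A)) := by
    intro P Q hP hQ
    have h2 : E u2 (fun A => ind (P A) - ind (¬ Q A)) ≤ E u2 (fun A => ind (P A ∧ Q A)) :=
      E_mono u2_pw fun A => ind_and
    rw [E_sub] at h2
    have : (1:ℝ) / (4 * 9 ^ d) = 2 * (1 / (8 * 9 ^ d)) := by field_simp; norm_num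
    linarith
  have hETI : E u2 (fun A => TI (restr c L A)) = TH c L := E_wsq_restr c L _
  have hTI0 : ∀ A, 0 ≤ TI (restr c L A) := fun A => (var_nonneg _).trans (var_le_TI _)
  rcases h with h | h
  · have hp := paley u2_pw (V := fun A => TI (restr c L A)) hTI0 h9 (by
      rw [hETI]; exact E_wsq_restr_sq hc L _ (fun _ => Nat.cast_nonneg _))
    rw [hETI] at hp
    have hZ : E u2 (fun A => ∑ i, inf i (restr c L A) ^ 2) ≤ 9 ^ d * τ * TH c L ^ 2 := by
      rw [E_sum]
      have h2 : ∀ i : Fin n, E u2 (fun A => inf i (restr c L A) ^ 2) ≤ 9 ^ d * (τ * TH c L) * (if L i = true then inf i c else 0) := by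
        intro i
        have h3 := E_wsq_restr_sq hc L (fun S => if i ∈ S then 1 else 0) (fun S => by split_ifs <;> norm_num)
        refine h3.trans ?_
        rw [mul_assoc]
        refine mul_le_mul_of_nonneg_left ?_ (by positivity)
        by_cases hi : L i = true
        · have : wsq (fun S => if i ∈ S.filter (fun i => L i = true) then (1:ℝ) else 0) c = inf i c := by
            simp [wsq, inf, hi]
          rw [this, if_pos hi, _root_.sq]
          exact mul_le_mul_of_nonneg_right (h i hi) (inf_nonneg i c)
        · have : wsq (fun S => if i ∈ S.filter (fun i => L i = true) then (1:ℝ) else 0) c = 0 := by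
            simp [wsq, hi]
          rw [this, if_neg hi]; simp
      refine (Finset.sum_le_sum fun i _ => h2 i).trans ?_
      rw [← Finset.mul_sum, ← TH_eq_sum]
      apply le_of_eq; ring
    have hm := markov u2_pw (fun A => Finset.sum_nonneg fun i _ => sq_nonneg (inf i (restr c L A))) hZ (by positivity)
      (show (0:ℝ) < 1 / (8 * 9 ^ d) by positivity)
    have hf := hfin (fun A => TH c L / 2 ≤ TI (restr c L A)) (fun A => ∑ i, inf i (restr c L A) ^ 2 ≤ 9 ^ d * τ * TH c L ^ 2 / (1 / (8 * 9 ^ d)))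
      hp (by simpa only [not_le] using hm)
    refine hf.trans (E_mono u2_pw fun A => ind_mono ?_)
    rintro ⟨h2, h3⟩
    left
    unfold Reg
    refine h3.trans ?_
    have h4 := TI_le (hc.restr L A)
    have h5 : TH c L ^ 2 ≤ (2 * (d * var (restr c L A))) ^ 2 := pow_le_pow_left₀ hT0 (by linarith) 2
    have e : 9 ^ d * τ * TH c L ^ 2 / (1 / (8 * 9 ^ d)) = (8 * 81 ^ d * τ) * TH c L ^ 2 := by
      rw [h81]; field_simp
    rw [e]
    calc _ ≤ (8 * 81 ^ d * τ) * (2 * (d * var (restr c L A))) ^ 2 := by gcongr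
      _ = _ := by ring
  · have hTv : TH c L ≤ d * (1 - τ) ^ k * var c := by
      have hq : 0 ≤ (1 - τ) ^ k := pow_nonneg (by linarith) k
      have := mul_le_mul_of_nonneg_left (TI_le hc) hq
      linarith
    have hv0 := var_nonneg c
    have hmE : E u2 (fun A => restr c L A ∅ ^ 2) = sq (rc c L ∅) := parseval mom_chi _
    have hmu : var c / 2 ≤ E u2 (fun A => restr c L A ∅ ^ 2) := by
      have h2 : E u2 (fun A => sq (restr c L A)) = sq c := by
        have := E_wsq_restr c L (fun _ => 1)
        simpa [wsq, sq] using this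
      have h3 : E u2 (fun A => sq (restr c L A)) ≤ E u2 (fun A => restr c L A ∅ ^ 2 + TI (restr c L A)) :=
        E_mono u2_pw fun A => by rw [sq_eq]; have := var_le_TI (restr c L A); linarith
      rw [E_add, hETI, h2, sq_eq] at h3
      have : d * (1 - τ) ^ k * var c ≤ 1 / 2 * var c := mul_le_mul_of_nonneg_right hk hv0
      nlinarith [sq_nonneg (c ∅)]
    have hp := paley u2_pw (V := fun A => restr c L A ∅ ^ 2) (fun A => sq_nonneg _) h9 (by
      rw [hmE]
      have := hyper4 mom_chi (rc c L ∅) d (hc.rc L ∅)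
      refine le_trans (le_of_eq ?_) this
      congr 1; funext A
      rw [← pow_mul]; rfl)
    have hm := markov u2_pw hTI0 (hETI.le.trans hTv) (mul_nonneg (mul_nonneg (by positivity) (pow_nonneg (by linarith) k)) hv0)
      (show (0:ℝ) < 1 / (8 * 9 ^ d) by positivity)
    have hf := hfin (fun A => E u2 (fun A => restr c L A ∅ ^ 2) / 2 ≤ restr c L A ∅ ^ 2)
      (fun A => TI (restr c L A) ≤ d * (1 - τ) ^ k * var c / (1 / (8 * 9 ^ d)))
      hp (by simpa only [not_le] using hm)
    refine hf.trans (E_mono u2_pw fun A => ind_mono ?_)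
    rintro ⟨h2, h3⟩
    right
    unfold Skew
    refine (var_le_TI _).trans (h3.trans ?_)
    have e : d * (1 - τ) ^ k * var c / (1 / (8 * 9 ^ d)) = (8 * d * 9 ^ d * (1 - τ) ^ k) * var c := by field_simp
    rw [e]
    have hq : 0 ≤ 8 * d * 9 ^ d * (1 - τ) ^ k := mul_nonneg (by positivity) (pow_nonneg (by linarith) k)
    have : var c ≤ 4 * restr c L A ∅ ^ 2 := by linarith
    calc _ ≤ (8 * d * 9 ^ d * (1 - τ) ^ k) * (4 * restr c L A ∅ ^ 2) := by gcongr
      _ = _ := by ring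

end stage
end STB


namespace STB

section lindeberg

/-- The test function. -/
noncomputable def psi (a b : ℝ) : ℝ := b ^ 2 / (1 + a ^ 2 + b ^ 2)

lemma psi_nonneg (a b : ℝ) : 0 ≤ psi a b := by unfold psi; positivity
lemma psi_le_one (a b : ℝ) : psi a b ≤ 1 := by
  unfold psi; rw [div_le_one (by positivity)]; nlinarith [sq_nonneg a]

set_option maxHeartbeats 2000000 in
lemma psi_taylor (a b : ℝ) : ∃ A0 A1 A2 A11 A12 A22 : ℝ, ∀ α β : ℝ,
    |psi (a + α) (b + β) - (A0 + A1 * α + A2 * β + A11 * α ^ 2 + A12 * (α * β) + A22 * β ^ 2)| ≤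
      34 * (|α| + |β|) ^ 3 := by
  set D : ℝ := 1 + a ^ 2 + b ^ 2 with hD
  have hD1 : 1 ≤ D := by rw [hD]; nlinarith [sq_nonneg a, sq_nonneg b]
  set s : ℝ := Real.sqrt D with hs
  have hs2 : s ^ 2 = D := Real.sq_sqrt (by linarith)
  have hs1 : 1 ≤ s := by rw [hs]; exact Real.one_le_sqrt.2 hD1
  have ha : |a| ≤ s := abs_le_of_sq_le_sq (by rw [hs2, hD]; nlinarith [sq_nonneg b]) (by linarith)
  have hb : |b| ≤ s := abs_le_of_sq_le_sq (by rw [hs2, hD]; nlinarith [sq_nonneg a]) (by linarith)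
  set q : ℝ := b ^ 2 / D with hq
  have hq0 : 0 ≤ q := by positivity
  have hq1 : q ≤ 1 := by rw [hq, div_le_one (by linarith), hD]; nlinarith [sq_nonneg a]
  refine ⟨q, -(q * 2 * a) / D, (2 * b - q * 2 * b) / D,
    (-q - (-(q * 2 * a) / D) * (2 * a)) / D,
    (-(-(q * 2 * a) / D) * (2 * b) - ((2 * b - q * 2 * b) / D) * (2 * a)) / D,
    (1 - q - ((2 * b - q * 2 * b) / D) * (2 * b)) / D, fun α β => ?_⟩
  set ρ : ℝ := |α| + |β| with hρ
  have hρ0 : 0 ≤ ρ := by positivity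
  have hα : |α| ≤ ρ := by rw [hρ]; linarith [abs_nonneg β]
  have hβ : |β| ≤ ρ := by rw [hρ]; linarith [abs_nonneg α]
  set e1 : ℝ := 2 * a * α + 2 * b * β with he1
  set e2 : ℝ := α ^ 2 + β ^ 2 with he2
  set q1 : ℝ := (2 * b * β - q * e1) / D with hq1d
  set q2 : ℝ := (β ^ 2 - q * e2 - q1 * e1) / D with hq2d
  have hQ : q + -(q * 2 * a) / D * α + (2 * b - q * 2 * b) / D * β +
    (-q - (-(q * 2 * a) / D) * (2 * a)) / D * α ^ 2 +
    (-(-(q * 2 * a) / D) * (2 * b) - ((2 * b - q * 2 * b) / D) * (2 * a)) / D * (α * β) +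
    (1 - q - ((2 * b - q * 2 * b) / D) * (2 * b)) / D * β ^ 2 = q + q1 + q2 := by
    rw [hq2d, hq1d, he1, he2]; field_simp; ring
  rw [hQ]
  have hE1 : |e1| ≤ 2 * s * ρ := by
    rw [he1]
    refine (abs_add_le _ _).trans ?_
    rw [abs_mul, abs_mul, abs_mul, abs_mul, abs_two, hρ]
    nlinarith [abs_nonneg α, abs_nonneg β, mul_le_mul_of_nonneg_right ha (abs_nonneg α), mul_le_mul_of_nonneg_right hb (abs_nonneg β)]
  have hE2 : |e2| ≤ ρ ^ 2 := by
    rw [he2, abs_of_nonneg (by positivity), hρ, ← sq_abs α, ← sq_abs β]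
    nlinarith [abs_nonneg α, abs_nonneg β, mul_nonneg (abs_nonneg α) (abs_nonneg β)]
  have hs0 : 0 < s := by linarith
  have hb1 : |2 * b * β| ≤ 2 * s * ρ := by
    rw [abs_mul, abs_mul, abs_two]
    have := mul_le_mul hb hβ (abs_nonneg _) hs0.le
    linarith
  have hqe : |q * e1| ≤ 2 * s * ρ := by
    rw [abs_mul, abs_of_nonneg hq0]
    have := mul_le_mul_of_nonneg_right hq1 (abs_nonneg e1)
    linarith
  have hQ1 : |q1| ≤ 4 * ρ / s := by
    rw [hq1d, abs_div, abs_of_pos (show 0 < D by linarith), div_le_div_iff₀ (by linarith) hs0]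
    have : |2 * b * β - q * e1| ≤ 4 * s * ρ := (abs_sub _ _).trans (by linarith)
    calc _ ≤ 4 * s * ρ * s := by gcongr
      _ = 4 * ρ * D := by rw [← hs2]; ring
  have hq11 : |q1 * e1| ≤ 8 * ρ ^ 2 := by
    rw [abs_mul]
    calc _ ≤ 4 * ρ / s * (2 * s * ρ) := by gcongr
      _ = _ := by field_simp; ring
  have hQ2 : |q2| ≤ 10 * ρ ^ 2 / s ^ 2 := by
    rw [hq2d, abs_div, abs_of_pos (show 0 < D by linarith), hs2]
    refine div_le_div_of_nonneg_right ?_ (by linarith)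
    have h1 : |q * e2| ≤ ρ ^ 2 := by
      rw [abs_mul, abs_of_nonneg hq0]
      have := mul_le_mul_of_nonneg_right hq1 (abs_nonneg e2)
      linarith
    have h2 : |β ^ 2| ≤ ρ ^ 2 := by rw [abs_pow]; gcongr
    calc _ ≤ |β ^ 2 - q * e2| + |q1 * e1| := abs_sub _ _
      _ ≤ |β ^ 2| + |q * e2| + |q1 * e1| := by gcongr; exact abs_sub _ _
      _ ≤ _ := by linarith
  have hQ1' : |q1| ≤ 4 * ρ := hQ1.trans (div_le_self (by positivity) hs1)
  have hQ2' : |q2| ≤ 10 * ρ ^ 2 := hQ2.trans (div_le_self (by positivity) (one_le_pow₀ hs1))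
  rcases le_total ρ 1 with hr | hr
  · have hden : 1 + (a + α) ^ 2 + (b + β) ^ 2 = D + e1 + e2 := by rw [hD, he1, he2]; ring
    have hpos : 1 ≤ D + e1 + e2 := by rw [← hden]; nlinarith [sq_nonneg (a + α), sq_nonneg (b + β)]
    have hrem : psi (a + α) (b + β) - (q + q1 + q2) = -(q2 * e1 + q1 * e2 + q2 * e2) / (D + e1 + e2) := by
      have hD0 : D ≠ 0 := by linarith
      have hq1e : q1 * D = 2 * b * β - q * e1 := by rw [hq1d]; field_simp
      have hq2e : q2 * D = β ^ 2 - q * e2 - q1 * e1 := by rw [hq2d]; field_simp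
      have hqe : q * D = b ^ 2 := by rw [hq]; field_simp
      unfold psi
      rw [hden, eq_div_iff (by linarith), sub_mul, div_mul_cancel₀ _ (by linarith)]
      linear_combination -hq1e - hq2e - hqe
    rw [hrem, abs_div, abs_of_pos (show 0 < D + e1 + e2 by linarith), abs_neg]
    refine (div_le_self (abs_nonneg _) hpos).trans ?_
    have t1 : |q2 * e1| ≤ 20 * ρ ^ 3 := by
      rw [abs_mul]
      calc _ ≤ 10 * ρ ^ 2 / s ^ 2 * (2 * s * ρ) := by gcongr
        _ = 20 * ρ ^ 3 / s := by field_simp; ring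
        _ ≤ _ := div_le_self (by positivity) hs1
    have t2 : |q1 * e2| ≤ 4 * ρ ^ 3 := by
      rw [abs_mul]
      calc _ ≤ 4 * ρ * ρ ^ 2 := by gcongr
        _ = _ := by ring
    have t3 : |q2 * e2| ≤ 10 * ρ ^ 3 := by
      rw [abs_mul]
      calc _ ≤ 10 * ρ ^ 2 * ρ ^ 2 := by gcongr
        _ = 10 * ρ ^ 3 * ρ := by ring
        _ ≤ 10 * ρ ^ 3 * 1 := by gcongr
        _ = _ := by ring
    calc _ ≤ |q2 * e1 + q1 * e2| + |q2 * e2| := abs_add_le _ _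
      _ ≤ |q2 * e1| + |q1 * e2| + |q2 * e2| := by gcongr; exact abs_add_le _ _
      _ ≤ _ := by linarith
  · have h1 : |psi (a + α) (b + β)| ≤ 1 := by rw [abs_of_nonneg (psi_nonneg _ _)]; exact psi_le_one _ _
    have hq' : |q| ≤ 1 := by rw [abs_of_nonneg hq0]; exact hq1
    have hr1 : (1:ℝ) ≤ ρ ^ 3 := one_le_pow₀ hr
    have hr2 : ρ ≤ ρ ^ 3 := by simpa using pow_le_pow_right₀ hr (show 1 ≤ 3 by norm_num)
    have hr3 : ρ ^ 2 ≤ ρ ^ 3 := pow_le_pow_right₀ hr (by norm_num)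
    calc _ ≤ |psi (a + α) (b + β)| + |q + q1 + q2| := abs_sub _ _
      _ ≤ |psi (a + α) (b + β)| + (|q| + |q1| + |q2|) := by gcongr; exact abs_add_three _ _ _
      _ ≤ _ := by linarith

variable {κ : Type*} [Fintype κ] {n : ℕ}

/-- Moment conditions on a single variable. -/
structure Good (w X : κ → ℝ) : Prop where
  m1 : ∑ k, w k * X k = 0
  m2 : ∑ k, w k * X k ^ 2 = 1
  m3 : ∑ k, w k * X k ^ 3 = 0
  bd : ∀ k, |X k| ≤ 2

/-- Hybrids. -/
noncomputable def hy (V : Finset (Fin n)) (X0 X1 : κ → ℝ) (i : Fin n) : κ → ℝ := if i ∈ V then X1 else X0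

lemma mom_hy {w X0 X1 : κ → ℝ} (hw : PW w) (h0 : Good w X0) (h1 : Good w X1) (V : Finset (Fin n)) :
    Mom w (hy V X0 X1) := by
  have h4 : ∀ X, Good w X → ∑ k, w k * X k ^ 4 ≤ 9 := by
    intro X hX
    have : ∑ k, w k * X k ^ 4 ≤ ∑ k, 4 * (w k * X k ^ 2) := by
      refine Finset.sum_le_sum fun k _ => ?_
      have h2 : X k ^ 2 ≤ 4 := by
        rw [← sq_abs]; have := hX.bd k; nlinarith [abs_nonneg (X k)]
      have := hw.1 k
      have h3 : X k ^ 4 ≤ 4 * X k ^ 2 := by nlinarith [sq_nonneg (X k)]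
      nlinarith
    rw [← Finset.mul_sum, hX.m2] at this
    linarith
  constructor
  · exact hw
  all_goals intro i; unfold hy; split_ifs
  · exact h1.m1
  · exact h0.m1
  · exact h1.m2
  · exact h0.m2
  · exact h1.m3
  · exact h0.m3
  · exact h4 _ h1
  · exact h4 _ h0

lemma one_step {w X0 Y0 X1 Y1 : κ → ℝ} (hw : PW w) (hX0 : Good w X0) (hY0 : Good w Y0) (hX1 : Good w X1)
    (hY1 : Good w Y1) (hxy : ∑ k, w k * (X0 k * Y0 k) = ∑ k, w k * (X1 k * Y1 k)) {t l : ℝ} (ht : 0 ≤ t) (hl0 : 0 ≤ l)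
    (hl : l ≤ t) (a b p q : ℝ) :
    |∑ k, w k * psi (a + t * (X1 k * p)) (b + l * (Y1 k * q - X1 k * p)) -
      ∑ k, w k * psi (a + t * (X0 k * p)) (b + l * (Y0 k * q - X0 k * p))| ≤ 17408 * t ^ 3 * (|p| ^ 3 + |q| ^ 3) := by
  obtain ⟨A0, A1, A2, A11, A12, A22, h⟩ := psi_taylor a b
  have side : ∀ X Y : κ → ℝ, Good w X → Good w Y →
      |∑ k, w k * psi (a + t * (X k * p)) (b + l * (Y k * q - X k * p)) -
        (A0 + A11 * (t ^ 2 * p ^ 2) + A12 * (t * l * (p * q * ∑ k, w k * (X k * Y k) - p ^ 2)) +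
          A22 * (l ^ 2 * (q ^ 2 - 2 * p * q * ∑ k, w k * (X k * Y k) + p ^ 2)))| ≤ 8704 * t ^ 3 * (|p| ^ 3 + |q| ^ 3) := by
    intro X Y hX hY
    have e : (A0 + A11 * (t ^ 2 * p ^ 2) + A12 * (t * l * (p * q * ∑ k, w k * (X k * Y k) - p ^ 2)) +
          A22 * (l ^ 2 * (q ^ 2 - 2 * p * q * ∑ k, w k * (X k * Y k) + p ^ 2))) =
        ∑ k, w k * (A0 + A1 * (t * (X k * p)) + A2 * (l * (Y k * q - X k * p)) + A11 * (t * (X k * p)) ^ 2 +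
          A12 * ((t * (X k * p)) * (l * (Y k * q - X k * p))) + A22 * (l * (Y k * q - X k * p)) ^ 2) := by
      have : ∀ k, w k * (A0 + A1 * (t * (X k * p)) + A2 * (l * (Y k * q - X k * p)) + A11 * (t * (X k * p)) ^ 2 +
          A12 * ((t * (X k * p)) * (l * (Y k * q - X k * p))) + A22 * (l * (Y k * q - X k * p)) ^ 2) =
          A0 * w k + (A1 * t * p - A2 * l * p) * (w k * X k) + A2 * l * q * (w k * Y k) +
          (A11 * t ^ 2 * p ^ 2 - A12 * t * l * p ^ 2 + A22 * l ^ 2 * p ^ 2) * (w k * X k ^ 2) +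
          (A12 * t * l * p * q - 2 * A22 * l ^ 2 * p * q) * (w k * (X k * Y k)) + A22 * l ^ 2 * q ^ 2 * (w k * Y k ^ 2) := by
        intro k; ring
      simp only [this, Finset.sum_add_distrib, ← Finset.mul_sum, hw.2, hX.m1, hY.m1, hX.m2, hY.m2]
      ring
    rw [e, ← Finset.sum_sub_distrib]
    refine (Finset.abs_sum_le_sum_abs _ _).trans ?_
    have : ∀ k, |w k * psi (a + t * (X k * p)) (b + l * (Y k * q - X k * p)) - w k * (A0 + A1 * (t * (X k * p)) + A2 * (l * (Y k * q - X k * p)) + A11 * (t * (X k * p)) ^ 2 +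
          A12 * ((t * (X k * p)) * (l * (Y k * q - X k * p))) + A22 * (l * (Y k * q - X k * p)) ^ 2)| ≤ w k * (8704 * t ^ 3 * (|p| ^ 3 + |q| ^ 3)) := by
      intro k
      rw [← mul_sub, abs_mul, abs_of_nonneg (hw.1 k)]
      refine mul_le_mul_of_nonneg_left ((h _ _).trans ?_) (hw.1 k)
      have hx := hX.bd k
      have hy := hY.bd k
      have h1 : |t * (X k * p)| ≤ 2 * t * |p| := by
        rw [abs_mul, abs_mul, abs_of_nonneg ht]
        have := mul_le_mul_of_nonneg_right hx (abs_nonneg p)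
        nlinarith
      have h2 : |l * (Y k * q - X k * p)| ≤ 2 * t * (|q| + |p|) := by
        rw [abs_mul, abs_of_nonneg hl0]
        have h3 : |Y k * q - X k * p| ≤ 2 * (|q| + |p|) := by
          refine (abs_sub _ _).trans ?_
          rw [abs_mul, abs_mul]
          have := mul_le_mul_of_nonneg_right hx (abs_nonneg p)
          have := mul_le_mul_of_nonneg_right hy (abs_nonneg q)
          linarith
        calc _ ≤ t * (2 * (|q| + |p|)) := by gcongr
          _ = _ := by ring
      have h3 : |t * (X k * p)| + |l * (Y k * q - X k * p)| ≤ 4 * t * (|p| + |q|) := by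
        have := mul_nonneg ht (abs_nonneg q); linarith
      calc _ ≤ 34 * (4 * t * (|p| + |q|)) ^ 3 := by gcongr
        _ = 2176 * t ^ 3 * (|p| + |q|) ^ 3 := by ring
        _ ≤ 2176 * t ^ 3 * (4 * (|p| ^ 3 + |q| ^ 3)) := by
            gcongr
            nlinarith [abs_nonneg p, abs_nonneg q, mul_nonneg (add_nonneg (abs_nonneg p) (abs_nonneg q)) (sq_nonneg (|p| - |q|))]
        _ = _ := by ring
    refine (Finset.sum_le_sum fun k _ => this k).trans ?_
    rw [← Finset.sum_mul, hw.2, one_mul]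
  have s0 := side X0 Y0 hX0 hY0
  have s1 := side X1 Y1 hX1 hY1
  rw [hxy] at s0
  rw [abs_le] at *
  constructor <;> linarith [s0.1, s0.2, s1.1, s1.2]

lemma cube_le {x s : ℝ} (hs : 0 < s) : |x| ^ 3 ≤ s * x ^ 2 + x ^ 4 / s := by
  have h : |x| ^ 3 * s ≤ s ^ 2 * |x| ^ 2 + |x| ^ 4 := by
    nlinarith [sq_nonneg (|x| * s - |x| ^ 2), sq_nonneg (|x| * s), sq_nonneg (|x| ^ 2)]
  have e1 : |x| ^ 4 = x ^ 4 := by rw [← abs_pow]; exact abs_of_nonneg (by positivity)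
  rw [sq_abs, e1] at h
  have : s * x ^ 2 + x ^ 4 / s = (s ^ 2 * x ^ 2 + x ^ 4) / s := by field_simp
  rw [this, le_div_iff₀ hs]
  exact h

lemma E_cube {w : κ → ℝ} {ξ : Fin n → κ → ℝ} (hm : Mom w ξ) {d : ℕ} {c : Finset (Fin n) → ℝ} (hc : Deg d c) {s : ℝ} (hs : 0 < s) :
    E w (fun ω => |ev c (fun i => ξ i (ω i))| ^ 3) ≤ s * sq c + 9 ^ d * sq c ^ 2 / s := by
  have h1 : ∀ ω : Fin n → κ, |ev c (fun i => ξ i (ω i))| ^ 3 ≤ s * ev c (fun i => ξ i (ω i)) ^ 2 + (1 / s) * ev c (fun i => ξ i (ω i)) ^ 4 :=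
    fun ω => (cube_le hs).trans (by apply le_of_eq; ring)
  refine (E_mono hm.pw h1).trans ?_
  rw [E_add, E_smul, E_smul, parseval hm]
  have := mul_le_mul_of_nonneg_left (hyper4 hm c d hc) (show 0 ≤ 1 / s by positivity)
  calc _ ≤ s * sq c + 1 / s * (9 ^ d * sq c ^ 2) := by linarith
    _ = _ := by ring

lemma lindeberg {w X0 Y0 X1 Y1 : κ → ℝ} (hw : PW w) (hX0 : Good w X0) (hY0 : Good w Y0) (hX1 : Good w X1)
    (hY1 : Good w Y1) (hxy : ∑ k, w k * (X0 k * Y0 k) = ∑ k, w k * (X1 k * Y1 k)) {t l : ℝ} (ht : 0 ≤ t) (hl0 : 0 ≤ l)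
    (hl : l ≤ t) {d : ℕ} {c : Finset (Fin n) → ℝ} (hc : Deg d c) {s : ℝ} (hs : 0 < s) :
    |E w (fun ω => psi (t * ev c (fun i => X1 (ω i))) (l * (ev c (fun i => Y1 (ω i)) - ev c (fun i => X1 (ω i))))) -
      E w (fun ω => psi (t * ev c (fun i => X0 (ω i))) (l * (ev c (fun i => Y0 (ω i)) - ev c (fun i => X0 (ω i)))))| ≤
      34816 * t ^ 3 * (s * TI c + 9 ^ d * (∑ i, inf i c ^ 2) / s) := by
  set f : Finset (Fin n) → ℝ := fun V => E w (fun ω => psi (t * ev c (fun i => hy V X0 X1 i (ω i)))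
    (l * (ev c (fun i => hy V Y0 Y1 i (ω i)) - ev c (fun i => hy V X0 X1 i (ω i))))) with hf
  have key : ∀ V : Finset (Fin n), |f V - f ∅| ≤ ∑ i ∈ V, 34816 * t ^ 3 * (s * inf i c + 9 ^ d * inf i c ^ 2 / s) := by
    intro V
    induction V using Finset.induction with
    | empty => simp
    | insert i V hi ih =>
      rw [Finset.sum_insert hi]
      have hstep : |f (insert i V) - f V| ≤ 34816 * t ^ 3 * (s * inf i c + 9 ^ d * inf i c ^ 2 / s) := by
        simp only [hf]
        rw [E_fub hw i, E_fub hw i (fun ω => psi (t * ev c (fun i => hy V X0 X1 i (ω i)))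
          (l * (ev c (fun i => hy V Y0 Y1 i (ω i)) - ev c (fun i => hy V X0 X1 i (ω i))))), ← E_sub]
        refine (E_abs hw _).trans ?_
        have e1 : ∀ (Z0 Z1 : κ → ℝ) (ω : Fin n → κ) (k : κ), ev c (fun j => hy (insert i V) Z0 Z1 j (Function.update ω i k j)) =
            ev (cz i c) (fun j => hy V Z0 Z1 j (ω j)) + Z1 k * ev (cd i c) (fun j => hy V Z0 Z1 j (ω j)) := by
          intro Z0 Z1 ω k
          have hcong : ∀ j, j ≠ i → hy (insert i V) Z0 Z1 j (Function.update ω i k j) = hy V Z0 Z1 j (ω j) := by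
            intro j hj; rw [Function.update_of_ne hj]; simp [hy, hj]
          rw [ev_split i, ev_congr (cz_zero i c) hcong, ev_congr (cd_zero i c) hcong]
          simp [hy]
        have e0 : ∀ (Z0 Z1 : κ → ℝ) (ω : Fin n → κ) (k : κ), ev c (fun j => hy V Z0 Z1 j (Function.update ω i k j)) =
            ev (cz i c) (fun j => hy V Z0 Z1 j (ω j)) + Z0 k * ev (cd i c) (fun j => hy V Z0 Z1 j (ω j)) := by
          intro Z0 Z1 ω k
          have hcong : ∀ j, j ≠ i → hy V Z0 Z1 j (Function.update ω i k j) = hy V Z0 Z1 j (ω j) := by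
            intro j hj; rw [Function.update_of_ne hj]
          rw [ev_split i, ev_congr (cz_zero i c) hcong, ev_congr (cd_zero i c) hcong]
          simp [hy, hi]
        have hpt : ∀ ω : Fin n → κ, _ ≤ 17408 * t ^ 3 * (|ev (cd i c) (fun j => hy V X0 X1 j (ω j))| ^ 3 + |ev (cd i c) (fun j => hy V Y0 Y1 j (ω j))| ^ 3) :=
          fun ω => one_step hw hX0 hY0 hX1 hY1 hxy ht hl0 hl (t * ev (cz i c) (fun j => hy V X0 X1 j (ω j)))
            (l * (ev (cz i c) (fun j => hy V Y0 Y1 j (ω j)) - ev (cz i c) (fun j => hy V X0 X1 j (ω j))))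
            (ev (cd i c) (fun j => hy V X0 X1 j (ω j))) (ev (cd i c) (fun j => hy V Y0 Y1 j (ω j)))
        have hle : E w (fun ω => 17408 * t ^ 3 * (|ev (cd i c) (fun j => hy V X0 X1 j (ω j))| ^ 3 + |ev (cd i c) (fun j => hy V Y0 Y1 j (ω j))| ^ 3)) ≤
            34816 * t ^ 3 * (s * inf i c + 9 ^ d * inf i c ^ 2 / s) := by
          rw [E_smul, E_add, inf_eq]
          have hx := E_cube (mom_hy hw hX0 hX1 V) (hc.cd' i) hs
          have hy := E_cube (mom_hy hw hY0 hY1 V) (hc.cd' i) hs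
          have ht3 : 0 ≤ 17408 * t ^ 3 := by positivity
          have := mul_le_mul_of_nonneg_left (add_le_add hx hy) ht3
          linarith
        refine le_trans (E_mono hw fun ω => ?_) hle
        refine le_trans (le_of_eq ?_) (hpt ω)
        simp only [e1, e0]
        congr 2
        · refine Finset.sum_congr rfl fun k _ => ?_
          congr 2 <;> ring
        · refine Finset.sum_congr rfl fun k _ => ?_
          congr 2 <;> ring
      calc _ = |(f (insert i V) - f V) + (f V - f ∅)| := by congr 1; ring
        _ ≤ |f (insert i V) - f V| + |f V - f ∅| := abs_add_le _ _
        _ ≤ _ := add_le_add hstep ih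
  have h := key Finset.univ
  simp only [hf, hy, Finset.mem_univ, if_true, Finset.notMem_empty, if_false] at h
  refine h.trans (le_of_eq ?_)
  rw [← Finset.mul_sum, Finset.sum_add_distrib, ← Finset.mul_sum, sum_inf, ← Finset.sum_div, ← Finset.mul_sum]

end lindeberg
end STB

namespace STB

section circle

variable {N : ℕ} [NeZero N]

/-- Roots of unity. -/
noncomputable def zt (j : ZMod N) : ℂ := ZMod.stdAddChar j

lemma zt_add (i j : ZMod N) : zt (i + j) = zt i * zt j := AddChar.map_add_eq_mul _ _ _
lemma zt_norm (j : ZMod N) : ‖zt j‖ = 1 := AddChar.norm_apply _ _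
lemma zt_zero : zt (0 : ZMod N) = 1 := AddChar.map_zero_eq_one _
lemma zt_nat (k : ℕ) : zt (k : ZMod N) = Complex.exp (Complex.I * ((2 * Real.pi * k / N : ℝ) : ℂ)) := by
  have := ZMod.stdAddChar_coe (N := N) (k : ℤ)
  unfold zt
  push_cast at this
  rw [this]; congr 1; push_cast; ring

lemma zt_sub_one (k : ℕ) : ‖zt (k : ZMod N) - 1‖ = 2 * |Real.sin (Real.pi * k / N)| := by
  rw [zt_nat, Complex.norm_exp_I_mul_ofReal_sub_one, Real.norm_eq_abs, abs_mul, abs_two]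
  congr 3; ring

lemma zt_dist (i j : ZMod N) : ‖zt i - zt j‖ = ‖zt (i - j) - 1‖ := by
  have : zt i - zt j = zt j * (zt (i - j) - 1) := by
    rw [mul_sub, ← zt_add, mul_one]; simp
  rw [this, norm_mul, zt_norm, one_mul]

lemma sum_val (F : ℕ → ℝ) : ∑ j : ZMod N, F j.val = ∑ k ∈ range N, F k := by
  refine Finset.sum_bij (fun j _ => j.val) (fun j _ => mem_range.2 (ZMod.val_lt j))
    (fun a _ b _ h => ZMod.val_injective N h) (fun k hk => ⟨(k : ZMod N), mem_univ _, ?_⟩) (fun _ _ => rfl)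
  exact ZMod.val_cast_of_lt (mem_range.1 hk)

/-- step size -/
noncomputable def dl (N : ℕ) [NeZero N] : ℝ := ‖zt (1 : ZMod N) - 1‖

lemma dl_eq : dl N = 2 * |Real.sin (Real.pi / N)| := by
  have := zt_sub_one (N := N) 1
  simpa [dl] using this

lemma dl_le : dl N ≤ 2 * Real.pi / N := by
  rw [dl_eq]
  have := Real.abs_sin_le_abs (x := Real.pi / N)
  rw [abs_of_nonneg (a := Real.pi / N) (by positivity)] at this
  calc _ ≤ 2 * (Real.pi / N) := by linarith
    _ = _ := by ring

lemma sin_low {k : ℕ} (h1 : 1 ≤ k) (hk : k < N) :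
    1 / (4 * Real.sin (Real.pi * k / N) ^ 2) ≤ N ^ 2 / 16 * (1 / (k:ℝ) ^ 2 + 1 / ((N:ℝ) - k) ^ 2) := by
  have hN : (0:ℝ) < N := by exact_mod_cast Nat.pos_of_ne_zero (NeZero.ne N)
  have hk0 : (0:ℝ) < k := by exact_mod_cast h1
  have hkN : (0:ℝ) < (N:ℝ) - k := by rw [sub_pos]; exact_mod_cast hk
  have key : ∀ y : ℝ, 0 < y → y ≤ N / 2 → 1 / (4 * Real.sin (Real.pi * y / N) ^ 2) ≤ N ^ 2 / 16 * (1 / y ^ 2) := by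
    intro y hy hy2
    have h := Real.mul_le_sin (x := Real.pi * y / N) (by positivity) (by
      rw [div_le_div_iff₀ hN (by norm_num)]; nlinarith [Real.pi_pos])
    have e : 2 / Real.pi * (Real.pi * y / N) = 2 * y / N := by field_simp
    rw [e] at h
    have : N ^ 2 / 16 * (1 / y ^ 2) = 1 / (4 * (2 * y / N) ^ 2) := by field_simp; norm_num
    rw [this]
    gcongr
  rcases le_total (k:ℝ) (N/2) with h | h
  · refine (key k hk0 h).trans ?_
    have : 0 ≤ 1 / ((N:ℝ) - k) ^ 2 := by positivity
    gcongr; linarith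
  · have h' := key (N - k) hkN (by linarith)
    have e : Real.pi * (N - k) / N = Real.pi - Real.pi * k / N := by field_simp
    rw [e, Real.sin_pi_sub] at h'
    refine h'.trans ?_
    have : 0 ≤ 1 / (k:ℝ) ^ 2 := by positivity
    gcongr; linarith

lemma dl_low (hN : 2 ≤ N) : 4 / N ≤ dl N := by
  have hN0 : (0:ℝ) < N := by exact_mod_cast (by omega : 0 < N)
  have h2 : (2:ℝ) ≤ N := by exact_mod_cast hN
  have h := Real.mul_le_sin (x := Real.pi / N) (by positivity) (by gcongr)
  rw [dl_eq]
  have e : 2 / Real.pi * (Real.pi / N) = 2 / N := by field_simp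
  rw [e] at h
  have := h.trans (le_abs_self _)
  calc (4:ℝ) / N = 2 * (2 / N) := by ring
    _ ≤ _ := by gcongr

lemma sum_inv_sq (n : ℕ) : ∑ k ∈ Ioo 0 n, 1 / (k:ℝ) ^ 2 ≤ 2 := by
  have := sum_Ioo_inv_sq_le (α := ℝ) 0 n
  simpa using this

lemma sum_grid (hN : 2 ≤ N) : ∑ j : ZMod N, (if j = 0 then (0:ℝ) else 1 / ‖zt j - 1‖ ^ 2) ≤ (N:ℝ) ^ 2 / 4 := by
  have h0 : ∀ j : ZMod N, (if j = 0 then (0:ℝ) else 1 / ‖zt j - 1‖ ^ 2) =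
      (fun k : ℕ => if k = 0 then (0:ℝ) else 1 / (4 * Real.sin (Real.pi * k / N) ^ 2)) j.val := by
    intro j
    by_cases h : j = 0
    · simp [h]
    · have hv : j.val ≠ 0 := by rwa [Ne, ZMod.val_eq_zero]
      simp only [h, hv, if_false]
      have := zt_sub_one (N := N) j.val
      rw [ZMod.natCast_zmod_val] at this
      rw [this, mul_pow, sq_abs]; norm_num
  rw [Finset.sum_congr rfl (fun j _ => h0 j), sum_val (N := N) (fun k : ℕ => if k = 0 then (0:ℝ) else 1 / (4 * Real.sin (Real.pi * k / N) ^ 2))]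
  have h1 : ∑ k ∈ range N, (if k = 0 then (0:ℝ) else 1 / (4 * Real.sin (Real.pi * k / N) ^ 2)) =
      ∑ k ∈ Ioo 0 N, 1 / (4 * Real.sin (Real.pi * k / N) ^ 2) := by
    rw [Finset.sum_ite, Finset.sum_const_zero, zero_add]
    refine Finset.sum_congr ?_ fun _ _ => rfl
    ext k; simp; omega
  rw [h1]
  calc _ ≤ ∑ k ∈ Ioo 0 N, (N:ℝ) ^ 2 / 16 * (1 / (k:ℝ) ^ 2 + 1 / ((N:ℝ) - k) ^ 2) := by
        refine Finset.sum_le_sum fun k hk => ?_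
        rw [mem_Ioo] at hk
        exact sin_low hk.1 hk.2
    _ = (N:ℝ) ^ 2 / 16 * (∑ k ∈ Ioo 0 N, 1 / (k:ℝ) ^ 2 + ∑ k ∈ Ioo 0 N, 1 / ((N:ℝ) - k) ^ 2) := by
        rw [← Finset.mul_sum, Finset.sum_add_distrib]
    _ = (N:ℝ) ^ 2 / 16 * (∑ k ∈ Ioo 0 N, 1 / (k:ℝ) ^ 2 + ∑ k ∈ Ioo 0 N, 1 / (k:ℝ) ^ 2) := by
        congr 2
        refine Finset.sum_nbij' (fun k => N - k) (fun k => N - k) ?_ ?_ ?_ ?_ ?_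
        · intro k; simp; omega
        · intro k; simp; omega
        · intro k; simp; omega
        · intro k; simp; omega
        · intro k hk
          rw [mem_Ioo] at hk
          rw [Nat.cast_sub hk.2.le]
    _ ≤ (N:ℝ) ^ 2 / 16 * (2 + 2) := by gcongr <;> exact sum_inv_sq N
    _ = _ := by ring

/-- The local mass of a root. -/
noncomputable def ms (N : ℕ) [NeZero N] (z r : ℂ) : ℝ := if ‖z - r‖ < dl N then 1 else dl N ^ 2 / ‖z - r‖ ^ 2

lemma ms_nonneg (z r : ℂ) : 0 ≤ ms N z r := by unfold ms; split_ifs <;> positivity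
lemma ms_le_one (hN : 2 ≤ N) (z r : ℂ) : ms N z r ≤ 1 := by
  unfold ms; split_ifs with h
  · exact le_rfl
  · have h0 : 0 < dl N := lt_of_lt_of_le (by have : (0:ℝ) < N := by exact_mod_cast (by omega : 0 < N)
                                             positivity) (dl_low hN)
    push Not at h
    exact div_le_one_of_le₀ (by gcongr) (by positivity)

set_option maxHeartbeats 1000000 in
lemma sum_ms (hN : 2 ≤ N) (r : ℂ) : ∑ j : ZMod N, ms N (zt j) r ≤ 41 := by
  have hN0 : (0:ℝ) < N := by exact_mod_cast (by omega : 0 < N)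
  have h0 : 0 < dl N := lt_of_lt_of_le (by positivity) (dl_low hN)
  obtain ⟨j0, -, hj0⟩ := Finset.exists_min_image (univ : Finset (ZMod N)) (fun j => ‖zt j - r‖) ⟨0, mem_univ _⟩
  have hb : ∀ j : ZMod N, ms N (zt j) r ≤ (if j = j0 then 1 else 0) + 4 * dl N ^ 2 * (if j - j0 = 0 then (0:ℝ) else 1 / ‖zt (j - j0) - 1‖ ^ 2) := by
    intro j
    by_cases h : j = j0
    · simp [h]; exact ms_le_one hN _ _
    · have hne : j - j0 ≠ 0 := sub_ne_zero.2 h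
      rw [if_neg h, if_neg hne, zero_add, ← zt_dist]
      have hd : ‖zt j - zt j0‖ ≤ 2 * ‖zt j - r‖ := by
        have : zt j - zt j0 = (zt j - r) - (zt j0 - r) := by ring
        rw [this]
        have := norm_sub_le (zt j - r) (zt j0 - r)
        have := hj0 j (mem_univ _)
        linarith
      have hpos : 0 < ‖zt j - zt j0‖ := by
        rw [norm_pos_iff, sub_ne_zero]
        exact fun h' => h (ZMod.injective_stdAddChar h')
      have hpos2 : 0 < ‖zt j - r‖ := by linarith
      have h2 : ‖zt j - zt j0‖ ^ 2 ≤ 4 * ‖zt j - r‖ ^ 2 := by nlinarith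
      have : dl N ^ 2 / ‖zt j - r‖ ^ 2 ≤ 4 * dl N ^ 2 * (1 / ‖zt j - zt j0‖ ^ 2) := by
        rw [mul_one_div, div_le_div_iff₀ (by positivity) (by positivity)]
        nlinarith [sq_nonneg (dl N)]
      unfold ms
      split_ifs with hs
      · refine le_trans ?_ this
        rw [one_le_div (by positivity)]
        gcongr
      · exact this
  have hg := sum_grid (N := N) hN
  have hs : ∑ j : ZMod N, (if j - j0 = 0 then (0:ℝ) else 1 / ‖zt (j - j0) - 1‖ ^ 2) =
      ∑ j : ZMod N, (if j = 0 then (0:ℝ) else 1 / ‖zt j - 1‖ ^ 2) :=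
    Equiv.sum_comp (Equiv.subRight j0) (fun j : ZMod N => if j = 0 then (0:ℝ) else 1 / ‖zt j - 1‖ ^ 2)
  calc _ ≤ ∑ j : ZMod N, ((if j = j0 then 1 else 0) + 4 * dl N ^ 2 * (if j - j0 = 0 then (0:ℝ) else 1 / ‖zt (j - j0) - 1‖ ^ 2)) :=
        Finset.sum_le_sum fun j _ => hb j
    _ = 1 + 4 * dl N ^ 2 * ∑ j : ZMod N, (if j = 0 then (0:ℝ) else 1 / ‖zt j - 1‖ ^ 2) := by
        rw [Finset.sum_add_distrib, ← Finset.mul_sum, hs]; simp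
    _ ≤ 1 + 4 * (2 * Real.pi / N) ^ 2 * (N ^ 2 / 4) := by
        have h2 : dl N ^ 2 ≤ (2 * Real.pi / N) ^ 2 := pow_le_pow_left₀ h0.le dl_le 2
        have h3 := mul_le_mul (mul_le_mul_of_nonneg_left h2 (by norm_num : (0:ℝ) ≤ 4)) hg
          (Finset.sum_nonneg fun j _ => by split_ifs <;> positivity) (by positivity)
        linarith
    _ = 1 + 4 * Real.pi ^ 2 := by field_simp; ring
    _ ≤ 41 := by nlinarith [Real.pi_lt_d2, Real.pi_pos]

end circle

end STB

namespace STB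

section circle2

lemma ms_prod (x : ℂ → ℂ) (R : Multiset ℂ) (h : ∀ r ∈ R, ‖x r‖ ≤ 1) :
    ‖(R.map (fun r => 1 + x r)).prod - 1‖ ≤ 2 ^ R.card * (R.map (fun r => ‖x r‖)).sum := by
  induction R using Multiset.induction_on with
  | empty => simp
  | cons a R ih =>
    have ih' := ih fun r hr => h r (Multiset.mem_cons_of_mem hr)
    have ha := h a (Multiset.mem_cons_self a R)
    simp only [Multiset.map_cons, Multiset.prod_cons, Multiset.sum_cons, Multiset.card_cons]
    set P := (R.map (fun r => 1 + x r)).prod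
    set s := (R.map (fun r => ‖x r‖)).sum with hs
    have hs0 : 0 ≤ s := Multiset.sum_nonneg (by simp)
    have e : (1 + x a) * P - 1 = (1 + x a) * (P - 1) + x a := by ring
    rw [e]
    have h1 : ‖1 + x a‖ ≤ 2 := (norm_add_le _ _).trans (by rw [norm_one]; linarith)
    have h2 : (1:ℝ) ≤ 2 ^ (R.card + 1) := one_le_pow₀ (by norm_num)
    calc _ ≤ ‖1 + x a‖ * ‖P - 1‖ + ‖x a‖ := (norm_add_le _ _).trans (by rw [norm_mul])
      _ ≤ 2 * (2 ^ R.card * s) + 2 ^ (R.card + 1) * ‖x a‖ := by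
        gcongr
        nlinarith [norm_nonneg (x a)]
      _ = _ := by ring

lemma ms_sq (x : ℂ → ℝ) (R : Multiset ℂ) :
    (R.map x).sum ^ 2 ≤ 2 ^ R.card * (R.map (fun r => x r ^ 2)).sum := by
  induction R using Multiset.induction_on with
  | empty => simp
  | cons a R ih =>
    simp only [Multiset.map_cons, Multiset.sum_cons, Multiset.card_cons]
    have h2 : (1:ℝ) ≤ 2 ^ R.card := one_le_pow₀ (by norm_num)
    rw [pow_succ (2:ℝ)]
    nlinarith [sq_nonneg (x a - (R.map x).sum), mul_le_mul_of_nonneg_right h2 (sq_nonneg (x a))]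

lemma ms_prod_le (x : ℂ → ℂ) (B : ℝ) (hB : 1 ≤ B) (R : Multiset ℂ) (h : ∀ r ∈ R, ‖x r‖ ≤ B) :
    ‖(R.map x).prod‖ ≤ B ^ R.card := by
  induction R using Multiset.induction_on with
  | empty => simp
  | cons a R ih =>
    have ih' := ih fun r hr => h r (Multiset.mem_cons_of_mem hr)
    have ha := h a (Multiset.mem_cons_self a R)
    simp only [Multiset.map_cons, Multiset.prod_cons, Multiset.card_cons, norm_mul]
    rw [pow_succ, mul_comm]
    gcongr

lemma pow_sub_one_le (u : ℂ) (hu : ‖u‖ = 1) (d : ℕ) : ‖u ^ d - 1‖ ≤ d * ‖u - 1‖ := by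
  induction d with
  | zero => simp
  | succ d ih =>
    have e : u ^ (d + 1) - 1 = u ^ d * (u - 1) + (u ^ d - 1) := by ring
    rw [e]
    refine (norm_add_le _ _).trans ?_
    rw [norm_mul, norm_pow, hu, one_pow]; push_cast; linarith

lemma psi_le1 {a b t ρ : ℝ} (h : |b| ≤ ρ * |a|) (hρ : 0 ≤ ρ) : psi (t * a) (t * b) ≤ ρ ^ 2 := by
  have h2 : b ^ 2 ≤ ρ ^ 2 * a ^ 2 := by
    rw [← sq_abs b, ← sq_abs a, ← mul_pow]; gcongr
  unfold psi
  rw [div_le_iff₀ (by positivity)]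
  nlinarith [mul_le_mul_of_nonneg_left h2 (sq_nonneg t), sq_nonneg ρ, sq_nonneg (ρ * (t * b))]

lemma psi_le2 {a b t ρ : ℝ} (ht : 0 < t) (h : |b| ≤ ρ * |a|) (hρ : 0 ≤ ρ) : psi (t * a) b ≤ (ρ / t) ^ 2 := by
  have h2 : b ^ 2 ≤ ρ ^ 2 * a ^ 2 := by
    rw [← sq_abs b, ← sq_abs a, ← mul_pow]; gcongr
  unfold psi
  rw [div_le_iff₀ (by positivity)]
  have e : (ρ / t) ^ 2 * (1 + (t * a) ^ 2 + b ^ 2) = ρ ^ 2 * a ^ 2 + (ρ / t) ^ 2 * (1 + b ^ 2) := by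
    field_simp; ring
  rw [e]
  have : 0 ≤ (ρ / t) ^ 2 * (1 + b ^ 2) := by positivity
  linarith

variable {N : ℕ} [NeZero N]

/-- ratio of values at two grid points -/
lemma ratio (R : Multiset ℂ) (ld : ℂ) (d : ℕ) (g : ZMod N → ℝ)
    (hg : ∀ j, zt j ^ d * (g j : ℂ) = ld * (R.map (fun r => zt j - r)).prod) (j s : ZMod N)
    (hne : ∀ r ∈ R, zt j - r ≠ 0) :
    ((g (j + s) - g j : ℝ) : ℂ) = g j * ((zt (-s)) ^ d * (R.map (fun r => 1 + (zt (j + s) - zt j) / (zt j - r))).prod - 1) := by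
  have h1 : (R.map (fun r => zt (j + s) - r)).prod =
      (R.map (fun r => zt j - r)).prod * (R.map (fun r => 1 + (zt (j + s) - zt j) / (zt j - r))).prod := by
    rw [← Multiset.prod_map_mul]
    refine congrArg _ (Multiset.map_congr rfl fun r hr => ?_)
    have := hne r hr
    field_simp; ring
  have h2 := hg (j + s)
  rw [h1, ← mul_assoc, ← hg j] at h2
  have hz : zt (j + s) ^ d ≠ 0 := pow_ne_zero _ (by rw [← norm_ne_zero_iff, zt_norm]; norm_num)
  have h3 : zt j ^ d = zt (j + s) ^ d * zt (-s) ^ d := by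
    rw [← mul_pow, ← zt_add]; simp
  rw [h3] at h2
  push_cast
  refine mul_left_cancel₀ hz ?_
  rw [mul_sub, h2]; ring

lemma sum_step (hN : 2 ≤ N) (R : Multiset ℂ) (ld : ℂ) (d : ℕ) (hR : R.card ≤ 2 * d) (g : ZMod N → ℝ)
    (hg : ∀ j, zt j ^ d * (g j : ℂ) = ld * (R.map (fun r => zt j - r)).prod) (t : ℝ) :
    ∑ j, psi (t * g j) (t * (g (j + 1) - g j)) ≤ 2 * 64 ^ d * (82 * d) + 80 * d ^ 2 := by
  have hN0 : (0:ℝ) < N := by exact_mod_cast (by omega : 0 < N)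
  have h0 : 0 < dl N := lt_of_lt_of_le (by positivity) (dl_low hN)
  have hb : ∀ j, psi (t * g j) (t * (g (j + 1) - g j)) ≤
      2 * 64 ^ d * (R.map (fun r => ms N (zt j) r)).sum + 2 * d ^ 2 * dl N ^ 2 := by
    intro j
    have h64 : (1:ℝ) ≤ 64 ^ d := one_le_pow₀ (by norm_num)
    by_cases hbad : ∃ r ∈ R, ‖zt j - r‖ < dl N
    · obtain ⟨r, hr, hr2⟩ := hbad
      have h1 : (1:ℝ) ≤ (R.map (fun r => ms N (zt j) r)).sum := by
        have := Multiset.single_le_sum (s := R.map (fun r => ms N (zt j) r)) (by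
          intro x hx; rw [Multiset.mem_map] at hx; obtain ⟨r, -, rfl⟩ := hx; exact ms_nonneg _ _) 
          (ms N (zt j) r) (Multiset.mem_map_of_mem _ hr)
        refine le_trans ?_ this
        unfold ms; rw [if_pos hr2]
      have h2 := psi_le_one (t * g j) (t * (g (j + 1) - g j))
      have : 0 ≤ 2 * (d:ℝ) ^ 2 * dl N ^ 2 := by positivity
      nlinarith
    · push Not at hbad
      have hne : ∀ r ∈ R, zt j - r ≠ 0 := fun r hr h => by
        have := hbad r hr; rw [h, norm_zero] at this; linarith
      have hrat := ratio R ld d g hg j 1 hne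
      set P := (R.map (fun r => 1 + (zt (j + 1) - zt j) / (zt j - r))).prod with hP
      have hdl : ‖zt (j + 1) - zt j‖ = dl N := by rw [zt_dist]; simp [dl]
      have hdl' : ‖zt (-1 : ZMod N) - 1‖ = dl N := by
        rw [← zt_zero (N := N), zt_dist, ← norm_neg, neg_sub, ← zt_zero (N := N), zt_dist]; simp [dl]
      have hx : ∀ r, ‖(zt (j + 1) - zt j) / (zt j - r)‖ = dl N / ‖zt j - r‖ := by
        intro r; rw [norm_div, hdl]
      have hP1 : ‖P - 1‖ ≤ 2 ^ R.card * (R.map (fun r => dl N / ‖zt j - r‖)).sum := by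
        have := ms_prod (fun r => (zt (j + 1) - zt j) / (zt j - r)) R (fun r hr => by
          rw [hx]; exact div_le_one_of_le₀ (hbad r hr) (norm_nonneg _))
        simpa only [hx] using this
      set ρ := 2 ^ R.card * (R.map (fun r => dl N / ‖zt j - r‖)).sum + d * dl N with hρ
      have hs0 : 0 ≤ (R.map (fun r => dl N / ‖zt j - r‖)).sum := by
        apply Multiset.sum_nonneg; intro x hx; rw [Multiset.mem_map] at hx
        obtain ⟨r, -, rfl⟩ := hx; positivity
      have hu : ‖zt (-1 : ZMod N) ^ d * P - 1‖ ≤ ρ := by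
        have e : zt (-1 : ZMod N) ^ d * P - 1 = zt (-1 : ZMod N) ^ d * (P - 1) + (zt (-1 : ZMod N) ^ d - 1) := by ring
        rw [e]
        refine (norm_add_le _ _).trans ?_
        rw [norm_mul, norm_pow, zt_norm, one_pow, one_mul]
        have := pow_sub_one_le (zt (-1 : ZMod N)) (zt_norm _) d
        rw [hdl'] at this
        linarith
      have hab : |g (j + 1) - g j| ≤ ρ * |g j| := by
        have := congrArg norm hrat
        rw [norm_mul, Complex.norm_real, Complex.norm_real, Real.norm_eq_abs, Real.norm_eq_abs] at this
        rw [this, mul_comm]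
        gcongr
      refine (psi_le1 hab (by positivity)).trans ?_
      have hsq := ms_sq (fun r => dl N / ‖zt j - r‖) R
      have hmm : (R.map (fun r => (dl N / ‖zt j - r‖) ^ 2)).sum = (R.map (fun r => ms N (zt j) r)).sum := by
        refine congrArg _ (Multiset.map_congr rfl fun r hr => ?_)
        unfold ms
        rw [if_neg (not_lt.2 (hbad r hr)), div_pow]
      rw [hmm] at hsq
      set M := (R.map (fun r => ms N (zt j) r)).sum
      have hM0 : 0 ≤ M := by
        apply Multiset.sum_nonneg; intro x hx; rw [Multiset.mem_map] at hx
        obtain ⟨r, -, rfl⟩ := hx; exact ms_nonneg _ _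
      calc ρ ^ 2 ≤ 2 * (2 ^ R.card * (R.map (fun r => dl N / ‖zt j - r‖)).sum) ^ 2 + 2 * (d * dl N) ^ 2 := by
            rw [hρ]; nlinarith [sq_nonneg (2 ^ R.card * (R.map (fun r => dl N / ‖zt j - r‖)).sum - d * dl N)]
        _ ≤ 2 * ((2 ^ R.card) ^ 2 * (2 ^ R.card * M)) + 2 * (d * dl N) ^ 2 := by
            rw [mul_pow]; gcongr
        _ = 2 * (8 ^ R.card * M) + 2 * (d * dl N) ^ 2 := by
            congr 2
            rw [← mul_assoc, ← pow_succ, ← pow_mul, mul_comm _ 3, pow_mul]; norm_num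
        _ ≤ 2 * (8 ^ (2 * d) * M) + 2 * (d * dl N) ^ 2 := by
            gcongr; norm_num
        _ = _ := by rw [pow_mul]; norm_num; ring
  have hsum : ∀ R : Multiset ℂ, ∑ j : ZMod N, (R.map (fun r => ms N (zt j) r)).sum ≤ 41 * R.card := by
    intro R
    induction R using Multiset.induction_on with
    | empty => simp
    | cons a R ih =>
      simp only [Multiset.map_cons, Multiset.sum_cons, Multiset.card_cons, Finset.sum_add_distrib]
      have := sum_ms hN a
      push_cast; linarith
  have hRc : (R.card : ℝ) ≤ 2 * d := by exact_mod_cast hR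
  calc _ ≤ ∑ j : ZMod N, (2 * 64 ^ d * (R.map (fun r => ms N (zt j) r)).sum + 2 * (d:ℝ) ^ 2 * dl N ^ 2) :=
        Finset.sum_le_sum fun j _ => hb j
    _ = 2 * 64 ^ d * ∑ j : ZMod N, (R.map (fun r => ms N (zt j) r)).sum + N * (2 * (d:ℝ) ^ 2 * dl N ^ 2) := by
        rw [Finset.sum_add_distrib, ← Finset.mul_sum]; simp
    _ ≤ 2 * 64 ^ d * (41 * (2 * d)) + N * (2 * (d:ℝ) ^ 2 * (2 * Real.pi / N) ^ 2) := by
        have := hsum R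
        have h2 : dl N ^ 2 ≤ (2 * Real.pi / N) ^ 2 := pow_le_pow_left₀ h0.le dl_le 2
        have h3 : ∑ j : ZMod N, (R.map (fun r => ms N (zt j) r)).sum ≤ 41 * (2 * d) := by linarith
        gcongr
    _ = 2 * 64 ^ d * (82 * d) + (8 * Real.pi ^ 2 / N) * d ^ 2 := by field_simp; ring
    _ ≤ _ := by
        gcongr
        rw [div_le_iff₀ hN0]
        have : (2:ℝ) ≤ N := by exact_mod_cast hN
        nlinarith [Real.pi_lt_d2, Real.pi_pos]

lemma sum_far (hN : 4 ≤ N) (R : Multiset ℂ) (ld : ℂ) (d : ℕ) (hR : R.card ≤ 2 * d) (g : ZMod N → ℝ)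
    (hg : ∀ j, zt j ^ d * (g j : ℂ) = ld * (R.map (fun r => zt j - r)).prod) (s : ZMod N) :
    ∑ j, psi ((N:ℝ) ^ (2 * d + 1) * g j) (g (j + s) - g j) ≤ 82 * d + 4 := by
  have hN0 : (0:ℝ) < N := by exact_mod_cast (by omega : 0 < N)
  have hN4 : (4:ℝ) ≤ N := by exact_mod_cast hN
  have hdlow := dl_low (N := N) (by omega)
  have h0 : 0 < dl N := lt_of_lt_of_le (by positivity) hdlow
  have hb : ∀ j, psi ((N:ℝ) ^ (2 * d + 1) * g j) (g (j + s) - g j) ≤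
      (R.map (fun r => ms N (zt j) r)).sum + 4 / N ^ 2 := by
    intro j
    have hM0 : 0 ≤ (R.map (fun r => ms N (zt j) r)).sum := by
        apply Multiset.sum_nonneg; intro x hx; rw [Multiset.mem_map] at hx
        obtain ⟨r, -, rfl⟩ := hx; exact ms_nonneg _ _
    by_cases hbad : ∃ r ∈ R, ‖zt j - r‖ < dl N
    · obtain ⟨r, hr, hr2⟩ := hbad
      have h1 : (1:ℝ) ≤ (R.map (fun r => ms N (zt j) r)).sum := by
        have := Multiset.single_le_sum (s := R.map (fun r => ms N (zt j) r)) (by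
          intro x hx; rw [Multiset.mem_map] at hx; obtain ⟨r, -, rfl⟩ := hx; exact ms_nonneg _ _) 
          (ms N (zt j) r) (Multiset.mem_map_of_mem _ hr)
        refine le_trans ?_ this
        unfold ms; rw [if_pos hr2]
      have h2 := psi_le_one ((N:ℝ) ^ (2 * d + 1) * g j) (g (j + s) - g j)
      have : 0 ≤ 4 / (N:ℝ) ^ 2 := by positivity
      linarith
    · push Not at hbad
      have hne : ∀ r ∈ R, zt j - r ≠ 0 := fun r hr h => by
        have := hbad r hr; rw [h, norm_zero] at this; linarith
      have hrat := ratio R ld d g hg j s hne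
      set P := (R.map (fun r => 1 + (zt (j + s) - zt j) / (zt j - r))).prod with hP
      have hPN : ‖P‖ ≤ (N:ℝ) ^ R.card := by
        refine ms_prod_le _ N (by linarith) R fun r hr => ?_
        refine (norm_add_le _ _).trans ?_
        rw [norm_one, norm_div]
        have h2 : ‖zt (j + s) - zt j‖ ≤ 2 := (norm_sub_le _ _).trans (by rw [zt_norm, zt_norm]; norm_num)
        have h3 : ‖zt (j + s) - zt j‖ / ‖zt j - r‖ ≤ N / 2 := by
          calc _ ≤ 2 / (4 / (N:ℝ)) := by gcongr; exact hdlow.trans (hbad r hr)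
            _ = _ := by field_simp; norm_num
        linarith
      have hPN2 : ‖P‖ ≤ (N:ℝ) ^ (2 * d) := hPN.trans (pow_le_pow_right₀ (by linarith) hR)
      have h1N : (1:ℝ) ≤ (N:ℝ) ^ (2 * d) := one_le_pow₀ (by linarith)
      have hu : ‖zt (-s) ^ d * P - 1‖ ≤ 2 * (N:ℝ) ^ (2 * d) := by
        refine (norm_sub_le _ _).trans ?_
        rw [norm_mul, norm_pow, zt_norm, one_pow, one_mul, norm_one]
        linarith
      have hab : |g (j + s) - g j| ≤ (2 * (N:ℝ) ^ (2 * d)) * |g j| := by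
        have := congrArg norm hrat
        rw [norm_mul, Complex.norm_real, Complex.norm_real, Real.norm_eq_abs, Real.norm_eq_abs] at this
        rw [this, mul_comm]
        gcongr
      refine (psi_le2 (by positivity) hab (by positivity)).trans ?_
      have : (2 * (N:ℝ) ^ (2 * d) / N ^ (2 * d + 1)) ^ 2 = 4 / N ^ 2 := by
        rw [pow_succ (N:ℝ)]; field_simp; norm_num
      linarith
  have hsum : ∀ R : Multiset ℂ, ∑ j : ZMod N, (R.map (fun r => ms N (zt j) r)).sum ≤ 41 * R.card := by
    intro R
    induction R using Multiset.induction_on with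
    | empty => simp
    | cons a R ih =>
      simp only [Multiset.map_cons, Multiset.sum_cons, Multiset.card_cons, Finset.sum_add_distrib]
      have := sum_ms (N := N) (by omega) a
      push_cast; linarith
  have hRc : (R.card : ℝ) ≤ 2 * d := by exact_mod_cast hR
  calc _ ≤ ∑ j : ZMod N, ((R.map (fun r => ms N (zt j) r)).sum + 4 / (N:ℝ) ^ 2) :=
        Finset.sum_le_sum fun j _ => hb j
    _ = ∑ j : ZMod N, (R.map (fun r => ms N (zt j) r)).sum + N * (4 / (N:ℝ) ^ 2) := by
        rw [Finset.sum_add_distrib]; simp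
    _ ≤ 41 * (2 * d) + 4 / N := by
        have := hsum R
        have e : N * (4 / (N:ℝ) ^ 2) = 4 / N := by field_simp
        rw [e]; gcongr; linarith
    _ ≤ _ := by
        have : 4 / (N:ℝ) ≤ 4 := div_le_self (by norm_num) (by linarith)
        linarith

/-- the circle variable -/
noncomputable def xc (k : ZMod N) : ℝ := √2 * (zt k).re

open Polynomial in
lemma exists_poly {n : ℕ} (c : Finset (Fin n) → ℝ) (d : ℕ) (hc : Deg d c) (φ : Fin n → ZMod N) :
    ∃ Q : ℂ[X], Q.natDegree ≤ 2 * d ∧ ∀ j : ZMod N, Q.eval (zt j) = zt j ^ d * (ev c (fun i => xc (φ i + j)) : ℂ) := by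
  refine ⟨∑ S, C (c S : ℂ) * ((∏ i ∈ S, (C ((√2 / 2 : ℂ) * zt (φ i)) * X ^ 2 + C ((√2 / 2 : ℂ) * starRingEnd ℂ (zt (φ i))))) * X ^ (d - S.card)), ?_, ?_⟩
  · refine Polynomial.natDegree_sum_le_of_forall_le _ _ fun S _ => ?_
    by_cases h : c S = 0
    · simp [h]
    · have hS := hc S h
      refine (natDegree_C_mul_le _ _).trans (natDegree_mul_le.trans ?_)
      have h1 : (∏ i ∈ S, (C ((√2 / 2 : ℂ) * zt (φ i)) * X ^ 2 + C ((√2 / 2 : ℂ) * starRingEnd ℂ (zt (φ i))))).natDegree ≤ ∑ i ∈ S, 2 := by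
        refine (natDegree_prod_le _ _).trans (Finset.sum_le_sum fun i _ => ?_)
        compute_degree
      have h2 : (X ^ (d - S.card) : ℂ[X]).natDegree ≤ d - S.card := natDegree_X_pow_le _
      simp only [Finset.sum_const, smul_eq_mul] at h1
      omega
  · intro j
    rw [eval_finsetSum]
    unfold ev
    push_cast
    rw [Finset.mul_sum]
    refine Finset.sum_congr rfl fun S _ => ?_
    by_cases h : c S = 0
    · simp [h]
    · have hS := hc S h
      rw [eval_mul, eval_C, eval_mul, eval_pow, eval_X, eval_prod]
      have hz : zt j * starRingEnd ℂ (zt j) = 1 := by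
        rw [Complex.mul_conj, Complex.normSq_eq_norm_sq, zt_norm]; norm_num
      have : ∀ i ∈ S, eval (zt j) (C ((√2 / 2 : ℂ) * zt (φ i)) * X ^ 2 + C ((√2 / 2 : ℂ) * starRingEnd ℂ (zt (φ i)))) =
          zt j * (xc (φ i + j) : ℂ) := by
        intro i _
        simp only [eval_add, eval_mul, eval_C, eval_pow, eval_X]
        unfold xc
        push_cast
        rw [Complex.re_eq_add_conj, zt_add, map_mul]
        linear_combination (-(√2:ℂ) / 2 * starRingEnd ℂ (zt (φ i))) * hz
      rw [Finset.prod_congr rfl this, Finset.prod_mul_distrib, Finset.prod_const]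
      have e : zt j ^ d = zt j ^ S.card * zt j ^ (d - S.card) := by
        rw [← pow_add]; congr 1; omega
      rw [e]; ring

open Polynomial in
lemma exists_roots {n : ℕ} (c : Finset (Fin n) → ℝ) (d : ℕ) (hc : Deg d c) (φ : Fin n → ZMod N) :
    ∃ (R : Multiset ℂ) (ld : ℂ), R.card ≤ 2 * d ∧
      ∀ j : ZMod N, zt j ^ d * (ev c (fun i => xc (φ i + j)) : ℂ) = ld * (R.map (fun r => zt j - r)).prod := by
  obtain ⟨Q, hQ, hQe⟩ := exists_poly c d hc φ
  refine ⟨Q.roots, Q.leadingCoeff, (Polynomial.card_roots' _).trans hQ, fun j => ?_⟩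
  rw [← hQe j]
  exact (IsAlgClosed.splits Q).eval_eq_prod_roots _

end circle2

end STB

namespace STB

section compare

variable {N : ℕ} [NeZero N] {n : ℕ}

/-- uniform weight -/
noncomputable def uN (N : ℕ) : ZMod N → ℝ := fun _ => 1 / N

lemma uN_pw : PW (uN N) := by
  refine ⟨fun _ => by unfold uN; positivity, ?_⟩
  have : (N:ℝ) ≠ 0 := by exact_mod_cast NeZero.ne N
  simp [uN, this]

lemma E_shift (j : ZMod N) (F : (Fin n → ZMod N) → ℝ) :
    E (uN N) (fun φ => F (fun i => φ i + j)) = E (uN N) F := by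
  refine E_map (w := uN N) (w' := uN N) (fun k => k + j) (fun k' => ?_) F
  rw [Finset.sum_eq_single (k' - j)]
  · simp [uN]
  · intro k _ hk
    rw [if_neg]
    intro h; exact hk (eq_sub_of_add_eq h)
  · simp

lemma E_avg (F : (Fin n → ZMod N) → ℝ) (B : ℝ) (h : ∀ φ : Fin n → ZMod N, ∑ j : ZMod N, F (fun i => φ i + j) ≤ B) :
    E (uN N) F ≤ B / N := by
  have hN0 : (0:ℝ) < N := by exact_mod_cast Nat.pos_of_ne_zero (NeZero.ne N)
  rw [le_div_iff₀ hN0]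
  have h1 : ∑ j : ZMod N, E (uN N) (fun φ => F (fun i => φ i + j)) = E (uN N) F * N := by
    simp only [E_shift]; simp [mul_comm]
  rw [← h1, ← E_sum]
  exact (E_mono uN_pw h).trans (le_of_eq (E_const uN_pw B))

lemma circ1 (hN : 4 ≤ N) {d : ℕ} {c : Finset (Fin n) → ℝ} (hc : Deg d c) (t : ℝ) :
    E (uN N) (fun φ => psi (t * ev c (fun i => xc (φ i))) (t * (ev c (fun i => xc (φ i + 1)) - ev c (fun i => xc (φ i))))) ≤
      (2 * 64 ^ d * (82 * d) + 80 * d ^ 2) / N := by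
  refine E_avg _ _ fun φ => ?_
  obtain ⟨R, ld, hR, hg⟩ := exists_roots c d hc φ
  have := sum_step (N := N) (by omega) R ld d hR (fun j => ev c (fun i => xc (φ i + j))) hg t
  simpa only [add_assoc] using this

lemma circ2 (hN : 4 ≤ N) {d : ℕ} {c : Finset (Fin n) → ℝ} (hc : Deg d c) (s : ZMod N) :
    E (uN N) (fun φ => psi ((N:ℝ) ^ (2 * d + 1) * ev c (fun i => xc (φ i))) (1 * (ev c (fun i => xc (φ i + s)) - ev c (fun i => xc (φ i))))) ≤
      (82 * d + 4) / N := by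
  refine E_avg _ _ fun φ => ?_
  obtain ⟨R, ld, hR, hg⟩ := exists_roots c d hc φ
  have := sum_far (N := N) (by omega) R ld d hR (fun j => ev c (fun i => xc (φ i + j))) hg s
  simpa only [add_assoc, one_mul] using this

lemma sum_shift2 (f : ZMod N → ℝ) (s : ZMod N) (v : ℝ) (h : ∀ k, f k + f (k + s) = v) :
    ∑ k, uN N k * f k = v / 2 := by
  have hN0 : (0:ℝ) < N := by exact_mod_cast Nat.pos_of_ne_zero (NeZero.ne N)
  have h1 : ∑ k, f (k + s) = ∑ k, f k := Equiv.sum_comp (Equiv.addRight s) f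
  have h2 : ∑ k, (f k + f (k + s)) = N * v := by simp [h]
  rw [Finset.sum_add_distrib, h1] at h2
  unfold uN
  rw [← Finset.mul_sum]
  field_simp; linarith

lemma zt_quarter (M : ℕ) (hM : N = 4 * M) : zt (M : ZMod N) = Complex.I := by
  have hM0 : (M:ℝ) ≠ 0 := by
    have := NeZero.ne N
    have : M ≠ 0 := by rintro rfl; simp at hM; exact this hM
    exact_mod_cast this
  rw [zt_nat]
  have : 2 * Real.pi * M / N = Real.pi / 2 := by rw [hM]; push_cast; field_simp; norm_num
  rw [this]
  have := Complex.exp_pi_div_two_mul_I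
  rw [mul_comm]; push_cast; exact this

lemma zt_half (M : ℕ) (hM : N = 4 * M) : zt ((M : ZMod N) + (M : ZMod N)) = -1 := by
  rw [zt_add, zt_quarter M hM]; simp

lemma norm_re_im (k : ZMod N) : (zt k).re ^ 2 + (zt k).im ^ 2 = 1 := by
  have := zt_norm k
  have h2 := Complex.sq_norm (zt k)
  rw [this, Complex.normSq_apply] at h2
  nlinarith

lemma cross_xc (M : ℕ) (hM : N = 4 * M) (s : ZMod N) :
    ∑ k, uN N k * (xc k * xc (k + s)) = (zt s).re := by
  have h2 : √2 * √2 = (2:ℝ) := Real.mul_self_sqrt (by norm_num)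
  rw [sum_shift2 (fun k => xc k * xc (k + s)) (M : ZMod N) (2 * (zt s).re)]
  · ring
  · intro k
    simp only [xc, zt_add, zt_quarter M hM, Complex.mul_re, Complex.I_re, Complex.I_im, Complex.mul_im]
    have := norm_re_im k
    linear_combination ((zt s).re * ((zt k).re ^ 2 + (zt k).im ^ 2)) * h2 + 2 * (zt s).re * this

lemma good_xc (M : ℕ) (hM : N = 4 * M) (s : ZMod N) : Good (uN N) (fun k => xc (k + s)) := by
  have hneg : ∀ k : ZMod N, xc (k + ((M : ZMod N) + (M : ZMod N)) + s) = - xc (k + s) := by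
    intro k
    have : k + ((M : ZMod N) + (M : ZMod N)) + s = (k + s) + ((M : ZMod N) + (M : ZMod N)) := by ring
    rw [this]
    unfold xc
    rw [zt_add, zt_half M hM]; simp
  refine ⟨?_, ?_, ?_, ?_⟩
  · rw [sum_shift2 _ ((M : ZMod N) + (M : ZMod N)) 0]
    · simp
    · intro k; rw [hneg]; ring
  · have h := cross_xc (N := N) M hM 0
    rw [zt_zero] at h
    simp only [add_zero, Complex.one_re, uN, ← Finset.mul_sum] at h ⊢
    refine Eq.trans ?_ h
    congr 1
    rw [← Equiv.sum_comp (Equiv.addRight s) (fun k : ZMod N => xc k * xc k)]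
    exact Finset.sum_congr rfl fun k _ => by simp [pow_two]
  · rw [sum_shift2 (fun k => xc (k + s) ^ 3) ((M : ZMod N) + (M : ZMod N)) 0]
    · simp
    · intro k; rw [hneg]; ring
  · intro k
    unfold xc
    rw [abs_mul, abs_of_nonneg (Real.sqrt_nonneg 2)]
    have h1 : |(zt (k + s)).re| ≤ 1 := (Complex.abs_re_le_norm _).trans (le_of_eq (zt_norm _))
    have h2 : √2 ≤ 2 := by rw [Real.sqrt_le_left (by norm_num)]; norm_num
    nlinarith [Real.sqrt_nonneg 2, abs_nonneg (zt (k + s)).re]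

/-- correlated pair weight -/
noncomputable def wr (ρ : ℝ) : Bool × Bool → ℝ := fun p => (1 + ρ * (chi p.1 * chi p.2)) / 4

lemma wr_pw {ρ : ℝ} (h0 : -1 ≤ ρ) (h1 : ρ ≤ 1) : PW (wr ρ) := by
  refine ⟨?_, ?_⟩
  · rintro ⟨a, b⟩
    cases a <;> cases b <;> simp only [wr, chi] <;> norm_num <;> linarith
  · simp [Fintype.sum_prod_type, wr, chi] <;> ring

lemma good_fst (ρ : ℝ) : Good (wr ρ) (fun p => chi p.1) := by
  refine ⟨?_, ?_, ?_, ?_⟩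
  · simp [Fintype.sum_prod_type, wr, chi] <;> ring
  · simp [Fintype.sum_prod_type, wr, chi] <;> ring
  · simp [Fintype.sum_prod_type, wr, chi] <;> ring
  · rintro ⟨a, b⟩; cases a <;> simp [chi]

lemma good_snd (ρ : ℝ) : Good (wr ρ) (fun p => chi p.2) := by
  refine ⟨?_, ?_, ?_, ?_⟩
  · simp [Fintype.sum_prod_type, wr, chi] <;> ring
  · simp [Fintype.sum_prod_type, wr, chi] <;> ring
  · simp [Fintype.sum_prod_type, wr, chi] <;> ring
  · rintro ⟨a, b⟩; cases b <;> simp [chi]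

lemma cross_wr (ρ : ℝ) : ∑ p, wr ρ p * (chi p.1 * chi p.2) = ρ := by
  simp only [Fintype.sum_prod_type, wr, chi, Fintype.sum_bool]; norm_num; ring

section prod
variable {κ κ' : Type*} [Fintype κ] [Fintype κ'] {w : κ → ℝ} {w' : κ' → ℝ}

lemma sum_fst (hw' : PW w') (f : κ → ℝ) : ∑ k : κ × κ', w k.1 * w' k.2 * f k.1 = ∑ k, w k * f k := by
  rw [Fintype.sum_prod_type]
  refine Finset.sum_congr rfl fun a _ => ?_
  simp only
  calc _ = ∑ y, w' y * (w a * f a) := Finset.sum_congr rfl fun _ _ => by ring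
    _ = _ := by rw [← Finset.sum_mul, hw'.2, one_mul]

lemma sum_snd (hw : PW w) (f : κ' → ℝ) : ∑ k : κ × κ', w k.1 * w' k.2 * f k.2 = ∑ k, w' k * f k := by
  rw [Fintype.sum_prod_type_right]
  refine Finset.sum_congr rfl fun a _ => ?_
  simp only
  calc _ = ∑ y, w y * (w' a * f a) := Finset.sum_congr rfl fun _ _ => by ring
    _ = _ := by rw [← Finset.sum_mul, hw.2, one_mul]

lemma Good.fst {X : κ → ℝ} (hX : Good w X) (hw' : PW w') :
    Good (fun k : κ × κ' => w k.1 * w' k.2) (fun k => X k.1) :=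
  ⟨(sum_fst hw' X).trans hX.m1, (sum_fst hw' (fun k => X k ^ 2)).trans hX.m2,
    (sum_fst hw' (fun k => X k ^ 3)).trans hX.m3, fun k => hX.bd _⟩

lemma Good.snd {X : κ' → ℝ} (hX : Good w' X) (hw : PW w) :
    Good (fun k : κ × κ' => w k.1 * w' k.2) (fun k => X k.2) :=
  ⟨(sum_snd hw X).trans hX.m1, (sum_snd hw (fun k => X k ^ 2)).trans hX.m2,
    (sum_snd hw (fun k => X k ^ 3)).trans hX.m3, fun k => hX.bd _⟩

lemma E_fst (hw' : PW w') (F : (Fin n → κ) → ℝ) :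
    E (fun k : κ × κ' => w k.1 * w' k.2) (fun ω => F (fun i => (ω i).1)) = E w F := by
  rw [E_prod]
  simp only [E_const hw']

lemma E_snd (hw : PW w) (F : (Fin n → κ') → ℝ) :
    E (fun k : κ × κ' => w k.1 * w' k.2) (fun ω => F (fun i => (ω i).2)) = E w' F := by
  rw [E_prod]
  simp only [E_const hw]

end prod

lemma compare (M : ℕ) (hM : N = 4 * M) (s : ZMod N) {ρ : ℝ} (hρ : (zt s).re = ρ)
    {t l : ℝ} (ht : 0 ≤ t) (hl0 : 0 ≤ l) (hl : l ≤ t) {d : ℕ} {c : Finset (Fin n) → ℝ} (hc : Deg d c) {σ : ℝ} (hσ : 0 < σ) :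
    E (wr ρ) (fun p => psi (t * cv c (fun i => (p i).1)) (l * (cv c (fun i => (p i).2) - cv c (fun i => (p i).1)))) ≤
    E (uN N) (fun φ => psi (t * ev c (fun i => xc (φ i))) (l * (ev c (fun i => xc (φ i + s)) - ev c (fun i => xc (φ i))))) +
      34816 * t ^ 3 * (σ * TI c + 9 ^ d * (∑ i, inf i c ^ 2) / σ) := by
  have hρ1 : |ρ| ≤ 1 := by rw [← hρ]; exact (Complex.abs_re_le_norm _).trans (le_of_eq (zt_norm _))
  rw [abs_le] at hρ1
  have hw := wr_pw hρ1.1 hρ1.2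
  have hu : PW (uN N) := uN_pw
  have g0 := good_xc (N := N) M hM 0
  simp only [add_zero] at g0
  have h := lindeberg (n := n) (PW_prod hw hu) (g0.snd hw) ((good_xc M hM s).snd hw) ((good_fst ρ).fst hu) ((good_snd ρ).fst hu)
    (by
      rw [sum_snd hw (fun k => xc k * xc (k + s)), sum_fst hu (fun p : Bool × Bool => chi p.1 * chi p.2), cross_wr, cross_xc M hM, hρ]) ht hl0 hl hc hσ
  rw [E_fst (w := wr ρ) hu (fun p => psi (t * ev c (fun i => chi (p i).1)) (l * (ev c (fun i => chi (p i).2) - ev c (fun i => chi (p i).1)))),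
    E_snd hw (fun φ => psi (t * ev c (fun i => xc (φ i))) (l * (ev c (fun i => xc (φ i + s)) - ev c (fun i => xc (φ i)))))] at h
  have h' := (abs_le.1 h).2
  unfold cv
  linarith

end compare

end STB

namespace STB

section reg

variable {n : ℕ}

/-- replace the mean -/
noncomputable def shf (c : Finset (Fin n) → ℝ) (a : ℝ) : Finset (Fin n) → ℝ := fun S => if S = ∅ then a else c S

lemma cen_shf (c : Finset (Fin n) → ℝ) (a : ℝ) : cen (shf c a) = cen c := by
  funext S; unfold cen shf; split_ifs <;> rfl

lemma cv_shf (c : Finset (Fin n) → ℝ) (a : ℝ) (x : Fin n → Bool) : cv (shf c a) x = a + cv (cen c) x := by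
  rw [cv_cen, cen_shf]; simp [shf]

lemma sq_shf (c : Finset (Fin n) → ℝ) (a : ℝ) : sq (shf c a) = a ^ 2 + var c := by
  rw [sq_eq, var_eq, cen_shf, ← var_eq]; simp [shf]

lemma Deg.shf {d : ℕ} {c : Finset (Fin n) → ℝ} (hc : Deg d c) (a : ℝ) : Deg d (shf c a) := by
  intro S hS
  unfold STB.shf at hS
  split_ifs at hS with h
  · simp [h]
  · exact hc S hS

lemma E_shf_sq (c : Finset (Fin n) → ℝ) (a : ℝ) : E u2 (fun y => (a + cv (cen c) y) ^ 2) = a ^ 2 + var c := by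
  rw [← sq_shf, ← parseval mom_chi (shf c a)]
  congr 1; funext y; rw [← cv_shf]; rfl

lemma E_shf_four {d : ℕ} {c : Finset (Fin n) → ℝ} (hc : Deg d c) (a : ℝ) :
    E u2 (fun y => (a + cv (cen c) y) ^ 4) ≤ 9 ^ d * (a ^ 2 + var c) ^ 2 := by
  rw [← sq_shf]
  refine le_trans (le_of_eq ?_) (hyper4 mom_chi (shf c a) d (hc.shf a))
  congr 1; funext y; rw [← cv_shf]; rfl

/-- anticoncentration for a single independent copy -/
lemma anti1 {d : ℕ} {c : Finset (Fin n) → ℝ} (hc : Deg d c) (hv : var c = 1) {t : ℝ} {u : ℝ} (hu : |t * u| ≤ 1) :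
    1 / (2 + 9 ^ d) ≤ E u2 (fun y => psi (t * u) (1 * (cv c y - u))) := by
  set m := (c ∅ - u) ^ 2 + var c with hm
  have hm1 : 1 ≤ m := by rw [hm, hv]; nlinarith [sq_nonneg (c ∅ - u)]
  have e2 := E_shf_sq c (c ∅ - u)
  have e4 := E_shf_four hc (c ∅ - u)
  rw [← hm] at e2 e4
  set q : (Fin n → Bool) → ℝ := fun y => c ∅ - u + cv (cen c) y with hq
  set K : ℝ := 2 + 9 ^ d with hK
  have hK0 : 0 < K := by positivity
  set lam : ℝ := 1 / (m * K) with hlam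
  have hpt : ∀ y, (2 * lam - 2 * lam ^ 2) * q y ^ 2 + (- lam ^ 2) * q y ^ 4 ≤ psi (t * u) (1 * (cv c y - u)) := by
    intro y
    have h1 : cv c y - u = q y := by rw [hq, cv_cen c y]; ring
    rw [one_mul, h1]
    unfold psi
    have hu2 : (t * u) ^ 2 ≤ 1 := by rw [← sq_abs]; nlinarith [abs_nonneg (t * u)]
    have h2 : q y ^ 2 / (2 + q y ^ 2) ≤ q y ^ 2 / (1 + (t * u) ^ 2 + q y ^ 2) := by
      apply div_le_div_of_nonneg_left (by positivity) (by positivity); linarith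
    refine le_trans ?_ h2
    rw [le_div_iff₀ (by positivity)]
    nlinarith [mul_nonneg (sq_nonneg (q y)) (sq_nonneg (1 - lam * (2 + q y ^ 2)))]
  have hE := E_mono (n := n) u2_pw hpt
  rw [E_add, E_smul, E_smul, e2] at hE
  refine le_trans ?_ hE
  have h3 : (2 * lam - 2 * lam ^ 2) * m - lam ^ 2 * (9 ^ d * m ^ 2) ≤ (2 * lam - 2 * lam ^ 2) * m + -lam ^ 2 * E u2 (fun y => q y ^ 4) := by
    have := mul_le_mul_of_nonneg_left e4 (sq_nonneg lam)
    linarith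
  refine le_trans ?_ h3
  have h4 : 2 * lam * m - lam ^ 2 * (K * m ^ 2) ≤ (2 * lam - 2 * lam ^ 2) * m - lam ^ 2 * (9 ^ d * m ^ 2) := by
    rw [hK]
    have : m ≤ m ^ 2 := by nlinarith
    nlinarith [mul_le_mul_of_nonneg_left this (sq_nonneg lam)]
  refine le_trans (le_of_eq ?_) h4
  rw [hlam]; field_simp; norm_num

/-- conditional lower bound -/
lemma anti2 {d : ℕ} {q : Finset (Fin n) → ℝ} (hq : Deg d q) :
    var q / (q ∅ ^ 2 + var q) ≤ (33 * 9 ^ d / 4) *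
      E u2 (fun y => E u2 (fun y' => (cv q y' - cv q y) ^ 2 / (cv q y ^ 2 + (cv q y' - cv q y) ^ 2))) := by
  set s := q ∅ ^ 2 + var q with hs
  set B : ℝ := 33 * 9 ^ d with hB
  have hv0 := var_nonneg q
  have hs0 : 0 ≤ s := by positivity
  have hB0 : 0 < B := by positivity
  have h9 : (1:ℝ) ≤ 9 ^ d := one_le_pow₀ (by norm_num)
  rcases hs0.eq_or_lt with h0 | hpos
  · rw [← h0, div_zero]
    have : 0 ≤ E (n := n) u2 (fun y => E (n := n) u2 (fun y' => (cv q y' - cv q y) ^ 2 / (cv q y ^ 2 + (cv q y' - cv q y) ^ 2))) :=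
      E_nonneg u2_pw fun y => E_nonneg u2_pw fun y' => by positivity
    positivity
  set lam : ℝ := 2 / (B * s) with hlam
  set μ := q ∅ with hμ
  set h : (Fin n → Bool) → ℝ := cv (cen q) with hh
  have e4 : E u2 (fun y => h y ^ 4) ≤ 9 ^ d * var q ^ 2 := by
    have := E_shf_four hq 0
    simpa using this
  -- pointwise
  have hpt : ∀ y y', (2 * lam - 2 * lam ^ 2 * μ ^ 2) * (h y' - h y) ^ 2 - lam ^ 2 * (17 * h y ^ 4 + 16 * h y' ^ 4) ≤
      (cv q y' - cv q y) ^ 2 / (cv q y ^ 2 + (cv q y' - cv q y) ^ 2) := by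
    intro y y'
    have h1 : cv q y' - cv q y = h y' - h y := by rw [cv_cen q y, cv_cen q y']; ring
    have h2 : cv q y = μ + h y := cv_cen q y
    rw [h1, h2]
    set a := h y
    set b := h y'
    set W := (b - a) ^ 2 with hW
    have hW0 : 0 ≤ W := by positivity
    have hW2 : W ^ 2 ≤ 8 * a ^ 4 + 8 * b ^ 4 := by
      have h5 : W ≤ 2 * a ^ 2 + 2 * b ^ 2 := by rw [hW]; nlinarith [sq_nonneg (a + b)]
      calc W ^ 2 ≤ (2 * a ^ 2 + 2 * b ^ 2) ^ 2 := by gcongr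
        _ ≤ _ := by nlinarith [sq_nonneg (a ^ 2 - b ^ 2)]
    have hU : W * (μ + a) ^ 2 ≤ 2 * μ ^ 2 * W + a ^ 4 + W ^ 2 := by
      have h5 : (μ + a) ^ 2 ≤ 2 * μ ^ 2 + 2 * a ^ 2 := by nlinarith [sq_nonneg (μ - a)]
      nlinarith [mul_le_mul_of_nonneg_left h5 hW0, sq_nonneg (a ^ 2 - W)]
    have hT : W * ((μ + a) ^ 2 + W) ≤ 2 * μ ^ 2 * W + (17 * a ^ 4 + 16 * b ^ 4) := by nlinarith
    have hmain : 2 * lam * W - lam ^ 2 * (W * ((μ + a) ^ 2 + W)) ≤ W / ((μ + a) ^ 2 + W) := by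
      rcases (show 0 ≤ (μ + a) ^ 2 + W by positivity).eq_or_lt with h6 | h6
      · have : W = 0 := by nlinarith [sq_nonneg (μ + a)]
        rw [← h6, this]; simp
      · rw [le_div_iff₀ h6]
        nlinarith [mul_nonneg hW0 (sq_nonneg (1 - lam * ((μ + a) ^ 2 + W)))]
    have := mul_le_mul_of_nonneg_left hT (sq_nonneg lam)
    linarith
  have hE : E u2 (fun y => E u2 (fun y' => (2 * lam - 2 * lam ^ 2 * μ ^ 2) * (h y' - h y) ^ 2 - lam ^ 2 * (17 * h y ^ 4 + 16 * h y' ^ 4))) ≤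
      E u2 (fun y => E u2 (fun y' => (cv q y' - cv q y) ^ 2 / (cv q y ^ 2 + (cv q y' - cv q y) ^ 2))) :=
    E_mono u2_pw fun y => E_mono u2_pw fun y' => hpt y y'
  have hin : ∀ y, E u2 (fun y' => (2 * lam - 2 * lam ^ 2 * μ ^ 2) * (h y' - h y) ^ 2 - lam ^ 2 * (17 * h y ^ 4 + 16 * h y' ^ 4)) =
      ((2 * lam - 2 * lam ^ 2 * μ ^ 2) * h y ^ 2 + (- lam ^ 2 * 17) * h y ^ 4) +
      ((2 * lam - 2 * lam ^ 2 * μ ^ 2) * var q - lam ^ 2 * (16 * E u2 (fun y' => h y' ^ 4))) := by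
    intro y
    rw [E_sub, E_smul, E_smul, E_add, E_const u2_pw, E_smul]
    have := E_shf_sq q (- h y)
    have e : (fun y' => (h y' - h y) ^ 2) = fun y' => (- h y + cv (cen q) y') ^ 2 := by
      funext y'; ring
    rw [e, this]; ring
  have hsq : E u2 (fun y => h y ^ 2) = var q := by
    have := E_shf_sq q 0
    simpa using this
  simp only [hin] at hE
  rw [E_add, E_add, E_smul, E_smul, E_const u2_pw, hsq] at hE
  set X := E u2 (fun y => E u2 (fun y' => (cv q y' - cv q y) ^ 2 / (cv q y ^ 2 + (cv q y' - cv q y) ^ 2))) with hX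
  have h7 : 4 * lam * var q - lam ^ 2 * (B * (var q * s)) ≤ X := by
    refine le_trans ?_ hE
    have h8 : 33 * (lam ^ 2 * E u2 (fun y => h y ^ 4)) ≤ 33 * (lam ^ 2 * (9 ^ d * var q ^ 2)) := by gcongr
    have h9' : lam ^ 2 * (var q * μ ^ 2) ≤ lam ^ 2 * (9 ^ d * (var q * μ ^ 2)) := by
      have : 0 ≤ var q * μ ^ 2 := by positivity
      exact mul_le_mul_of_nonneg_left (le_mul_of_one_le_left this h9) (sq_nonneg _)
    have h10 : 0 ≤ lam ^ 2 * (9 ^ d * (var q * μ ^ 2)) := by positivity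
    rw [hB, hs]
    linarith
  have h11 : 4 * lam * var q - lam ^ 2 * (B * (var q * s)) = 4 / B * (var q / s) := by
    rw [hlam]; field_simp; ring
  rw [h11] at h7
  calc var q / s = B / 4 * (4 / B * (var q / s)) := by field_simp
    _ ≤ _ := by gcongr

lemma ratio_pt {u w t : ℝ} (ht : 0 < t) : w ^ 2 / (u ^ 2 + w ^ 2) ≤ 2 * psi (t * u) (t * w) + ind (|t * u| ≤ 1) := by
  by_cases h : |t * u| ≤ 1
  · rw [ind_pos h]
    have := psi_nonneg (t * u) (t * w)
    have : w ^ 2 / (u ^ 2 + w ^ 2) ≤ 1 := div_le_one_of_le₀ (by nlinarith [sq_nonneg u]) (by positivity)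
    linarith
  · rw [ind_neg h, add_zero]
    push Not at h
    have h1 : 1 ≤ (t * u) ^ 2 := by rw [← sq_abs]; nlinarith
    unfold psi
    have hu : u ≠ 0 := by rintro rfl; simp at h1; linarith
    rw [← mul_div_assoc, div_le_div_iff₀ (by positivity) (by positivity)]
    have h2 : 0 ≤ w ^ 2 := by positivity
    nlinarith [mul_le_mul_of_nonneg_left h1 h2, mul_nonneg h2 (sq_nonneg (t * w))]

lemma wr_zero : wr 0 = fun k : Bool × Bool => u2 k.1 * u2 k.2 := by
  funext k; simp [wr, u2]; norm_num

lemma E_wr_fst (ρ : ℝ) (F : (Fin n → Bool) → ℝ) : E (wr ρ) (fun p => F (fun i => (p i).1)) = E u2 F := by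
  refine E_map (w := wr ρ) (w' := u2) (fun p => p.1) (fun k => ?_) F
  cases k <;> simp [Fintype.sum_prod_type, wr, chi, u2] <;> ring

lemma E_mix_law {η : ℝ} (F : (Fin n → Bool) → (Fin n → Bool) → ℝ) :
    E (bw η) (fun L => E u2 (fun A => E u2 (fun y => E u2 (fun y' => F (mix L A y) (mix L A y'))))) =
      E (wr (1 - η)) (fun p => F (fun i => (p i).1) (fun i => (p i).2)) := by
  rw [← E_map (w := fun k : Bool × (Bool × (Bool × Bool)) => bw η k.1 * (fun k' : Bool × (Bool × Bool) => u2 k'.1 * (fun k'' : Bool × Bool => u2 k''.1 * u2 k''.2) k'.2) k.2)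
    (w' := wr (1 - η)) (fun k => (if k.1 then k.2.2.1 else k.2.1, if k.1 then k.2.2.2 else k.2.1))]
  · refine Eq.trans ?_ (E_prod (w := bw η) (w' := fun k' : Bool × (Bool × Bool) => u2 k'.1 * (fun k'' : Bool × Bool => u2 k''.1 * u2 k''.2) k'.2) _).symm
    refine congrArg (E (bw η)) (funext fun L => ?_)
    refine Eq.trans ?_ (E_prod (w := u2) (w' := fun k'' : Bool × Bool => u2 k''.1 * u2 k''.2) _).symm
    refine congrArg (E u2) (funext fun A => ?_)
    refine Eq.trans ?_ (E_prod (w := u2) (w' := u2) _).symm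
    rfl
  · rintro ⟨a, b⟩
    cases a <;> cases b <;> simp [Fintype.sum_prod_type, wr, bw, chi, u2] <;> ring

/-- noise rate -/
noncomputable def et (N : ℕ) [NeZero N] : ℝ := 1 - (zt (1 : ZMod N)).re

lemma et_eq {N : ℕ} [NeZero N] : et N = dl N ^ 2 / 2 := by
  unfold et dl
  rw [Complex.sq_norm, Complex.normSq_apply]
  have := norm_re_im (1 : ZMod N)
  simp only [Complex.sub_re, Complex.sub_im, Complex.one_re, Complex.one_im]
  nlinarith

lemma et_low {N : ℕ} [NeZero N] (hN : 2 ≤ N) : 8 / (N:ℝ) ^ 2 ≤ et N := by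
  rw [et_eq]
  have h := dl_low hN
  have hN0 : (0:ℝ) < N := by exact_mod_cast (by omega : 0 < N)
  have : (4 / (N:ℝ)) ^ 2 ≤ dl N ^ 2 := by gcongr
  have e : (4 / (N:ℝ)) ^ 2 = 2 * (8 / (N:ℝ) ^ 2) := by field_simp; norm_num
  linarith

lemma et_high {N : ℕ} [NeZero N] : et N ≤ 20 / (N:ℝ) ^ 2 := by
  rw [et_eq]
  have h := dl_le (N := N)
  have hN0 : (0:ℝ) < N := by exact_mod_cast Nat.pos_of_ne_zero (NeZero.ne N)
  have : dl N ^ 2 ≤ (2 * Real.pi / N) ^ 2 := pow_le_pow_left₀ (norm_nonneg _) h 2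
  have e : (2 * Real.pi / N) ^ 2 = 4 * Real.pi ^ 2 / (N:ℝ) ^ 2 := by field_simp; norm_num
  have h2 : 4 * Real.pi ^ 2 / (N:ℝ) ^ 2 ≤ 40 / (N:ℝ) ^ 2 := by
    gcongr; nlinarith [Real.pi_lt_d2, Real.pi_pos]
  have e3 : 40 / (N:ℝ) ^ 2 = 2 * (20 / (N:ℝ) ^ 2) := by ring
  linarith

/-- the constant -/
noncomputable def CR (d : ℕ) : ℝ := (33 * 9 ^ d / 4) * (2 * (2 * 64 ^ d * (82 * d) + 80 * d ^ 2 + 34816 * (d + 9 ^ d)) +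
  (2 + 9 ^ d) * (82 * d + 4 + 34816 * (d + 9 ^ d)))

lemma small_ball {d : ℕ} {c : Finset (Fin n) → ℝ} (hc : Deg d c) (hv : var c = 1) {t B : ℝ}
    (h : E (wr 0) (fun p => psi (t * cv c (fun i => (p i).1)) (1 * (cv c (fun i => (p i).2) - cv c (fun i => (p i).1)))) ≤ B) :
    E u2 (fun x => ind (|t * cv c x| ≤ 1)) ≤ (2 + 9 ^ d) * B := by
  rw [wr_zero] at h
  have h' := (E_prod (w := u2) (w' := u2) (fun p : Fin n → Bool × Bool => psi (t * cv c (fun i => (p i).1)) (1 * (cv c (fun i => (p i).2) - cv c (fun i => (p i).1))))).symm.trans_le h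
  have hK : (0:ℝ) < 2 + 9 ^ d := by positivity
  have h1 : E u2 (fun x => 1 / (2 + 9 ^ d) * ind (|t * cv c x| ≤ 1)) ≤ B := by
    refine le_trans (E_mono u2_pw (fun x => ?_ : ∀ x : Fin n → Bool, 1 / (2 + 9 ^ d) * ind (|t * cv c x| ≤ 1) ≤ E u2 (fun y => psi (t * cv c x) (1 * (cv c y - cv c x))))) h'
    by_cases h : |t * cv c x| ≤ 1
    · rw [ind_pos h, mul_one]
      exact anti1 (t := t) (u := cv c x) hc hv h
    · rw [ind_neg h, mul_zero]
      exact E_nonneg u2_pw fun y => psi_nonneg _ _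
  rw [E_smul, one_div, inv_mul_le_iff₀ hK] at h1
  exact h1

lemma reg_norm {N : ℕ} [NeZero N] (M : ℕ) (hM : N = 4 * M) (hN : 8 ≤ N) {d : ℕ} {c : Finset (Fin n) → ℝ} (hc : Deg d c)
    (hv : var c = 1) (hr : ∑ i, inf i c ^ 2 ≤ (((N:ℝ) ^ (6 * d + 4))⁻¹) ^ 2) :
    E (bw (et N)) (fun L => E u2 (fun A => var (restr c L A) / (restr c L A ∅ ^ 2 + var (restr c L A)))) ≤ CR d / N := by
  have hN0 : (0:ℝ) < N := by exact_mod_cast (by omega : 0 < N)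
  have hN8 : (8:ℝ) ≤ N := by exact_mod_cast hN
  set t : ℝ := (N:ℝ) ^ (2 * d + 1) with ht
  have ht1 : 1 ≤ t := one_le_pow₀ (by linarith)
  set σ : ℝ := ((N:ℝ) ^ (6 * d + 4))⁻¹ with hσ
  have hσ0 : 0 < σ := by positivity
  have hTI : TI c ≤ d := by have := TI_le hc; rw [hv, mul_one] at this; exact this
  have herr : 34816 * t ^ 3 * (σ * TI c + 9 ^ d * (∑ i, inf i c ^ 2) / σ) ≤ 34816 * (d + 9 ^ d) / N := by
    have h1 : 9 ^ d * (∑ i, inf i c ^ 2) / σ ≤ 9 ^ d * σ := by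
      rw [div_le_iff₀ hσ0, mul_assoc, ← pow_two]
      gcongr
    calc _ ≤ 34816 * t ^ 3 * (σ * d + 9 ^ d * σ) := by gcongr
      _ = 34816 * (d + 9 ^ d) * (t ^ 3 * σ) := by ring
      _ = _ := by
        have : t ^ 3 * σ = 1 / N := by
          rw [ht, hσ, ← pow_mul, show 6 * d + 4 = (2 * d + 1) * 3 + 1 by ring, pow_succ (N:ℝ) ((2 * d + 1) * 3)]
          field_simp
        rw [this]; ring
  -- near pair
  have near := compare (N := N) M hM 1 rfl (t := t) (l := t) (by linarith) (by linarith) le_rfl hc hσ0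
  have near2 := near.trans (add_le_add (circ1 (N := N) (by omega) hc t) herr)
  have far := compare (N := N) M hM (M : ZMod N) (ρ := 0) (by rw [zt_quarter M hM]; rfl) (t := t) (l := 1) (by linarith) (by linarith) ht1 hc hσ0
  have far2 := far.trans (add_le_add (circ2 (N := N) (by omega) hc (M : ZMod N)) herr)
  -- small ball
  have hsb : E u2 (fun x => ind (|t * cv c x| ≤ 1)) ≤ (2 + 9 ^ d) * ((82 * d + 4) / N + 34816 * (d + 9 ^ d) / N) := by
    exact small_ball hc hv far2
  have hη0 : 0 ≤ et N := by rw [et_eq]; positivity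
  have hη1 : et N ≤ 1 := by
    refine et_high.trans ?_
    rw [div_le_one (by positivity)]; nlinarith
  have hw := bw_pw hη0 hη1
  set G : (Fin n → Bool) → (Fin n → Bool) → ℝ := fun x y => (cv c y - cv c x) ^ 2 / (cv c x ^ 2 + (cv c y - cv c x) ^ 2) with hG
  have s1 : E (bw (et N)) (fun L => E u2 (fun A => var (restr c L A) / (restr c L A ∅ ^ 2 + var (restr c L A)))) ≤
      (33 * 9 ^ d / 4) * E (bw (et N)) (fun L => E u2 (fun A => E u2 (fun y => E u2 (fun y' => G (mix L A y) (mix L A y'))))) := by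
    rw [← E_smul]
    refine E_mono hw fun L => ?_
    rw [← E_smul]
    refine E_mono u2_pw fun A => ?_
    have := anti2 (hc.restr L A)
    simp only [hG, cv_mix]
    exact this
  have hρ : 1 - et N = (zt (1 : ZMod N)).re := by unfold et; ring
  have hwr : PW (wr (zt (1 : ZMod N)).re) := by
    rw [← hρ]; exact wr_pw (by linarith) (by linarith)
  rw [E_mix_law, hρ] at s1
  have s2 : E (wr (zt (1 : ZMod N)).re) (fun p => G (fun i => (p i).1) (fun i => (p i).2)) ≤
      2 * ((2 * 64 ^ d * (82 * d) + 80 * d ^ 2) / N + 34816 * (d + 9 ^ d) / N) +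
      (2 + 9 ^ d) * ((82 * d + 4) / N + 34816 * (d + 9 ^ d) / N) := by
    calc _ ≤ E (wr (zt (1 : ZMod N)).re) (fun p => 2 * psi (t * cv c (fun i => (p i).1)) (t * (cv c (fun i => (p i).2) - cv c (fun i => (p i).1))) +
          ind (|t * cv c (fun i => (p i).1)| ≤ 1)) := E_mono hwr fun p => ratio_pt (by linarith)
      _ ≤ _ := by
        rw [E_add, E_smul, E_wr_fst _ (fun x => ind (|t * cv c x| ≤ 1))]
        gcongr
  calc _ ≤ _ := s1
    _ ≤ (33 * 9 ^ d / 4) * (2 * ((2 * 64 ^ d * (82 * d) + 80 * d ^ 2) / N + 34816 * (d + 9 ^ d) / N) +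
      (2 + 9 ^ d) * ((82 * d + 4) / N + 34816 * (d + 9 ^ d) / N)) := by gcongr
    _ = _ := by unfold CR; ring

lemma restr_smul (a : ℝ) (c : Finset (Fin n) → ℝ) (L A : Fin n → Bool) :
    restr (fun S => a * c S) L A = fun T => a * restr c L A T := by
  funext T
  unfold restr cv ev rc
  rw [Finset.mul_sum]
  refine Finset.sum_congr rfl fun S _ => ?_
  split_ifs <;> ring

lemma wsq_mul (a : ℝ) (h c : Finset (Fin n) → ℝ) : wsq h (fun S => a * c S) = a ^ 2 * wsq h c := by
  unfold wsq
  rw [Finset.mul_sum]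
  exact Finset.sum_congr rfl fun S _ => by ring

lemma reg_lem {N : ℕ} [NeZero N] (M : ℕ) (hM : N = 4 * M) (hN : 8 ≤ N) {d : ℕ} {c : Finset (Fin n) → ℝ} (hc : Deg d c)
    (hv : 0 < var c) (hr : ∑ i, inf i c ^ 2 ≤ (((N:ℝ) ^ (6 * d + 4))⁻¹) ^ 2 * var c ^ 2) :
    E (bw (et N)) (fun L => E u2 (fun A => var (restr c L A) / (restr c L A ∅ ^ 2 + var (restr c L A)))) ≤ CR d / N := by
  set a : ℝ := (√(var c))⁻¹ with ha
  have ha2 : a ^ 2 = (var c)⁻¹ := by rw [ha, inv_pow, Real.sq_sqrt hv.le]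
  have ha0 : a ≠ 0 := by rw [ha]; positivity
  have h := reg_norm (n := n) M hM hN (c := fun S => a * c S) (d := d) (fun S hS => hc S (fun h => hS (by simp [h])))
    (by unfold var; rw [wsq_mul]; rw [ha2]; exact inv_mul_cancel₀ hv.ne') (by
      unfold inf
      simp only [wsq_mul, ha2]
      have e : ∀ i : Fin n, ((var c)⁻¹ * wsq (fun S => if i ∈ S then 1 else 0) c) ^ 2 = ((var c)⁻¹) ^ 2 * inf i c ^ 2 := by
        intro i; unfold inf; ring
      rw [Finset.sum_congr rfl (fun i _ => e i), ← Finset.mul_sum]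
      calc _ ≤ ((var c)⁻¹) ^ 2 * ((((N:ℝ) ^ (6 * d + 4))⁻¹) ^ 2 * var c ^ 2) := by gcongr
        _ = _ := by field_simp)
  refine le_trans (le_of_eq ?_) h
  congr 1; funext L; congr 1; funext A
  rw [restr_smul]
  unfold var
  rw [wsq_mul, mul_pow, ← mul_add, mul_div_mul_left _ _ (pow_ne_zero 2 ha0)]

end reg

end STB

namespace STB

section final

lemma exists_N {e : ℕ} (he : 1 ≤ e) {m : ℝ} (hm : (8:ℝ) ^ e ≤ m) :
    ∃ M : ℕ, 2 ≤ M ∧ ((4 * M : ℕ) : ℝ) ^ e ≤ m ∧ m < (2 * ((4 * M : ℕ) : ℝ)) ^ e := by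
  have hex : ∃ j : ℕ, m < ((4 * j : ℕ) : ℝ) ^ e := by
    refine ⟨⌈m⌉₊ + 1, ?_⟩
    have h1 : m ≤ ⌈m⌉₊ := Nat.le_ceil m
    have h2 : ((4 * (⌈m⌉₊ + 1) : ℕ) : ℝ) ≤ ((4 * (⌈m⌉₊ + 1) : ℕ) : ℝ) ^ e :=
      le_self_pow₀ (by push_cast; linarith [(Nat.cast_nonneg ⌈m⌉₊ : (0:ℝ) ≤ _)]) (by omega)
    refine lt_of_lt_of_le ?_ h2
    push_cast; linarith [(Nat.cast_nonneg ⌈m⌉₊ : (0:ℝ) ≤ _)]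
  set j := Nat.find hex with hj
  have hj1 : m < ((4 * j : ℕ) : ℝ) ^ e := Nat.find_spec hex
  have hj2 : 3 ≤ j := by
    by_contra hlt
    have : ((4 * j : ℕ) : ℝ) ≤ 8 := by exact_mod_cast (by omega : 4 * j ≤ 8)
    have : ((4 * j : ℕ) : ℝ) ^ e ≤ 8 ^ e := by gcongr
    linarith
  have hj3 : ¬ m < ((4 * (j - 1) : ℕ) : ℝ) ^ e := Nat.find_min hex (by omega)
  refine ⟨j - 1, by omega, not_lt.mp hj3, lt_of_lt_of_le hj1 ?_⟩
  have : ((4 * j : ℕ) : ℝ) ≤ 2 * ((4 * (j - 1) : ℕ) : ℝ) := by exact_mod_cast (by omega : 4 * j ≤ 2 * (4 * (j - 1)))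
  gcongr

/-- The regular case. -/
lemma reg_case {d : ℕ} {K : ℝ} (hK : 1 ≤ K) {Φ : ℝ → ℝ} {m' : ℝ}
    (hG : ∀ (n : ℕ) (c : Finset (Fin n) → ℝ), Deg d c → tail c m' ≤ K * (var c / (c ∅ ^ 2 + var c)) * (Φ m' / Real.sqrt m'))
    (hΦ : 0 ≤ Φ m')
    {N : ℕ} [NeZero N] (M : ℕ) (hM : N = 4 * M) (hN : 8 ≤ N) {m m2 : ℝ} (hm0 : 0 < m) (hm2 : m / 2 ≤ m2)
    (hm' : m' = et N * m2 / 2) (h8 : 8 ≤ et N * m2) {n : ℕ} {c : Finset (Fin n) → ℝ} (hc : Deg d c)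
    (hr : ∑ i, inf i c ^ 2 ≤ (((N:ℝ) ^ (6 * d + 4))⁻¹) ^ 2 * var c ^ 2) :
    tail c m2 ≤ 2 * K * CR d * (Φ m' / √m) := by
  have hN0 : (0:ℝ) < N := by exact_mod_cast (by omega : 0 < N)
  have hN8 : (8:ℝ) ≤ N := by exact_mod_cast hN
  have hCR : 0 ≤ CR d := by unfold CR; positivity
  have hs0 : 0 < √m := Real.sqrt_pos.mpr hm0
  rcases (var_nonneg c).eq_or_lt with hv | hv
  · rw [tail_var_zero hv.symm (by linarith)]
    positivity
  have hη0 : 0 ≤ et N := by rw [et_eq]; positivity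
  have hη1 : et N ≤ 1 := by
    refine et_high.trans ?_
    rw [div_le_one (by positivity)]; nlinarith
  have hw := bw_pw hη0 hη1
  have hp0 : 0 ≤ Φ m' / √m' := by positivity
  have s1 := sampling hη0 hη1 c m2 h8
  rw [← hm'] at s1
  have s2 : E (bw (et N)) (fun L => E u2 (fun A => tail (restr c L A) m')) ≤
      (K * (Φ m' / √m')) * E (bw (et N)) (fun L => E u2 (fun A => var (restr c L A) / (restr c L A ∅ ^ 2 + var (restr c L A)))) := by
    rw [← E_smul]
    refine E_mono hw fun L => ?_
    rw [← E_smul]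
    refine E_mono u2_pw fun A => ?_
    have := hG n _ (hc.restr L A)
    refine this.trans (le_of_eq (by ring))
  have s3 := reg_lem M hM hN hc hv hr
  have hlow : √m / N ≤ √m' := by
    refine Real.le_sqrt_of_sq_le ?_
    rw [div_pow, Real.sq_sqrt hm0.le, hm']
    have := et_low (N := N) (by omega)
    have h2 : 8 / (N:ℝ) ^ 2 * (m / 2) ≤ et N * m2 := by gcongr
    have h3 : 8 / (N:ℝ) ^ 2 * (m / 2) = 4 * (m / (N:ℝ) ^ 2) := by ring
    have : 0 ≤ m / (N:ℝ) ^ 2 := by positivity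
    linarith
  have hlow0 : 0 < √m / N := by positivity
  calc tail c m2 ≤ 2 * ((K * (Φ m' / √m')) * (CR d / N)) := by
        refine s1.trans ?_
        have : 0 ≤ K * (Φ m' / √m') := by positivity
        linarith [mul_le_mul_of_nonneg_left s3 this]
    _ ≤ 2 * ((K * (Φ m' / (√m / N))) * (CR d / N)) := by gcongr
    _ = _ := by field_simp

/-- The skewed case. -/
lemma skew_case {d : ℕ} {CT : ℝ} (hT : ∀ (n : ℕ) (c : Finset (Fin n) → ℝ), Deg d c → ∀ R m : ℝ, 0 < R →
    R ^ 2 * var c ≤ c ∅ ^ 2 → 0 < m → tail c m ≤ CT / R ^ 64) {A b m m2 : ℝ} (hA : 1 ≤ A) (hCT : 1 ≤ CT) (hm : 1 ≤ m)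
    (hm2 : 0 < m2) (hb : CT * A ^ 32 ≤ b * √m) {n : ℕ} {c : Finset (Fin n) → ℝ} (hc : Deg d c) (hs : Skew (A / √m) c) :
    tail c m2 ≤ b / √m := by
  have hs1 : 1 ≤ √m := Real.one_le_sqrt.mpr hm
  have hR0 : 0 < √m / A := by positivity
  have h := hT n c hc (√(√m / A)) m2 (Real.sqrt_pos.mpr hR0) (by
    rw [Real.sq_sqrt hR0.le]
    unfold Skew at hs
    rw [div_mul_eq_mul_div, le_div_iff₀ (by positivity)] at hs
    rw [div_mul_eq_mul_div, div_le_iff₀ (by positivity)]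
    linarith) hm2
  refine h.trans ?_
  have e : √(√m / A) ^ 64 = (√m / A) ^ 32 := by
    rw [show (64:ℕ) = 2 * 32 by norm_num, pow_mul, Real.sq_sqrt hR0.le]
  rw [e, div_pow, div_div_eq_mul_div, div_le_div_iff₀ (by positivity) (by positivity)]
  have h2 : √m * √m ≤ √m ^ 32 := by
    rw [← pow_two]; exact pow_le_pow_right₀ hs1 (by norm_num)
  have hb0 : 0 ≤ b := by
    by_contra hneg
    push Not at hneg
    have : 0 < CT * A ^ 32 := by positivity
    nlinarith
  calc CT * A ^ 32 * √m ≤ b * √m * √m := by gcongr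
    _ = b * (√m * √m) := by ring
    _ ≤ _ := by gcongr

lemma decay {τ : ℝ} (h0 : 0 < τ) (h1 : τ ≤ 1) (k : ℕ) (hk : 1 ≤ k) : (1 - τ) ^ k ≤ 1 / (τ * k) := by
  have hk0 : (0:ℝ) < k := by exact_mod_cast hk
  have a : (1 - τ) ≤ Real.exp (-τ) := by have := Real.add_one_le_exp (-τ); linarith
  have b : (1 - τ) ^ k ≤ Real.exp (-(τ * k)) := by
    calc _ ≤ Real.exp (-τ) ^ k := by gcongr
      _ = _ := by rw [← Real.exp_nat_mul]; congr 1; ring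
  refine b.trans ?_
  rw [Real.exp_neg, ← one_div]
  have := Real.add_one_le_exp (τ * k)
  have : 0 < τ * k := by positivity
  gcongr
  linarith

/-- The constants -/
noncomputable def c0 (d : ℕ) : ℝ := 1 / (8 * 9 ^ d)

lemma c0_pos (d : ℕ) : 0 < c0 d := by unfold c0; positivity
lemma c0_le (d : ℕ) : c0 d ≤ 1 / 8 := by
  unfold c0
  have : (1:ℝ) ≤ 9 ^ d := one_le_pow₀ (by norm_num)
  gcongr
  linarith

/-- The constants -/
noncomputable def A1 (d : ℕ) : ℝ := 32 * d * 9 ^ d * (4 * (32 * d ^ 2 * 81 ^ d)) / c0 d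

/-- The constants -/
def Ee (d : ℕ) : ℕ := 24 * d + 16

lemma A1_ge {d : ℕ} (hd : 1 ≤ d) : 1 ≤ A1 d := by
  have hd' : (1:ℝ) ≤ d := by exact_mod_cast hd
  have h9 : (1:ℝ) ≤ 9 ^ d := one_le_pow₀ (by norm_num)
  have h81 : (1:ℝ) ≤ 81 ^ d := one_le_pow₀ (by norm_num)
  unfold A1
  rw [le_div_iff₀ (c0_pos d)]
  have := c0_le d
  have : (1:ℝ) ≤ 32 * d * 9 ^ d * (4 * (32 * d ^ 2 * 81 ^ d)) := by
    calc (1:ℝ) ≤ 32 * 1 * 1 * (4 * (32 * 1 ^ 2 * 1)) := by norm_num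
      _ ≤ _ := by gcongr
  linarith

lemma ar1 {a b : ℝ} (ha : 0 ≤ a) (hb : 1 ≤ b) : a ≤ 32 * a * b := by nlinarith
lemma ar2 {c m m2 : ℝ} (hc : c ≤ 1 / 8) (hm : 0 ≤ m) (h : (1 - c / 2) * m ≤ m2) : m / 2 ≤ m2 := by nlinarith
lemma ar3 {x : ℝ} (hx : 8 ≤ x) : 20 / x ^ 2 ≤ 1 := by
  rw [div_le_one (by positivity)]; nlinarith
lemma ar4 {e m : ℝ} (he : e ≤ 1) (hm : 0 ≤ m) : e * m / 2 ≤ m := by nlinarith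
lemma ar5 {c a : ℝ} (hc : 0 ≤ c) (ha : 1 ≤ a) : c ≤ c * a := by nlinarith
lemma ar6 {c : ℝ} (h0 : 0 < c) (h1 : c ≤ 1 / 8) : (1 - c / 2) ^ 2 ≤ 1 - c / 2 := by nlinarith
lemma ar7 {c : ℝ} : 1 - c ≤ (1 - c / 2) * (1 - c / 2) := by nlinarith [sq_nonneg c]
lemma ar8 {c a : ℝ} (hc : 0 < c) (ha : 0 < a) : c / 8 * a + (1 - c / 2) * a ≤ a := by nlinarith [mul_pos hc ha]

set_option maxHeartbeats 2000000 in
lemma step {d : ℕ} (hd : 1 ≤ d) {K CT : ℝ} (hK : 1 ≤ K) (hCT : 1 ≤ CT)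
    (hG : ∀ (Φ : ℝ → ℝ), (∀ m, 1 ≤ m → 1 ≤ Φ m) →
    (∀ m m', 1 ≤ m → m ≤ m' → Φ m ≤ Φ m') → ∀ M, IH d Φ M → ∀ m, 1 ≤ m → m ≤ M →
    ∀ (n : ℕ) (c : Finset (Fin n) → ℝ), Deg d c →
      tail c m ≤ K * (var c / (c ∅ ^ 2 + var c)) * (Φ m / Real.sqrt m))
    (hT : ∀ (n : ℕ) (c : Finset (Fin n) → ℝ), Deg d c → ∀ R m : ℝ, 0 < R →
      R ^ 2 * var c ≤ c ∅ ^ 2 → 0 < m → tail c m ≤ CT / R ^ 64)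
    (Φ : ℝ → ℝ) (hΦ1 : ∀ m, 1 ≤ m → 1 ≤ Φ m) (hΦm : ∀ m m', 1 ≤ m → m ≤ m' → Φ m ≤ Φ m')
    {m : ℝ} (hm8 : (8:ℝ) ^ (Ee d) ≤ m) (hm2 : 2 * A1 d ≤ √m) (hm3 : CT * A1 d ^ 32 ≤ c0 d / 8 * √m) (hm4 : 4 / c0 d ≤ m)
    (hΦs : ∀ m' N : ℝ, 8 ≤ N → m < (2 * N) ^ (Ee d) → 1 ≤ m' → m' ≤ 10 * m / N ^ 2 → 2 * K * CR d * Φ m' ≤ c0 d / 8 * Φ m)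
    {M : ℝ} (hM : m ≤ M + 1) (hIH : IH d Φ M) {n : ℕ} {c : Finset (Fin n) → ℝ} (hc : Deg d c) :
    tail c m ≤ Φ m / √m := by
  have hc0 := c0_pos d
  have hc0' := c0_le d
  have hd' : (1:ℝ) ≤ d := by exact_mod_cast hd
  have h9 : (1:ℝ) ≤ 9 ^ d := one_le_pow₀ (by norm_num)
  have h81 : (1:ℝ) ≤ 81 ^ d := one_le_pow₀ (by norm_num)
  have hA := A1_ge hd
  have hm1 : 8 ≤ m := by
    refine le_trans ?_ hm8
    exact le_self_pow₀ (by norm_num) (by unfold Ee; omega)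
  have hs0 : 0 < √m := Real.sqrt_pos.mpr (by linarith)
  have hΦ0 : 1 ≤ Φ m := hΦ1 m (by linarith)
  obtain ⟨M', hM'2, hNlo, hNhi⟩ := exists_N (e := Ee d) (by unfold Ee; omega) hm8
  obtain ⟨N, hN⟩ : ∃ N : ℕ, N = 4 * M' := ⟨_, rfl⟩
  rw [← hN] at hNlo hNhi
  have hN8' : 8 ≤ N := by omega
  have : NeZero N := ⟨by omega⟩
  have hN8 : (8:ℝ) ≤ N := by exact_mod_cast hN8'
  have hN0 : (0:ℝ) < N := by linarith
  -- the parameters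
  set C1 : ℝ := 32 * d ^ 2 * 81 ^ d with hC1
  have hC11 : 1 ≤ C1 := by
    calc (1:ℝ) ≤ 32 * 1 ^ 2 * 1 := by norm_num
      _ ≤ _ := by rw [hC1]; gcongr
  set σ : ℝ := (((N:ℝ) ^ (6 * d + 4))⁻¹) ^ 2 with hσ
  have hNs : ((N:ℝ) ^ (6 * d + 4)) ^ 2 ≤ √m := by
    refine Real.le_sqrt_of_sq_le ?_
    rw [← pow_mul, ← pow_mul]
    refine le_trans (le_of_eq ?_) hNlo
    congr 1; unfold Ee; ring
  have hσ1 : 1 / √m ≤ σ := by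
    rw [hσ, inv_pow, ← one_div]
    gcongr
  have hσ0 : 0 < σ := by positivity
  have hσ2 : σ ≤ 1 := by
    rw [hσ]
    refine pow_le_one₀ (by positivity) (inv_le_one_of_one_le₀ (one_le_pow₀ (by linarith)))
  obtain ⟨τ, hτ⟩ : ∃ τ : ℝ, τ = σ / C1 := ⟨_, rfl⟩
  have hτ0 : 0 < τ := by rw [hτ]; positivity
  have hτ1 : τ ≤ 1 := by rw [hτ, div_le_one (by linarith)]; linarith
  have hcm : 2 ≤ c0 d / 2 * m := by
    rw [div_le_iff₀ hc0] at hm4; linarith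
  obtain ⟨k, hk⟩ : ∃ k : ℕ, k = ⌊c0 d / 2 * m⌋₊ := ⟨_, rfl⟩
  have hk1 : (k:ℝ) ≤ c0 d / 2 * m := by rw [hk]; exact Nat.floor_le (by linarith)
  have hk2 : c0 d / 4 * m ≤ k := by
    have := Nat.lt_floor_add_one (c0 d / 2 * m)
    rw [← hk] at this
    linarith
  have hk3 : 1 ≤ k := by
    have : (0:ℝ) < k := by linarith
    exact_mod_cast this
  have hdec : (1 - τ) ^ k ≤ 4 * C1 / c0 d / √m := by
    refine (decay hτ0 hτ1 k hk3).trans ?_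
    have hmm : √m * √m = m := Real.mul_self_sqrt (by linarith)
    have : c0 d * √m / (4 * C1) ≤ τ * k := by
      calc c0 d * √m / (4 * C1) = (1 / √m / C1) * (c0 d / 4 * (√m * √m)) := by field_simp
        _ ≤ (σ / C1) * k := by rw [hmm]; gcongr
        _ = _ := by rw [hτ]
    calc 1 / (τ * k) ≤ 1 / (c0 d * √m / (4 * C1)) := by gcongr
      _ = _ := by field_simp
  have hskew : 32 * d * 9 ^ d * (1 - τ) ^ k ≤ A1 d / √m := by
    calc _ ≤ 32 * d * 9 ^ d * (4 * C1 / c0 d / √m) := by gcongr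
      _ = _ := by unfold A1; ring
  have hskew2 : d * (1 - τ) ^ k ≤ 1 / 2 := by
    have h1 : A1 d / √m ≤ 1 / 2 := by
      rw [div_le_div_iff₀ hs0 (by norm_num)]; linarith
    have h0 : 0 ≤ (1 - τ) ^ k := pow_nonneg (by linarith) k
    have : (d:ℝ) * (1 - τ) ^ k ≤ 32 * d * 9 ^ d * (1 - τ) ^ k := by
      exact mul_le_mul_of_nonneg_right (ar1 (by linarith) h9) h0
    linarith
  obtain ⟨L, hL, hst⟩ := stage hd c hc hτ0.le hτ1 k hskew2
  rw [← hC1] at hst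
  have hCτ : C1 * τ = σ := by rw [hτ]; field_simp
  rw [hCτ] at hst
  -- restriction
  obtain ⟨m2, hm2d⟩ : ∃ m2 : ℝ, m2 = m - k := ⟨_, rfl⟩
  have hm2lo : (1 - c0 d / 2) * m ≤ m2 := by rw [hm2d]; linarith
  have hm2half : m / 2 ≤ m2 := ar2 hc0' (by linarith) hm2lo
  have hm2M : m2 ≤ M := by
    have : (1:ℝ) ≤ k := by exact_mod_cast hk3
    rw [hm2d]; linarith
  have hm2m : m2 ≤ m := by rw [hm2d]; linarith [(Nat.cast_nonneg k : (0:ℝ) ≤ k)]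
  obtain ⟨m', hm'⟩ : ∃ m' : ℝ, m' = et N * m2 / 2 := ⟨_, rfl⟩
  have hlow := et_low (N := N) (by omega)
  have hhigh := et_high (N := N)
  have h8 : 8 ≤ et N * m2 := by
    have hN3 : (N:ℝ) ^ 3 ≤ m := le_trans (pow_le_pow_right₀ (by linarith) (by unfold Ee; omega)) hNlo
    calc (8:ℝ) ≤ 8 / (N:ℝ) ^ 2 * ((N:ℝ) ^ 3 / 2) := by
          have : 8 / (N:ℝ) ^ 2 * ((N:ℝ) ^ 3 / 2) = 4 * N := by field_simp; norm_num
          rw [this]; linarith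
      _ ≤ et N * m2 := by
          have : (N:ℝ) ^ 3 / 2 ≤ m2 := by linarith
          gcongr
          exact le_trans (by positivity) hlow
  have hm'1 : 1 ≤ m' := by rw [hm']; linarith
  have hm'2 : m' ≤ 10 * m / (N:ℝ) ^ 2 := by
    calc m' = et N * m2 / 2 := hm'
      _ ≤ 20 / (N:ℝ) ^ 2 * m / 2 := by
          have : 0 ≤ m2 := by linarith
          gcongr
      _ = _ := by ring
  have hm'M : m' ≤ M := by
    refine le_trans ?_ hm2M
    rw [hm']
    exact ar4 (et_high.trans (ar3 hN8)) (by linarith)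
  have key : ∀ A : Fin n → Bool, tail (restr c L A) m2 ≤ c0 d / 8 * (Φ m / √m) + (Φ m / √m2) * (1 - ind (Reg σ (restr c L A) ∨
        Skew (32 * d * 9 ^ d * (1 - τ) ^ k) (restr c L A))) := by
    intro A
    by_cases h : Reg σ (restr c L A) ∨ Skew (32 * d * 9 ^ d * (1 - τ) ^ k) (restr c L A)
    · rw [ind_pos h, sub_self, mul_zero, add_zero]
      rcases h with h | h
      · refine (reg_case hK (fun n c hc => hG Φ hΦ1 hΦm M hIH m' hm'1 hm'M n c hc) (by linarith [hΦ1 m' hm'1]) M' hN hN8'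
          (by linarith) hm2half hm' h8 (hc.restr L A) h).trans ?_
        have := hΦs m' N hN8 hNhi hm'1 hm'2
        rw [← mul_div_assoc, ← mul_div_assoc]
        gcongr
      · refine (skew_case hT (A := A1 d) (b := c0 d / 8) hA hCT (by linarith) (by linarith) hm3 (hc.restr L A) (le_trans h ?_)).trans ?_
        · gcongr
        · rw [mul_div_assoc']
          gcongr
          exact ar5 (by linarith) hΦ0
    · rw [ind_neg h, sub_zero, mul_one]
      have h1 := hIH m2 (by linarith) hm2M n _ (hc.restr L A)
      have h2 : Φ m2 / √m2 ≤ Φ m / √m2 := by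
        have := hΦm m2 m (by linarith) hm2m
        gcongr
      have : 0 ≤ c0 d / 8 * (Φ m / √m) := by positivity
      linarith
  have t1 := tail_restr c L m k (by exact_mod_cast hL)
  rw [← hm2d] at t1
  have t2 := t1.trans (E_mono u2_pw key)
  rw [E_add, E_const u2_pw, E_smul, E_sub, E_one u2_pw] at t2
  have hsq : (1 - c0 d / 2) * √m ≤ √m2 := by
    refine Real.le_sqrt_of_sq_le ?_
    rw [mul_pow, Real.sq_sqrt (by linarith)]
    refine le_trans ?_ hm2lo
    gcongr
    exact ar6 hc0 hc0'
  have hsq0 : 0 < (1 - c0 d / 2) * √m := by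
    have : 0 < 1 - c0 d / 2 := by linarith
    positivity
  have hT1 : Φ m / √m2 ≤ Φ m / ((1 - c0 d / 2) * √m) := by gcongr
  have hp : 0 < Φ m / √m := by positivity
  change c0 d ≤ _ at hst
  have hT2 : Φ m / ((1 - c0 d / 2) * √m) * (1 - c0 d) ≤ (1 - c0 d / 2) * (Φ m / √m) := by
    have h1 : 0 < 1 - c0 d / 2 := by linarith
    have : Φ m / ((1 - c0 d / 2) * √m) * (1 - c0 d) = (Φ m / √m) * ((1 - c0 d) / (1 - c0 d / 2)) := by
      field_simp
    rw [this, mul_comm]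
    gcongr
    rw [div_le_iff₀ h1]
    exact ar7
  have hT0 : 0 ≤ Φ m / √m2 := by positivity
  calc tail c m ≤ _ := t2
    _ ≤ c0 d / 8 * (Φ m / √m) + Φ m / √m2 * (1 - c0 d) := by gcongr
    _ ≤ c0 d / 8 * (Φ m / √m) + Φ m / ((1 - c0 d / 2) * √m) * (1 - c0 d) := by
        have : 0 ≤ 1 - c0 d := by linarith
        gcongr
    _ ≤ c0 d / 8 * (Φ m / √m) + (1 - c0 d / 2) * (Φ m / √m) := by linarith
    _ ≤ _ := ar8 hc0 hp

lemma log_step {e : ℕ} (he : 1 ≤ e) {m m' N : ℝ} (hm : Real.exp (4 * e + 1) ≤ m) (hN : 8 ≤ N) (h : m < (2 * N) ^ e)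
    (h1 : 1 ≤ m') (h2 : m' ≤ 10 * m / N ^ 2) : 1 + Real.log m' ≤ (1 - 1 / e) * (1 + Real.log m) := by
  have he' : (1:ℝ) ≤ e := by exact_mod_cast he
  have hm0 : 0 < m := lt_of_lt_of_le (Real.exp_pos _) hm
  have a1 : 4 * e + 1 ≤ Real.log m := by rw [Real.le_log_iff_exp_le hm0]; exact hm
  have a2 : Real.log m ≤ e * (Real.log 2 + Real.log N) := by
    have := Real.log_le_log hm0 h.le
    rw [Real.log_pow, Real.log_mul (by norm_num) (by linarith)] at this
    exact this
  have a3 : Real.log m' ≤ Real.log 10 + Real.log m - 2 * Real.log N := by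
    have := Real.log_le_log (by linarith) h2
    rw [Real.log_div (by positivity) (by positivity), Real.log_mul (by norm_num) (by linarith), Real.log_pow] at this
    exact_mod_cast this
  have a4 : Real.log 10 + 2 * Real.log 2 ≤ 4 := by
    have : Real.log 10 + 2 * Real.log 2 = Real.log 40 := by
      rw [show (40:ℝ) = 10 * 2 ^ 2 by norm_num, Real.log_mul (by norm_num) (by norm_num), Real.log_pow]; norm_num
    rw [this, Real.log_le_iff_le_exp (by norm_num)]
    have := Real.exp_one_gt_d9
    rw [show (4:ℝ) = ((4:ℕ):ℝ) * 1 by norm_num, Real.exp_nat_mul]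
    calc (40:ℝ) ≤ 2.7 ^ 4 := by norm_num
      _ ≤ _ := by gcongr; linarith
  have a5 : Real.log m / e ≤ Real.log 2 + Real.log N := by
    rw [div_le_iff₀ (by linarith)]; linarith
  have a6 : 4 + 1 / (e:ℝ) ≤ Real.log m / e := by
    rw [le_div_iff₀ (by linarith)]
    have : (4 + 1 / (e:ℝ)) * e = 4 * e + 1 := by field_simp
    linarith
  have : (1 - 1 / (e:ℝ)) * (1 + Real.log m) = 1 + Real.log m - 1 / e - Real.log m / e := by ring
  rw [this]
  linarith

theorem main_tail (d : ℕ) (hd : 1 ≤ d) : ∃ (Λ : ℝ) (β : ℕ), 1 ≤ Λ ∧ ∀ m : ℝ, 1 ≤ m → ∀ (n : ℕ) (c : Finset (Fin n) → ℝ), Deg d c →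
    tail c m ≤ Λ * (1 + Real.log m) ^ β / √m := by
  obtain ⟨K, hK, hG⟩ := Gcor d
  obtain ⟨CT, hCT, hT⟩ := terminal d
  have hc0 := c0_pos d
  have hA := A1_ge hd
  have he1 : 1 ≤ Ee d := by unfold Ee; omega
  have he' : (1:ℝ) ≤ Ee d := by exact_mod_cast he1
  set θ : ℝ := 1 - 1 / (Ee d) with hθ
  have hθ0 : 0 ≤ θ := by
    rw [hθ, sub_nonneg, div_le_one (by linarith)]; exact he'
  have hθ1 : θ < 1 := by
    have : (0:ℝ) < 1 / Ee d := by positivity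
    linarith
  have hCR : 0 ≤ CR d := by unfold CR; positivity
  obtain ⟨β, hβ⟩ : ∃ β : ℕ, θ ^ β < c0 d / 8 / (2 * K * CR d + 1) := exists_pow_lt_of_lt_one (by positivity) hθ1
  have hβ' : 2 * K * CR d * θ ^ β ≤ c0 d / 8 := by
    rw [lt_div_iff₀ (by positivity)] at hβ
    have : 0 ≤ θ ^ β := by positivity
    nlinarith
  set m0 : ℝ := (8:ℝ) ^ (Ee d) + Real.exp (4 * Ee d + 1) + (8 * (CT * A1 d ^ 32) / c0 d) ^ 2 + (2 * A1 d) ^ 2 + 4 / c0 d with hm0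
  have q1 : (0:ℝ) < (8:ℝ) ^ (Ee d) := by positivity
  have q2 : 0 < Real.exp (4 * Ee d + 1) := Real.exp_pos _
  have q3 : 0 ≤ (8 * (CT * A1 d ^ 32) / c0 d) ^ 2 := by positivity
  have q4 : 0 ≤ (2 * A1 d) ^ 2 := by positivity
  have q5 : 0 < 4 / c0 d := by positivity
  have hm00 : 0 ≤ m0 := by rw [hm0]; positivity
  set Λ : ℝ := √m0 + 1 with hΛ
  have hΛ1 : 1 ≤ Λ := by have := Real.sqrt_nonneg m0; linarith
  set Φ : ℝ → ℝ := fun m => Λ * (1 + Real.log m) ^ β with hΦ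
  have hlog : ∀ m : ℝ, 1 ≤ m → 0 ≤ Real.log m := fun m hm => Real.log_nonneg hm
  have hΦΛ : ∀ m, 1 ≤ m → Λ ≤ Φ m := by
    intro m hm
    have : 1 ≤ (1 + Real.log m) ^ β := one_le_pow₀ (by linarith [hlog m hm])
    simp only [hΦ]; nlinarith
  have hΦ1 : ∀ m, 1 ≤ m → 1 ≤ Φ m := fun m hm => hΛ1.trans (hΦΛ m hm)
  have hΦm : ∀ m m', 1 ≤ m → m ≤ m' → Φ m ≤ Φ m' := by
    intro m m' hm hmm
    simp only [hΦ]
    have := hlog m hm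
    have h2 : Real.log m ≤ Real.log m' := Real.log_le_log (by linarith) hmm
    gcongr
  have main : ∀ j : ℕ, IH d Φ j := by
    intro j
    induction j with
    | zero => intro m h1 h2; simp at h2; linarith
    | succ j ih =>
      intro m h1 h2 n c hc
      rcases lt_or_ge m m0 with hlt | hge
      · refine (tail_le_one c m).trans ?_
        have hs0 : 0 < √m := Real.sqrt_pos.mpr (by linarith)
        rw [le_div_iff₀ hs0, one_mul]
        have : √m ≤ √m0 := Real.sqrt_le_sqrt hlt.le
        linarith [hΦΛ m h1]
      · have hmm := hge
        rw [hm0] at hmm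
        refine step hd hK hCT hG hT Φ hΦ1 hΦm (by linarith) ?_ ?_ (by linarith) ?_ (M := j) (by push_cast at h2; exact h2) ih hc
        · exact Real.le_sqrt_of_sq_le (by linarith)
        · have : 8 * (CT * A1 d ^ 32) / c0 d ≤ √m := Real.le_sqrt_of_sq_le (by linarith)
          rw [div_le_iff₀ hc0] at this
          linarith
        · intro m' N hN hmN h1' h2'
          have hls := log_step he1 (by linarith : Real.exp (4 * Ee d + 1) ≤ m) hN hmN h1' h2'
          simp only [hΦ]
          have h3 : (1 + Real.log m') ^ β ≤ (θ * (1 + Real.log m)) ^ β := by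
            have := hlog m' h1'
            gcongr
          rw [mul_pow] at h3
          have h4 : 0 ≤ (1 + Real.log m) ^ β := pow_nonneg (by linarith [hlog m h1]) β
          calc 2 * K * CR d * (Λ * (1 + Real.log m') ^ β) ≤ 2 * K * CR d * (Λ * (θ ^ β * (1 + Real.log m) ^ β)) := by gcongr
            _ = (2 * K * CR d * θ ^ β) * (Λ * (1 + Real.log m) ^ β) := by ring
            _ ≤ _ := by gcongr
  refine ⟨Λ, β, hΛ1, fun m hm n c hc => ?_⟩
  exact main ⌈m⌉₊ m hm (Nat.le_ceil m) n c hc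

end final

end STB

namespace STB

section bridge
variable {n : ℕ}

/-- Exponent vector of a set. -/
noncomputable def ex (S : Finset (Fin n)) : Fin n →₀ ℕ := Finsupp.indicator S (fun _ _ => 1)

lemma ex_apply (S : Finset (Fin n)) (i : Fin n) : ex S i = if i ∈ S then 1 else 0 := by
  unfold ex; rw [Finsupp.indicator_apply]; split_ifs <;> rfl

lemma ex_support (S : Finset (Fin n)) : (ex S).support = S := by
  ext i; rw [Finsupp.mem_support_iff, ex_apply]; split_ifs with h <;> simp [h]

lemma ex_of {v : Fin n →₀ ℕ} (h : ∀ i, v i ≤ 1) : ex v.support = v := by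
  ext i
  rw [ex_apply]
  split_ifs with hi
  · rw [Finsupp.mem_support_iff] at hi; have := h i; omega
  · rw [Finsupp.notMem_support_iff] at hi; exact hi.symm

/-- Coefficients of a multilinear polynomial. -/
noncomputable def co (p : MvPolynomial (Fin n) ℝ) : Finset (Fin n) → ℝ := fun S => p.coeff (ex S)

lemma co_deg {d : ℕ} {p : MvPolynomial (Fin n) ℝ} (h : p.totalDegree ≤ d) : Deg d (co p) := by
  intro S hS
  have h1 := MvPolynomial.le_totalDegree (MvPolynomial.mem_support_iff.mpr hS)
  refine le_trans (le_of_eq ?_) (h1.trans h)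
  rw [Finsupp.sum, ex_support, Finset.sum_congr rfl (fun i hi => by rw [ex_apply, if_pos hi])]
  simp

lemma co_ev {p : MvPolynomial (Fin n) ℝ} (h : ∀ v ∈ p.support, ∀ i, v i ≤ 1) (x : Fin n → Bool) :
    pev p x = cv (co p) x := by
  unfold pev cv ev
  rw [MvPolynomial.eval_eq]
  refine Finset.sum_of_injOn (fun v : Fin n →₀ ℕ => v.support) ?_ ?_ ?_ ?_
  · intro v hv v' hv' hvv
    simp only at hvv
    rw [← ex_of (h v hv), ← ex_of (h v' hv'), hvv]
  · intro v hv; simp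
  · intro S _ hS
    have : co p S = 0 := by
      by_contra hne
      exact hS ⟨ex S, MvPolynomial.mem_support_iff.mpr hne, ex_support S⟩
    rw [this, zero_mul]
  · intro v hv
    simp only [co]
    rw [ex_of (h v hv)]
    congr 1
    refine Finset.prod_congr rfl fun i hi => ?_
    have h1 := h v hv i
    rw [Finsupp.mem_support_iff] at hi
    rw [show v i = 1 by omega, pow_one]

lemma sign_ne {a b : ℝ} (ha : a ≠ 0) (hb : b ≠ 0) : Real.sign b ≠ Real.sign a ↔ a * b < 0 := by
  rcases ha.lt_or_gt with h | h <;> rcases hb.lt_or_gt with h' | h'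
  · simp [Real.sign_of_neg h, Real.sign_of_neg h', (mul_pos_of_neg_of_neg h h').le]
  · simp only [Real.sign_of_neg h, Real.sign_of_pos h', mul_neg_of_neg_of_pos h h']; norm_num
  · simp only [Real.sign_of_pos h, Real.sign_of_neg h', mul_neg_of_pos_of_neg h h']; norm_num
  · simp [Real.sign_of_pos h, Real.sign_of_pos h', (mul_pos h h').le]

lemma sens_eq {f F : (Fin n → Bool) → ℝ} (h : ∀ x, F x ≠ 0 ∧ f x = Real.sign (F x)) (x : Fin n → Bool) :
    sens f x = sn F x := by
  unfold sens sn
  congr 1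
  ext i
  simp only [Finset.mem_filter, Finset.mem_univ, true_and]
  rw [(h x).2, (h _).2]
  exact sign_ne (h x).1 (h _).1

lemma count_eq (c : Finset (Fin n) → ℝ) (m : ℕ) :
    ((Finset.univ.filter (fun x : Fin n → Bool => m ≤ sn (cv c) x)).card : ℝ) / 2 ^ n = tail c m := by
  unfold tail E
  rw [Finset.card_filter]
  push_cast
  rw [Finset.sum_div]
  refine Finset.sum_congr rfl fun x _ => ?_
  unfold ind u2
  simp only [Nat.cast_le]
  rw [Finset.prod_const, Finset.card_univ, Fintype.card_fin]
  split_ifs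
  · rw [mul_one, one_div, one_div, inv_pow]
  · simp

end bridge

end STB

theorem sens_tail_bound (d : ℕ) (hd : 1 ≤ d) :
    ∃ C : ℝ, 0 < C ∧ ∀ n : ℕ, 256 ≤ n → ∀ f : (Fin n → Bool) → ℝ, IsPTF d f →
      ∀ m : ℕ, 16 ≤ m → m ≤ n →
        ((Finset.univ.filter (fun x : Fin n → Bool => m ≤ sens f x)).card : ℝ) / 2 ^ n
          ≤ C * Real.log (Real.exp 1 * n) ^ C / Real.sqrt m := by
  obtain ⟨Λ, β, hΛ, H⟩ := STB.main_tail d hd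
  have hβ0 : (0:ℝ) ≤ β := Nat.cast_nonneg β
  refine ⟨Λ + β, by linarith, fun n hn f hf m hm hmn => ?_⟩
  obtain ⟨p, hp1, hp2, hp3⟩ := hf
  have hm1 : (1:ℝ) ≤ m := by exact_mod_cast (by omega : 1 ≤ m)
  have hmn' : (m:ℝ) ≤ n := by exact_mod_cast hmn
  have e : ∀ x, sens f x = STB.sn (STB.cv (STB.co p)) x := by
    intro x
    refine STB.sens_eq (fun y => ?_) x
    rw [← STB.co_ev hp1]
    exact hp3 y
  simp only [e]
  rw [STB.count_eq]
  refine (H m hm1 n _ (STB.co_deg hp2)).trans ?_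
  have hlog : Real.log (Real.exp 1 * n) = 1 + Real.log n := by
    rw [Real.log_mul (Real.exp_pos 1).ne' (by linarith), Real.log_exp]
  have h1 : Real.log m ≤ Real.log n := Real.log_le_log (by linarith) hmn'
  have h0 : 0 ≤ Real.log m := Real.log_nonneg hm1
  rw [hlog]
  have h2 : (1 + Real.log m) ^ β ≤ (1 + Real.log n) ^ (Λ + β : ℝ) := by
    calc (1 + Real.log m) ^ β ≤ (1 + Real.log n) ^ β := by gcongr
      _ = (1 + Real.log n) ^ (β : ℝ) := (Real.rpow_natCast _ _).symm
      _ ≤ _ := Real.rpow_le_rpow_of_exponent_le (by linarith) (by linarith)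
  have h3 : 0 ≤ (1 + Real.log m) ^ β := pow_nonneg (by linarith) β
  have h4 : Λ ≤ Λ + β := by linarith
  gcongr
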